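/- arXiv:1302.3866 — 4 statements merged into one kernel-verified Lean document; each statement's English description precedes it below -/
import Mathlib

section
/- Let A satisfy (H1), β_1,...,β_n > -2, and let u be a solution of the singular Liouville system. Then there exist constants c_1,...,c_n such that for every x ∈ ℝ² and every i ∈ I, u_i(x) = -(1/(2π)) ∫_{ℝ²} log|x−y| Σ_{j=1}^n a_{ij} |y|^{β_j} e^{u_j(y)} dy + c_i. -/
open Set MeasureTheory
/-- Hypothesis (H1): symmetric, nonnegative entries, irreducible, invertible. -/
def H1 {n : ℕ} (A : Matrix (Fin n) (Fin n) ℝ) : Prop :=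
  A.IsSymm ∧ (∀ i j, 0 ≤ A i j) ∧
  (∀ S : Finset (Fin n), S.Nonempty → S ≠ Finset.univ → ∃ i ∈ S, ∃ j ∈ Sᶜ, A i j ≠ 0) ∧
  IsUnit A.det

/-- The Euclidean norm on ℝ². -/
noncomputable def nrm (x : ℝ × ℝ) : ℝ := Real.sqrt (x.1 ^ 2 + x.2 ^ 2)

/-- The Laplacian on ℝ²: sum of the two second partial derivatives. -/
noncomputable def lap (u : ℝ × ℝ → ℝ) (x : ℝ × ℝ) : ℝ :=
  deriv (deriv (fun s => u (s, x.2))) x.1 + deriv (deriv (fun t => u (x.1, t))) x.2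

/-- Solution (not necessarily radial) of the singular Liouville system on ℝ²
with the finite-energy condition. -/
def PDESolution {n : ℕ} (A : Matrix (Fin n) (Fin n) ℝ) (β : Fin n → ℝ)
    (u : Fin n → ℝ × ℝ → ℝ) : Prop :=
  (∀ i, Continuous (u i)) ∧
  (∀ i, ∀ x : ℝ × ℝ, x ≠ 0 → ContDiffAt ℝ 2 (u i) x) ∧
  (∀ i, ∀ x : ℝ × ℝ, x ≠ 0 →
      lap (u i) x + ∑ j, A i j * nrm x ^ β j * Real.exp (u j x) = 0) ∧
  (∀ i, Integrable (fun x : ℝ × ℝ => nrm x ^ β i * Real.exp (u i x)))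


namespace LiouvilleRep

/-- Integrability in polar coordinates. -/
lemma polar_integrableOn (g : ℂ → ℝ) (hg : Integrable g) :
    IntegrableOn (fun p : ℝ × ℝ => p.1 * g (Complex.polarCoord.symm p)) polarCoord.target := by
  have h1 : Integrable (fun q : ℝ × ℝ => g (Complex.measurableEquivRealProd.symm q)) :=
    (Complex.volume_preserving_equiv_real_prod.symm).integrable_comp_of_integrable hg
  have h2 := (integrableOn_image_iff_integrableOn_abs_det_fderiv_smul (volume : Measure (ℝ × ℝ))
    (f := polarCoord.symm) (f' := fderivPolarCoordSymm)
    (s := polarCoord.target) polarCoord.open_target.measurableSet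
    (fun x _ => (hasFDerivAt_polarCoord_symm x).hasFDerivWithinAt)
    polarCoord.symm.injOn (fun q : ℝ × ℝ => g (Complex.measurableEquivRealProd.symm q))).1
    h1.integrableOn
  refine h2.congr_fun ?_ polarCoord.open_target.measurableSet
  rintro ⟨r, t⟩ hp
  simp only [polarCoord_target, mem_prod, mem_Ioi] at hp
  simp only [det_fderivPolarCoordSymm, abs_of_pos hp.1,
    Complex.measurableEquivRealProd_symm_polarCoord_symm_apply, smul_eq_mul]

lemma polarCoord_symm_eq_circleMap (r t : ℝ) :
    Complex.polarCoord.symm (r, t) = circleMap 0 r t := by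
  simp [circleMap, Complex.exp_mul_I]

lemma circleMap_add_shift (x : ℂ) (r t : ℝ) : circleMap 0 r t + x = circleMap x r t := by
  simp [circleMap]; ring

lemma shift_circle_integral (g : ℂ → ℝ) (x : ℂ) (r : ℝ) :
    ∫ t in Ioo (-Real.pi) Real.pi, g (circleMap x r t) =
      ∫ t in (0 : ℝ)..(2 * Real.pi), g (circleMap x r t) := by
  have hper : Function.Periodic (fun t => g (circleMap x r t)) (2 * Real.pi) := by
    intro t
    simp [periodic_circleMap x r t]
  have h := hper.intervalIntegral_add_eq (-Real.pi) 0
  rw [← integral_Ioc_eq_integral_Ioo, ← intervalIntegral.integral_of_le (by linarith [Real.pi_pos])]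
  have e1 : -Real.pi + 2 * Real.pi = Real.pi := by ring
  rw [e1] at h
  simpa using h

/-- Polar coordinates around `x`. -/
lemma polar_full (g : ℂ → ℝ) (hg : Integrable g) (x : ℂ) :
    IntegrableOn (fun s : ℝ => s * ∫ t in (0 : ℝ)..(2 * Real.pi), g (circleMap x s t)) (Ioi 0) ∧
    ∫ y, g y = ∫ s in Ioi (0 : ℝ), s * ∫ t in (0 : ℝ)..(2 * Real.pi), g (circleMap x s t) := by
  have hg' : Integrable (fun y => g (y + x)) := hg.comp_add_right x
  have hI := polar_integrableOn _ hg'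
  have hE := Complex.integral_comp_polarCoord_symm (fun y => g (y + x))
  rw [integral_add_right_eq_self] at hE
  have hmeas : (volume : Measure (ℝ × ℝ)).restrict polarCoord.target =
      ((volume : Measure ℝ).restrict (Ioi 0)).prod (volume.restrict (Ioo (-Real.pi) Real.pi)) := by
    rw [Measure.prod_restrict]; rfl
  rw [IntegrableOn, hmeas] at hI
  have key : ∀ s : ℝ, ∫ t in Ioo (-Real.pi) Real.pi,
      s * g (Complex.polarCoord.symm (s, t) + x) =
      s * ∫ t in (0 : ℝ)..(2 * Real.pi), g (circleMap x s t) := by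
    intro s
    rw [integral_const_mul, ← shift_circle_integral]
    simp_rw [polarCoord_symm_eq_circleMap, circleMap_add_shift]
  constructor
  · have := hI.integral_prod_left
    simp only [key] at this
    exact this
  · rw [← hE, hmeas]
    simp only [smul_eq_mul]
    rw [integral_prod _ hI]
    simp only [key]

/-- Polar coordinates around `x`, on a radial set. -/
lemma polar_on (g : ℂ → ℝ) (x : ℂ) (S : Set ℝ) (hS : MeasurableSet S) (hS0 : S ⊆ Ioi 0)
    (hg : IntegrableOn g {y | ‖y - x‖ ∈ S}) :
    IntegrableOn (fun s : ℝ => s * ∫ t in (0 : ℝ)..(2 * Real.pi), g (circleMap x s t)) S ∧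
    ∫ y in {y | ‖y - x‖ ∈ S}, g y =
      ∫ s in S, s * ∫ t in (0 : ℝ)..(2 * Real.pi), g (circleMap x s t) := by
  have hT : MeasurableSet {y : ℂ | ‖y - x‖ ∈ S} :=
    (by fun_prop : Measurable fun y : ℂ => ‖y - x‖) hS
  have h := polar_full _ (hg.integrable_indicator hT) x
  have key : ∀ s ∈ Ioi (0 : ℝ), s * ∫ t in (0 : ℝ)..(2 * Real.pi),
      ({y : ℂ | ‖y - x‖ ∈ S}).indicator g (circleMap x s t) =
      S.indicator (fun s : ℝ => s * ∫ t in (0 : ℝ)..(2 * Real.pi), g (circleMap x s t)) s := by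
    intro s hs
    have hn : ∀ t, ‖circleMap x s t - x‖ = s := by
      intro t; simp [abs_of_pos (mem_Ioi.1 hs)]
    by_cases hsS : s ∈ S
    · rw [indicator_of_mem hsS]
      congr 1
      apply intervalIntegral.integral_congr
      intro t _
      simp only
      rw [indicator_of_mem]
      change ‖circleMap x s t - x‖ ∈ S
      rwa [hn t]
    · rw [indicator_of_notMem hsS]
      have : ∀ t, ({y : ℂ | ‖y - x‖ ∈ S}).indicator g (circleMap x s t) = 0 := by
        intro t
        rw [indicator_of_notMem]
        change ¬ (‖circleMap x s t - x‖ ∈ S)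
        rwa [hn t]
      simp [this]
  constructor
  · have h1 := h.1.congr_fun key measurableSet_Ioi
    rw [IntegrableOn, integrable_indicator_iff hS, IntegrableOn, Measure.restrict_restrict hS,
      inter_eq_left.2 hS0] at h1
    exact h1
  · rw [← integral_indicator hT, h.2, setIntegral_congr_fun measurableSet_Ioi key,
      setIntegral_indicator hS, inter_eq_right.2 hS0]

end LiouvilleRep


namespace LiouvilleRep

lemma polar_ball (g : ℂ → ℝ) (x : ℂ) (R : ℝ) (hg : IntegrableOn g (Metric.ball x R)) :
    IntegrableOn (fun s : ℝ => s * ∫ t in (0 : ℝ)..(2 * Real.pi), g (circleMap x s t)) (Ioo 0 R) ∧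
    ∫ y in Metric.ball x R, g y =
      ∫ s in Ioo 0 R, s * ∫ t in (0 : ℝ)..(2 * Real.pi), g (circleMap x s t) := by
  have hae : ({y : ℂ | ‖y - x‖ ∈ Ioo 0 R} : Set ℂ) = Metric.ball x R \ {x} := by
    ext y
    simp only [mem_ofPred_eq, mem_Ioo, norm_pos_iff, sub_ne_zero, mem_sdiff, Metric.mem_ball,
      dist_eq_norm, mem_singleton_iff]
    tauto
  have hae' : ({y : ℂ | ‖y - x‖ ∈ Ioo 0 R} : Set ℂ) =ᵐ[volume] Metric.ball x R := by
    rw [hae]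
    exact sdiff_null_ae_eq_self (by simp)
  have h := polar_on g x (Ioo 0 R) measurableSet_Ioo (fun s hs => hs.1)
    (hg.congr_set_ae hae')
  refine ⟨h.1, ?_⟩
  rw [← h.2, setIntegral_congr_set hae']

/-- The normalized logarithmic kernel. -/
noncomputable def ker (z y : ℂ) : ℝ := Real.log ‖z - y‖ - Real.log (1 + ‖y‖)

lemma measurable_ker : Measurable (fun p : ℂ × ℂ => ker p.1 p.2) := by
  unfold ker; fun_prop

lemma ker_le (z y : ℂ) : ker z y ≤ Real.log (1 + ‖z‖) := by
  unfold ker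
  have hz := norm_nonneg z
  have hy := norm_nonneg y
  have h1 : 0 ≤ Real.log (1 + ‖z‖) := Real.log_nonneg (by linarith)
  have h2 : 0 ≤ Real.log (1 + ‖y‖) := Real.log_nonneg (by linarith)
  rcases eq_or_lt_of_le (norm_nonneg (z - y)) with h | h
  · rw [← h]; simp; linarith
  · have : ‖z - y‖ ≤ (1 + ‖z‖) * (1 + ‖y‖) := by
      nlinarith [norm_sub_le z y, mul_nonneg hz hy]
    have := Real.log_le_log h this
    rw [Real.log_mul (by positivity) (by positivity)] at this
    linarith

lemma abs_ker_le (z y : ℂ) :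
    |ker z y| ≤ Real.log (2 + ‖z‖) + Real.posLog (‖z - y‖⁻¹) := by
  have hz := norm_nonneg z
  have hy := norm_nonneg y
  have hp : 0 ≤ Real.posLog (‖z - y‖⁻¹) := Real.posLog_nonneg
  have hl : Real.log (1 + ‖z‖) ≤ Real.log (2 + ‖z‖) :=
    Real.log_le_log (by linarith) (by linarith)
  have hyz : ‖y‖ ≤ ‖z‖ + ‖z - y‖ := by
    have := norm_sub_le z (z - y); simpa using this
  rw [abs_le]
  refine ⟨?_, by linarith [ker_le z y]⟩
  unfold ker
  rcases eq_or_lt_of_le (norm_nonneg (z - y)) with h | h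
  · rw [← h] at hyz hp ⊢
    simp
    exact Real.log_le_log (by linarith) (by linarith)
  · rcases le_total 1 ‖z - y‖ with h1 | h1
    · have : 1 + ‖y‖ ≤ (2 + ‖z‖) * ‖z - y‖ := by nlinarith
      have := Real.log_le_log (by linarith) this
      rw [Real.log_mul (by positivity) (by positivity)] at this
      linarith
    · have : 1 + ‖y‖ ≤ (2 + ‖z‖) := by linarith
      have := Real.log_le_log (by linarith) this
      have h3 : -Real.log ‖z - y‖ ≤ Real.posLog (‖z - y‖⁻¹) := by
        rw [Real.posLog_apply, Real.log_inv]; exact le_max_right _ _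
      linarith

lemma integrable_rpow_posLog (β : ℝ) (hβ : -2 < β) :
    Integrable (fun z : ℂ => ‖z‖ ^ β * Real.posLog (‖z‖⁻¹)) := by
  have := integrable_fun_norm_addHaar (E := ℂ) (volume : Measure ℂ)
    (f := fun r : ℝ => r ^ β * Real.posLog (r⁻¹))
  rw [this]
  simp only [Complex.finrank_real_complex, Nat.add_one_sub_one, pow_one, smul_eq_mul]
  set δ := (β + 2) / 2 with hδ
  have hδ0 : 0 < δ := by rw [hδ]; linarith
  have hb : IntegrableOn (fun r : ℝ => δ⁻¹ * r ^ (β + 1 - δ)) (Ioo 0 1) := by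
    apply Integrable.const_mul
    exact (intervalIntegral.integrableOn_Ioo_rpow_iff one_pos).2 (by rw [hδ]; linarith)
  have hb2 : Integrable ((Ioo (0:ℝ) 1).indicator (fun r : ℝ => δ⁻¹ * r ^ (β + 1 - δ))) :=
    hb.integrable_indicator measurableSet_Ioo
  refine Integrable.mono' (hb2.restrict (s := Ioi 0)) ?_ ?_
  · exact (by fun_prop : Measurable fun y : ℝ => y * (y ^ β * Real.posLog y⁻¹)).aestronglyMeasurable
  · filter_upwards [ae_restrict_mem measurableSet_Ioi] with r hr
    have hr0 : 0 < r := hr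
    rw [Real.norm_of_nonneg (by have := @Real.posLog_nonneg r⁻¹; positivity)]
    by_cases h1 : r < 1
    · rw [indicator_of_mem (show r ∈ Ioo (0:ℝ) 1 from ⟨hr0, h1⟩)]
      have h2 : Real.posLog r⁻¹ ≤ δ⁻¹ * r ^ (-δ) := by
        rw [Real.posLog_apply]
        apply max_le (by positivity)
        have := Real.log_le_rpow_div (x := r⁻¹) (by positivity) hδ0
        rw [Real.inv_rpow hr0.le, ← Real.rpow_neg hr0.le] at this
        rw [inv_mul_eq_div]; exact this
      calc r * (r ^ β * Real.posLog r⁻¹) ≤ r * (r ^ β * (δ⁻¹ * r ^ (-δ))) := by gcongr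
        _ = δ⁻¹ * r ^ (β + 1 - δ) := by
          rw [show β + 1 - δ = 1 + β + (-δ) by ring, Real.rpow_add hr0, Real.rpow_add hr0,
            Real.rpow_one]; ring
    · rw [indicator_of_notMem (fun h => h1 h.2)]
      have : Real.posLog r⁻¹ = 0 := by
        rw [Real.posLog_eq_zero_iff, abs_of_pos (by positivity)]
        exact inv_le_one_of_one_le₀ (not_lt.1 h1)
      simp [this]

lemma integrable_posLog : Integrable (fun z : ℂ => Real.posLog (‖z‖⁻¹)) := by
  simpa using integrable_rpow_posLog 0 (by norm_num)

lemma integrable_posLog_sub (y : ℂ) : Integrable (fun z : ℂ => Real.posLog (‖z - y‖⁻¹)) :=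
  integrable_posLog.comp_sub_right y

lemma integrableOn_ker (x : ℂ) (R : ℝ) (y : ℂ) :
    IntegrableOn (fun z => ker z y) (Metric.ball x R) := by
  have h : IntegrableOn (fun z : ℂ => Real.log (2 + (‖x‖ + R)) + Real.posLog (‖z - y‖⁻¹))
      (Metric.ball x R) := by
    apply Integrable.add
    · exact integrableOn_const measure_ball_lt_top.ne
    · exact (integrable_posLog_sub y).integrableOn
  refine Integrable.mono' h ?_ ?_
  · exact (measurable_ker.comp (measurable_id.prodMk measurable_const)).aestronglyMeasurable
  · filter_upwards [ae_restrict_mem measurableSet_ball] with z hz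
    rw [Real.norm_eq_abs]
    refine (abs_ker_le z y).trans ?_
    gcongr
    have : ‖z‖ ≤ ‖x‖ + ‖z - x‖ := by simpa using norm_add_le x (z - x)
    rw [Metric.mem_ball, dist_eq_norm] at hz
    linarith

lemma circle_log (x y : ℂ) (hxy : x ≠ y) (s : ℝ) (hs : 0 < s) :
    ∫ t in (0 : ℝ)..(2 * Real.pi), Real.log ‖circleMap x s t - y‖ =
      2 * Real.pi * (Real.log ‖x - y‖ + Real.posLog (s * ‖x - y‖⁻¹)) := by
  have h := circleAverage_log_norm_sub_const_eq_log_radius_add_posLog (a := y) (c := x) hs.ne'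
  rw [Real.circleAverage_def, smul_eq_mul] at h
  have hp : (0:ℝ) < 2 * Real.pi := by positivity
  rw [inv_mul_eq_iff_eq_mul₀ hp.ne'] at h
  rw [h]
  have hd : 0 < ‖x - y‖ := norm_pos_iff.2 (sub_ne_zero.2 hxy)
  have h2 := @Real.posLog_sub_posLog_inv (s⁻¹ * ‖x - y‖)
  rw [Real.log_mul (by positivity) (by positivity), Real.log_inv, mul_inv, inv_inv] at h2
  congr 1
  linarith

lemma circle_log_intble (x y : ℂ) (s : ℝ) :
    IntervalIntegrable (fun t => Real.log ‖circleMap x s t - y‖) volume 0 (2 * Real.pi) := by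
  have : CircleIntegrable (fun z => Real.log ‖z - y‖) x s :=
    MeromorphicOn.circleIntegrable_log_norm (f := fun z => z - y) (fun _ _ ↦ by fun_prop)
  exact this

lemma ball_ker (x y : ℂ) (hxy : x ≠ y) (R : ℝ) (hR : 0 < R) :
    ∫ z in Metric.ball x R, ker z y = Real.pi * R ^ 2 * ker x y +
      ∫ s in Ioo 0 R, 2 * Real.pi * s * Real.posLog (s * ‖x - y‖⁻¹) := by
  have hp := polar_ball _ x R (integrableOn_ker x R y)
  rw [hp.2]
  have h1 : ∀ s ∈ Ioo (0:ℝ) R, s * ∫ t in (0 : ℝ)..(2 * Real.pi), ker (circleMap x s t) y =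
      2 * Real.pi * ker x y * s + 2 * Real.pi * s * Real.posLog (s * ‖x - y‖⁻¹) := by
    intro s hs
    unfold ker
    rw [intervalIntegral.integral_sub (circle_log_intble x y s) (by simp), circle_log x y hxy s hs.1]
    simp
    ring
  rw [setIntegral_congr_fun measurableSet_Ioo h1, integral_add]
  · congr 1
    rw [integral_const_mul, ← integral_Ioc_eq_integral_Ioo, ← intervalIntegral.integral_of_le hR.le,
      integral_id]
    ring
  · exact (Continuous.integrableOn_Icc (by fun_prop)).mono_set Ioo_subset_Icc_self
  · exact (Continuous.integrableOn_Icc (by fun_prop)).mono_set Ioo_subset_Icc_self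

end LiouvilleRep


namespace LiouvilleRep

lemma circleMap_expand (x : ℂ) (s t : ℝ) : circleMap x s t = x + s • circleMap 0 1 t := by
  simp [circleMap]

lemma hasDerivAt_circleMap_radius (x : ℂ) (s t : ℝ) :
    HasDerivAt (fun s : ℝ => circleMap x s t) (circleMap 0 1 t) s := by
  simp_rw [circleMap_expand x]
  simpa using ((hasDerivAt_id s).smul_const (circleMap 0 1 t)).const_add x

lemma continuous_circleMap_two (x : ℂ) : Continuous (fun p : ℝ × ℝ => circleMap x p.1 p.2) := by
  unfold circleMap; fun_prop

lemma trace_rotate (B : ℂ →L[ℝ] ℂ →L[ℝ] ℝ) (t : ℝ) :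
    B (circleMap 0 1 t) (circleMap 0 1 t) +
      B (circleMap 0 1 t * Complex.I) (circleMap 0 1 t * Complex.I) =
      B 1 1 + B Complex.I Complex.I := by
  have h1 : circleMap 0 1 t = Real.cos t • (1 : ℂ) + Real.sin t • Complex.I := by
    simp [circleMap, Complex.exp_mul_I]
  have h2 : circleMap 0 1 t * Complex.I = (-Real.sin t) • (1 : ℂ) + Real.cos t • Complex.I := by
    rw [h1]
    apply Complex.ext <;> simp
  rw [h2, h1]
  simp only [map_add, map_smul, add_apply, smul_apply, smul_eq_mul, map_neg, neg_apply, neg_smul]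
  have := Real.sin_sq_add_cos_sq t
  linear_combination (B 1 1 + B Complex.I Complex.I) * this

set_option maxHeartbeats 1000000 in
/-- Green identity on an annulus for circle integrals. -/
lemma green_annulus (U f : ℂ → ℝ) (D1 : ℂ → ℂ →L[ℝ] ℝ) (D2 : ℂ → ℂ →L[ℝ] ℂ →L[ℝ] ℝ)
    (hD1 : ∀ z, z ≠ 0 → HasFDerivAt U (D1 z) z)
    (hD2 : ∀ z, z ≠ 0 → HasFDerivAt D1 (D2 z) z)
    (hD2c : ContinuousOn D2 {0}ᶜ)
    (hlap : ∀ z, z ≠ 0 → D2 z 1 1 + D2 z Complex.I Complex.I = - f z)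
    (x : ℂ) (a b : ℝ) (ha : 0 < a) (hab : a ≤ b)
    (hne : ∀ s ∈ Icc a b, ∀ t, circleMap x s t ≠ 0) :
    (∫ t in (0 : ℝ)..(2 * Real.pi), U (circleMap x b t)) -
      (∫ t in (0 : ℝ)..(2 * Real.pi), U (circleMap x a t)) =
      Real.log (b / a) *
        (a * ∫ t in (0 : ℝ)..(2 * Real.pi), D1 (circleMap x a t) (circleMap 0 1 t)) -
      ∫ s in a..b, Real.log (b / s) * (s * ∫ t in (0 : ℝ)..(2 * Real.pi), f (circleMap x s t)) := by
  have hb : 0 < b := ha.trans_le hab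
  have hpi : (0:ℝ) ≤ 2 * Real.pi := by positivity
  have hD1c : ContinuousOn D1 {0}ᶜ := fun z hz => (hD2 z hz).continuousAt.continuousWithinAt
  have hUc : ContinuousOn U {0}ᶜ := fun z hz => (hD1 z hz).continuousAt.continuousWithinAt
  set S : Set (ℝ × ℝ) := Icc a b ×ˢ univ with hS
  have hcm : ContinuousOn (fun p : ℝ × ℝ => circleMap x p.1 p.2) S :=
    (continuous_circleMap_two x).continuousOn
  have hmaps : MapsTo (fun p : ℝ × ℝ => circleMap x p.1 p.2) S {0}ᶜ :=
    fun p hp => hne p.1 hp.1 p.2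
  have hcD1 : ContinuousOn (fun p : ℝ × ℝ => D1 (circleMap x p.1 p.2)) S := hD1c.comp hcm hmaps
  have hcD2 : ContinuousOn (fun p : ℝ × ℝ => D2 (circleMap x p.1 p.2)) S := hD2c.comp hcm hmaps
  have hce : Continuous (fun p : ℝ × ℝ => circleMap 0 1 p.2) := by fun_prop
  set K : ℝ → ℝ → ℝ := fun s t => D1 (circleMap x s t) (circleMap 0 1 t) +
    s * D2 (circleMap x s t) (circleMap 0 1 t) (circleMap 0 1 t) with hK
  have hKc : ContinuousOn (fun p : ℝ × ℝ => K p.1 p.2) S := by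
    apply ContinuousOn.add
    · exact hcD1.clm_apply hce.continuousOn
    · apply continuous_fst.continuousOn.mul
      exact (hcD2.clm_apply hce.continuousOn).clm_apply hce.continuousOn
  have hq : ∀ s ∈ Icc a b, ∀ t, HasDerivAt
      (fun s : ℝ => s * D1 (circleMap x s t) (circleMap 0 1 t)) (K s t) s := by
    intro s hs t
    have h1 := (hD2 _ (hne s hs t)).comp_hasDerivAt s (hasDerivAt_circleMap_radius x s t)
    have h2 := h1.clm_apply (hasDerivAt_const s (circleMap 0 1 t))
    have h3 := (hasDerivAt_id s).mul h2
    refine HasDerivAt.congr_deriv h3 ?_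
    simp [hK]
  have hFTC : ∀ t, U (circleMap x b t) - U (circleMap x a t) -
      Real.log (b / a) * (a * D1 (circleMap x a t) (circleMap 0 1 t)) =
      ∫ s in a..b, Real.log (b / s) * K s t := by
    intro t
    have hder : ∀ s ∈ uIcc a b, HasDerivAt (fun s : ℝ => U (circleMap x s t) +
        Real.log (b / s) * (s * D1 (circleMap x s t) (circleMap 0 1 t)))
        (Real.log (b / s) * K s t) s := by
      intro s hs
      rw [uIcc_of_le hab] at hs
      have hs0 : 0 < s := ha.trans_le hs.1
      have h1 := (hD1 _ (hne s hs t)).comp_hasDerivAt s (hasDerivAt_circleMap_radius x s t)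
      have h2 : HasDerivAt (fun s : ℝ => Real.log (b / s)) (-(1 / s)) s := by
        have := ((hasDerivAt_inv hs0.ne').const_mul b).log (by positivity)
        refine HasDerivAt.congr_deriv this ?_
        field_simp
      have h3 := h1.add (h2.mul (hq s hs t))
      refine HasDerivAt.congr_deriv h3 ?_
      field_simp
      ring
    have := intervalIntegral.integral_eq_sub_of_hasDerivAt hder ?_
    · rw [this]
      simp [div_self hb.ne']
      ring
    · apply ContinuousOn.intervalIntegrable
      rw [uIcc_of_le hab]
      apply ContinuousOn.mul
      · apply ContinuousOn.log
        · exact continuousOn_const.div continuousOn_id (fun s hs => (ha.trans_le hs.1).ne')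
        · intro s hs
          have := ha.trans_le hs.1
          positivity
      · exact ContinuousOn.comp (g := fun p : ℝ × ℝ => K p.1 p.2) (f := fun s : ℝ => (s, t))
          (t := S) hKc (by fun_prop) (fun s hs => ⟨hs, mem_univ _⟩)
  have hang : ∀ s ∈ Icc a b, ∫ t in (0 : ℝ)..(2 * Real.pi), K s t =
      - (s * ∫ t in (0 : ℝ)..(2 * Real.pi), f (circleMap x s t)) := by
    intro s hs
    set L : ℝ → ℝ := fun t => D2 (circleMap x s t) (circleMap 0 s t * Complex.I)
      (circleMap 0 1 t * Complex.I) - D1 (circleMap x s t) (circleMap 0 1 t) with hL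
    have hline : ContinuousOn (fun t : ℝ => (s, t)) univ := by fun_prop
    have hlm : MapsTo (fun t : ℝ => (s, t)) univ S := fun t _ => ⟨hs, mem_univ _⟩
    have c1 : Continuous (fun t => D1 (circleMap x s t)) :=
      continuousOn_univ.1 (hcD1.comp hline hlm)
    have c2 : Continuous (fun t => D2 (circleMap x s t)) :=
      continuousOn_univ.1 (hcD2.comp hline hlm)
    have ce : Continuous (fun t => circleMap 0 1 t) := by fun_prop
    have ceI : Continuous (fun t => circleMap 0 1 t * Complex.I) := by fun_prop
    have ceI' : Continuous (fun t => circleMap 0 s t * Complex.I) := by fun_prop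
    have cL : Continuous L := ((c2.clm_apply ceI').clm_apply ceI).sub (c1.clm_apply ce)
    have cK : Continuous (K s) := continuousOn_univ.1 (hKc.comp hline hlm)
    have hLint : ∫ t in (0 : ℝ)..(2 * Real.pi), L t = 0 := by
      have hder : ∀ t ∈ uIcc 0 (2 * Real.pi), HasDerivAt
          (fun t => D1 (circleMap x s t) (circleMap 0 1 t * Complex.I)) (L t) t := by
        intro t _
        have h1 := (hD2 _ (hne s hs t)).comp_hasDerivAt t (hasDerivAt_circleMap x s t)
        have h2 := h1.clm_apply ((hasDerivAt_circleMap 0 1 t).mul_const Complex.I)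
        refine HasDerivAt.congr_deriv h2 ?_
        rw [mul_assoc (circleMap 0 1 t), Complex.I_mul_I]
        simp [hL, sub_eq_add_neg]
      rw [intervalIntegral.integral_eq_sub_of_hasDerivAt hder (cL.intervalIntegrable _ _)]
      have e1 : circleMap x s (2 * Real.pi) = circleMap x s 0 := by
        simpa using periodic_circleMap x s 0
      have e2 : circleMap 0 1 (2 * Real.pi) = circleMap 0 1 0 := by
        simpa using periodic_circleMap 0 1 0
      rw [e1, e2, sub_self]
    have hsum : ∀ t, K s t + L t = -(s * f (circleMap x s t)) := by
      intro t
      have h1 := trace_rotate (D2 (circleMap x s t)) t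
      rw [hlap _ (hne s hs t)] at h1
      have h2 : circleMap 0 s t * Complex.I = s • (circleMap 0 1 t * Complex.I) := by
        simp [circleMap, mul_assoc]
      simp only [hK, hL, h2, map_smul, smul_apply, smul_eq_mul]
      linear_combination s * h1
    calc ∫ t in (0 : ℝ)..(2 * Real.pi), K s t
        = ∫ t in (0 : ℝ)..(2 * Real.pi), (K s t + L t) := by
          rw [intervalIntegral.integral_add (cK.intervalIntegrable _ _) (cL.intervalIntegrable _ _),
            hLint, add_zero]
      _ = _ := by
          simp_rw [hsum]
          rw [intervalIntegral.integral_neg, intervalIntegral.integral_const_mul]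
  have hswap : ∫ t in (0 : ℝ)..(2 * Real.pi), ∫ s in a..b, Real.log (b / s) * K s t =
      ∫ s in a..b, ∫ t in (0 : ℝ)..(2 * Real.pi), Real.log (b / s) * K s t := by
    simp only [intervalIntegral.integral_of_le hpi]
    rw [intervalIntegral_integral_swap]
    rw [Measure.prod_restrict, ← IntegrableOn]
    have : ContinuousOn (fun p : ℝ × ℝ => Real.log (b / p.1) * K p.1 p.2)
        (Icc a b ×ˢ Icc 0 (2 * Real.pi)) := by
      apply ContinuousOn.mul
      · apply ContinuousOn.log
        · exact continuousOn_const.div continuous_fst.continuousOn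
            (fun s hs => (ha.trans_le hs.1.1).ne')
        · intro s hs
          have := ha.trans_le hs.1.1
          positivity
      · exact hKc.mono (prod_mono_right (subset_univ _))
    have h2 := this.integrableOn_compact (μ := (volume : Measure (ℝ × ℝ))) (isCompact_Icc.prod isCompact_Icc)
    refine h2.mono_set (prod_mono ?_ Ioc_subset_Icc_self)
    rw [uIoc_of_le hab]; exact Ioc_subset_Icc_self
  have hcirc : ∀ s ∈ Icc a b, Continuous (fun t => U (circleMap x s t)) := by
    intro s hs
    exact continuousOn_univ.1 (hUc.comp (by fun_prop) (fun t _ => hne s hs t))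
  have hd : Continuous (fun t => D1 (circleMap x a t) (circleMap 0 1 t)) := by
    have := (hD1c.comp (g := D1) (f := fun t => circleMap x a t) (s := univ) (by fun_prop)
      (fun t _ => hne a ⟨le_rfl, hab⟩ t))
    exact (continuousOn_univ.1 this).clm_apply (by fun_prop)
  have hfin : ∫ t in (0 : ℝ)..(2 * Real.pi), (U (circleMap x b t) - U (circleMap x a t) -
      Real.log (b / a) * (a * D1 (circleMap x a t) (circleMap 0 1 t))) =
      ∫ s in a..b, - (Real.log (b / s) *
        (s * ∫ t in (0 : ℝ)..(2 * Real.pi), f (circleMap x s t))) := by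
    simp_rw [hFTC]
    rw [hswap]
    apply intervalIntegral.integral_congr
    intro s hs
    rw [uIcc_of_le hab] at hs
    simp only
    rw [intervalIntegral.integral_const_mul, hang s hs]
    ring
  have i1 := (hcirc b ⟨hab, le_rfl⟩).intervalIntegrable (μ := volume) 0 (2 * Real.pi)
  have i2 := (hcirc a ⟨le_rfl, hab⟩).intervalIntegrable (μ := volume) 0 (2 * Real.pi)
  have i3 := hd.intervalIntegrable (μ := volume) 0 (2 * Real.pi)
  rw [intervalIntegral.integral_sub (i1.sub i2) ((i3.const_mul a).const_mul _),
    intervalIntegral.integral_sub i1 i2, intervalIntegral.integral_neg,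
    intervalIntegral.integral_const_mul, intervalIntegral.integral_const_mul] at hfin
  linarith

end LiouvilleRep


namespace LiouvilleRep

open Filter Topology in
lemma affine_log (ψ : ℝ → ℝ) (hψ : Continuous ψ) (ρ : ℝ) (hρ : 0 ≤ ρ)
    (h : ∀ a, 0 < a → ∃ B, ∀ b, a ≤ b → (∀ s ∈ Icc a b, s ≠ ρ) →
      ψ b - ψ a = Real.log (b / a) * B) :
    ∃ c, ∀ r, 0 < r → ψ r = ψ 0 + c * Real.posLog (r * ρ⁻¹) := by
  have h1 : ∀ r1 r2, 0 < r1 → r1 < r2 → (ρ = 0 ∨ r2 < ρ) → ψ r1 = ψ r2 := by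
    intro r1 r2 hr1 hr12 hρ2
    have hlim : Tendsto (fun a => (ψ r1 - ψ a) * (Real.log r2 - Real.log r1) /
        (Real.log r1 - Real.log a)) (𝓝[>] 0) (𝓝 0) := by
      apply Tendsto.div_atTop (a := (ψ r1 - ψ 0) * (Real.log r2 - Real.log r1))
      · apply Tendsto.mul_const
        apply Tendsto.const_sub
        exact (hψ.tendsto 0).mono_left nhdsWithin_le_nhds
      · have := Real.tendsto_log_nhdsGT_zero
        exact tendsto_atTop_add_const_left _ _ (tendsto_neg_atBot_atTop.comp this)
    have hlim2 : Tendsto (fun a : ℝ => ψ r2 - ψ r1) (𝓝[>] 0) (𝓝 0) := by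
      refine hlim.congr' ?_
      filter_upwards [Ioo_mem_nhdsGT hr1] with a ha
      obtain ⟨B, hB⟩ := h a ha.1
      have e1 := hB r1 ha.2.le (by
        intro s hs hsρ
        rcases hρ2 with h0 | h0
        · linarith [hs.1, ha.1]
        · linarith [hs.2])
      have e2 := hB r2 (ha.2.le.trans hr12.le) (by
        intro s hs hsρ
        rcases hρ2 with h0 | h0
        · linarith [hs.1, ha.1]
        · linarith [hs.2])
      rw [Real.log_div (by linarith) (by linarith [ha.1])] at e1
      rw [Real.log_div (by linarith) (by linarith [ha.1])] at e2
      have hlt : 0 < Real.log r1 - Real.log a := sub_pos.2 (Real.log_lt_log ha.1 ha.2)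
      rw [div_eq_iff hlt.ne']
      have : ψ r2 - ψ r1 = (Real.log r2 - Real.log r1) * B := by linarith
      rw [e1, this]; ring
    have := tendsto_nhds_unique hlim2 tendsto_const_nhds
    linarith
  have h2 : ∀ r, 0 < r → (ρ = 0 ∨ r < ρ) → ψ r = ψ 0 := by
    intro r hr hrρ
    have t1 : Tendsto ψ (𝓝[>] 0) (𝓝 (ψ 0)) := (hψ.tendsto 0).mono_left nhdsWithin_le_nhds
    have t2 : Tendsto ψ (𝓝[>] 0) (𝓝 (ψ r)) := by
      refine tendsto_const_nhds.congr' ?_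
      filter_upwards [Ioo_mem_nhdsGT hr] with a ha
      exact (h1 a r ha.1 ha.2 hrρ).symm
    exact tendsto_nhds_unique t2 t1
  rcases eq_or_lt_of_le hρ with h0 | h0
  · refine ⟨0, fun r hr => ?_⟩
    rw [h2 r hr (Or.inl h0.symm)]; ring
  have h3 : ψ ρ = ψ 0 := by
    have t1 : Tendsto ψ (𝓝[<] ρ) (𝓝 (ψ ρ)) := (hψ.tendsto ρ).mono_left nhdsWithin_le_nhds
    have t2 : Tendsto ψ (𝓝[<] ρ) (𝓝 (ψ 0)) := by
      refine tendsto_const_nhds.congr' ?_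
      filter_upwards [Ioo_mem_nhdsLT h0] with a ha
      exact (h2 a ha.1 (Or.inr ha.2)).symm
    exact tendsto_nhds_unique t1 t2
  have h4 : ∀ r, ρ < r → (ψ r - ψ ρ) * Real.log 2 =
      (ψ (2 * ρ) - ψ ρ) * (Real.log r - Real.log ρ) := by
    intro r hr
    have hcl : ContinuousAt Real.log ρ := Real.continuousAt_log h0.ne'
    have t1 : Tendsto (fun a => (ψ r - ψ a) * (Real.log (2 * ρ) - Real.log a)) (𝓝[>] ρ)
        (𝓝 ((ψ r - ψ ρ) * (Real.log (2 * ρ) - Real.log ρ))) := by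
      refine Tendsto.mono_left ?_ nhdsWithin_le_nhds
      exact ((hψ.tendsto ρ).const_sub _).mul (hcl.tendsto.const_sub _)
    have t2 : Tendsto (fun a => (ψ (2 * ρ) - ψ a) * (Real.log r - Real.log a)) (𝓝[>] ρ)
        (𝓝 ((ψ (2 * ρ) - ψ ρ) * (Real.log r - Real.log ρ))) := by
      refine Tendsto.mono_left ?_ nhdsWithin_le_nhds
      exact ((hψ.tendsto ρ).const_sub _).mul (hcl.tendsto.const_sub _)
    have t3 := t1.congr' (f₂ := fun a => (ψ (2 * ρ) - ψ a) * (Real.log r - Real.log a)) ?_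
    · have := tendsto_nhds_unique t3 t2
      rw [← this, Real.log_mul (by norm_num) h0.ne']; ring
    · filter_upwards [Ioo_mem_nhdsGT (show ρ < min r (2 * ρ) from lt_min hr (by linarith))]
        with a ha
      have har := lt_min_iff.1 ha.2
      have ha0 : 0 < a := h0.trans ha.1
      obtain ⟨B, hB⟩ := h a ha0
      have e1 := hB r har.1.le (fun s hs hsρ => by linarith [hs.1, ha.1])
      have e2 := hB (2 * ρ) har.2.le (fun s hs hsρ => by linarith [hs.1, ha.1])
      rw [Real.log_div (by linarith) ha0.ne'] at e1
      rw [Real.log_div (by linarith) ha0.ne'] at e2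
      rw [e1, e2]; ring
  have hl2 : 0 < Real.log 2 := Real.log_pos (by norm_num)
  refine ⟨(ψ (2 * ρ) - ψ ρ) / Real.log 2, fun r hr => ?_⟩
  rcases le_or_gt r ρ with hrρ | hrρ
  · have : Real.posLog (r * ρ⁻¹) = 0 := by
      rw [Real.posLog_eq_zero_iff, abs_of_pos (by positivity), ← div_eq_mul_inv, div_le_one h0]
      exact hrρ
    rw [this, mul_zero, add_zero]
    rcases eq_or_lt_of_le hrρ with e | e
    · rw [e, h3]
    · exact h2 r hr (Or.inr e)
  · have : Real.posLog (r * ρ⁻¹) = Real.log r - Real.log ρ := by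
      rw [← div_eq_mul_inv, Real.posLog_eq_log, Real.log_div hr.ne' h0.ne']
      rw [abs_of_pos (by positivity), one_le_div h0]
      exact hrρ.le
    rw [this, ← h3]
    have := h4 r hrρ
    field_simp
    linarith

lemma posLog_diff (a b d : ℝ) (ha : 0 < a) (hab : a ≤ b) (hd : 0 < d) :
    Real.posLog (b * d⁻¹) - Real.posLog (a * d⁻¹) =
      (if d ≤ a then Real.log (b / a) else 0) + (if d ∈ Ioc a b then Real.log (b / d) else 0) := by
  have hb : 0 < b := ha.trans_le hab
  have key : ∀ r, 0 < r → Real.posLog (r * d⁻¹) = if d ≤ r then Real.log (r / d) else 0 := by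
    intro r hr
    split_ifs with h
    · rw [← div_eq_mul_inv, Real.posLog_eq_log]
      rw [abs_of_pos (by positivity), one_le_div hd]; exact h
    · rw [Real.posLog_eq_zero_iff, abs_of_pos (by positivity), ← div_eq_mul_inv, div_le_one hd]
      exact (not_le.1 h).le
  rw [key b hb, key a ha]
  simp only [mem_Ioc]
  by_cases h1 : d ≤ a
  · have h2 : d ≤ b := h1.trans hab
    simp only [h1, h2, if_true, not_lt.2 h1, false_and, if_false]
    rw [Real.log_div hb.ne' hd.ne', Real.log_div ha.ne' hd.ne', Real.log_div hb.ne' ha.ne']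
    ring
  · simp [h1, not_le.1 h1]

lemma integrable_Q (f : ℂ → ℝ) (hf : Integrable f) (x : ℂ)
    (hlog : Integrable (fun y => Real.posLog (‖x - y‖⁻¹) * f y)) (r : ℝ) :
    Integrable (fun y => Real.posLog (r * ‖x - y‖⁻¹) * f y) := by
  refine Integrable.mono' ((hf.norm.const_mul (Real.posLog r)).add hlog.norm) ?_ ?_
  · exact ((by fun_prop : Measurable fun y : ℂ =>
      Real.posLog (r * ‖x - y‖⁻¹)).aestronglyMeasurable).mul hf.1
  · refine Filter.Eventually.of_forall (fun y => ?_)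
    simp only [norm_mul, Pi.add_apply]
    rw [Real.norm_of_nonneg Real.posLog_nonneg, Real.norm_of_nonneg Real.posLog_nonneg, ← add_mul]
    exact mul_le_mul_of_nonneg_right Real.posLog_mul (norm_nonneg _)

lemma continuous_Q (f : ℂ → ℝ) (hf : Integrable f) (x : ℂ)
    (hlog : Integrable (fun y => Real.posLog (‖x - y‖⁻¹) * f y)) :
    Continuous (fun r : ℝ => ∫ y, Real.posLog (r * ‖x - y‖⁻¹) * f y) := by
  rw [continuous_iff_continuousAt]
  intro r0
  apply continuousAt_of_dominated
    (bound := fun y => Real.posLog (|r0| + 1) * ‖f y‖ + ‖Real.posLog (‖x - y‖⁻¹) * f y‖)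
  · exact Filter.Eventually.of_forall (fun r => (integrable_Q f hf x hlog r).1)
  · filter_upwards [Metric.ball_mem_nhds r0 one_pos] with r hr
    refine Filter.Eventually.of_forall (fun y => ?_)
    simp only [norm_mul]
    rw [Real.norm_of_nonneg Real.posLog_nonneg, Real.norm_of_nonneg Real.posLog_nonneg, ← add_mul]
    refine mul_le_mul_of_nonneg_right (Real.posLog_mul.trans ?_) (norm_nonneg _)
    refine add_le_add ?_ le_rfl
    rw [← Real.posLog_abs r]
    apply Real.posLog_le_posLog (abs_nonneg _)
    rw [Metric.mem_ball, Real.dist_eq] at hr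
    have := abs_add_le r0 (r - r0)
    rw [add_sub_cancel] at this
    linarith
  · exact (hf.norm.const_mul _).add hlog.norm
  · refine Filter.Eventually.of_forall (fun y => ?_)
    exact ((Real.continuous_posLog.comp (by fun_prop)).mul continuous_const).continuousAt

lemma Q_diff (f : ℂ → ℝ) (hf : Integrable f) (x : ℂ)
    (hlog : Integrable (fun y => Real.posLog (‖x - y‖⁻¹) * f y)) (a b : ℝ) (ha : 0 < a)
    (hab : a ≤ b) :
    (∫ y, Real.posLog (b * ‖x - y‖⁻¹) * f y) - (∫ y, Real.posLog (a * ‖x - y‖⁻¹) * f y) =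
      Real.log (b / a) * (∫ y in {y | ‖y - x‖ ≤ a}, f y) +
      ∫ s in a..b, Real.log (b / s) * (s * ∫ t in (0 : ℝ)..(2 * Real.pi), f (circleMap x s t)) := by
  have hb : 0 < b := ha.trans_le hab
  have hT1 : MeasurableSet {y : ℂ | ‖y - x‖ ≤ a} := measurableSet_le (by fun_prop) (by fun_prop)
  have hT2 : MeasurableSet {y : ℂ | ‖y - x‖ ∈ Ioc a b} :=
    (by fun_prop : Measurable fun y : ℂ => ‖y - x‖) measurableSet_Ioc
  have hg : IntegrableOn (fun y => Real.log (b / ‖y - x‖) * f y) {y : ℂ | ‖y - x‖ ∈ Ioc a b} := by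
    refine Integrable.mono' (hf.norm.const_mul (Real.log (b / a))).integrableOn ?_ ?_
    · exact (((by fun_prop : Measurable fun y : ℂ =>
        Real.log (b / ‖y - x‖)).aestronglyMeasurable).mul hf.1.restrict)
    · filter_upwards [ae_restrict_mem hT2] with y hy
      have hy0 : 0 < ‖y - x‖ := ha.trans hy.1
      rw [norm_mul, Real.norm_of_nonneg]
      · gcongr
        exact hy.1.le
      · apply Real.log_nonneg
        rw [one_le_div hy0]; exact hy.2
  have hp := polar_on _ x (Ioc a b) measurableSet_Ioc (fun s hs => ha.trans hs.1) hg
  have e2 : ∫ s in a..b, Real.log (b / s) *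
      (s * ∫ t in (0 : ℝ)..(2 * Real.pi), f (circleMap x s t)) =
      ∫ y in {y : ℂ | ‖y - x‖ ∈ Ioc a b}, Real.log (b / ‖y - x‖) * f y := by
    rw [hp.2, intervalIntegral.integral_of_le hab]
    apply setIntegral_congr_fun measurableSet_Ioc
    intro s hs
    have hs0 : 0 < s := ha.trans hs.1
    have hn : ∀ t, ‖circleMap x s t - x‖ = s := by
      intro t; simp [abs_of_pos hs0]
    simp only [hn]
    rw [intervalIntegral.integral_const_mul]; ring
  rw [e2, ← integral_sub (integrable_Q f hf x hlog b) (integrable_Q f hf x hlog a),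
    ← integral_const_mul, ← integral_indicator hT1, ← integral_indicator hT2, ← integral_add]
  · apply integral_congr_ae
    have : ∀ᵐ y : ℂ, y ≠ x := by simp [ae_iff]
    filter_upwards [this] with y hy
    have hd : 0 < ‖x - y‖ := norm_pos_iff.2 (sub_ne_zero.2 (Ne.symm hy))
    rw [← sub_mul, posLog_diff a b _ ha hab hd]
    simp only [indicator, mem_ofPred_eq, norm_sub_rev y x]
    split_ifs <;> ring
  · exact ((hf.const_mul _).integrableOn).integrable_indicator hT1
  · exact hg.integrable_indicator hT2

/-- Mean value identity for `U`, up to a point mass at the origin. -/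
lemma mean_U (U f : ℂ → ℝ) (D1 : ℂ → ℂ →L[ℝ] ℝ) (D2 : ℂ → ℂ →L[ℝ] ℂ →L[ℝ] ℝ)
    (hU : Continuous U)
    (hD1 : ∀ z, z ≠ 0 → HasFDerivAt U (D1 z) z)
    (hD2 : ∀ z, z ≠ 0 → HasFDerivAt D1 (D2 z) z)
    (hD2c : ContinuousOn D2 {0}ᶜ)
    (hlap : ∀ z, z ≠ 0 → D2 z 1 1 + D2 z Complex.I Complex.I = - f z)
    (hf : Integrable f) (x : ℂ)
    (hlog : Integrable (fun y => Real.posLog (‖x - y‖⁻¹) * f y)) :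
    ∃ c, ∀ r, 0 < r → (∫ t in (0 : ℝ)..(2 * Real.pi), U (circleMap x r t)) +
      (∫ y, Real.posLog (r * ‖x - y‖⁻¹) * f y) =
      2 * Real.pi * U x + c * Real.posLog (r * ‖x‖⁻¹) := by
  set ψ : ℝ → ℝ := fun r => (∫ t in (0 : ℝ)..(2 * Real.pi), U (circleMap x r t)) +
      (∫ y, Real.posLog (r * ‖x - y‖⁻¹) * f y) with hψ
  have hψc : Continuous ψ := by
    apply Continuous.add
    · apply intervalIntegral.continuous_parametric_intervalIntegral_of_continuous'
      exact hU.comp (continuous_circleMap_two x)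
    · exact continuous_Q f hf x hlog
  have h0 : ψ 0 = 2 * Real.pi * U x := by
    simp [hψ]
  rw [← h0]
  apply affine_log ψ hψc ‖x‖ (norm_nonneg x)
  intro a ha
  refine ⟨(a * ∫ t in (0 : ℝ)..(2 * Real.pi), D1 (circleMap x a t) (circleMap 0 1 t)) +
    ∫ y in {y | ‖y - x‖ ≤ a}, f y, fun b hab hs => ?_⟩
  have h1 := green_annulus U f D1 D2 hD1 hD2 hD2c hlap x a b ha hab (by
    intro s hs' t h
    apply hs s hs'
    have : ‖circleMap x s t - x‖ = |s| := by simp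
    rw [h, zero_sub, norm_neg, abs_of_pos (ha.trans_le hs'.1)] at this
    exact this.symm)
  have h2 := Q_diff f hf x hlog a b ha hab
  simp only [hψ]
  linarith

end LiouvilleRep


namespace LiouvilleRep

lemma integrable_ker_mul (f : ℂ → ℝ) (hf : Integrable f) (x : ℂ)
    (hlog : Integrable (fun y => Real.posLog (‖x - y‖⁻¹) * f y)) :
    Integrable (fun y => ker x y * f y) := by
  refine Integrable.mono' ((hf.norm.const_mul (Real.log (2 + ‖x‖))).add hlog.norm) ?_ ?_
  · exact ((measurable_ker.comp (measurable_const.prodMk measurable_id)).aestronglyMeasurable).mul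
      hf.1
  · refine Filter.Eventually.of_forall (fun y => ?_)
    simp only [norm_mul, Pi.add_apply]
    rw [Real.norm_of_nonneg (r := Real.posLog _) Real.posLog_nonneg, ← add_mul]
    exact mul_le_mul_of_nonneg_right (abs_ker_le x y) (norm_nonneg _)

lemma integrable_ker_prod (f : ℂ → ℝ) (hf : Integrable f) (x : ℂ) (R : ℝ) :
    Integrable (fun p : ℂ × ℂ => ker p.1 p.2 * f p.2)
      (((volume : Measure ℂ).restrict (Metric.ball x R)).prod volume) := by
  have h1 : Integrable (fun p : ℂ × ℂ => (fun _ : ℂ => Real.log (2 + (‖x‖ + R))) p.1 * ‖f p.2‖)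
      (((volume : Measure ℂ).restrict (Metric.ball x R)).prod volume) := by
    have h0 : Integrable (fun _ : ℂ => Real.log (2 + (‖x‖ + R)))
        ((volume : Measure ℂ).restrict (Metric.ball x R)) :=
      integrableOn_const measure_ball_lt_top.ne
    exact Integrable.mul_prod h0 hf.norm
  have h2 : Integrable (fun p : ℂ × ℂ => ‖f p.2‖ * Real.posLog (‖p.1 - p.2‖⁻¹))
      ((volume : Measure ℂ).prod volume) :=
    Integrable.convolution_integrand (ContinuousLinearMap.mul ℝ ℝ) hf.norm integrable_posLog
  have h3 : Integrable (fun p : ℂ × ℂ => ‖f p.2‖ * Real.posLog (‖p.1 - p.2‖⁻¹))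
      (((volume : Measure ℂ).restrict (Metric.ball x R)).prod volume) := by
    have : ((volume : Measure ℂ).restrict (Metric.ball x R)).prod (volume : Measure ℂ) =
        ((volume : Measure ℂ).prod volume).restrict (Metric.ball x R ×ˢ univ) := by
      rw [← Measure.prod_restrict, Measure.restrict_univ]
    rw [this]
    exact h2.restrict
  refine Integrable.mono' (h1.add h3) ?_ ?_
  · exact measurable_ker.aestronglyMeasurable.mul hf.1.comp_snd
  · have : ∀ᵐ p ∂(((volume : Measure ℂ).restrict (Metric.ball x R)).prod (volume : Measure ℂ)),
        p.1 ∈ Metric.ball x R := by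
      have h := ae_restrict_mem (μ := (volume : Measure ℂ)) (measurableSet_ball (x := x) (ε := R))
      exact Measure.quasiMeasurePreserving_fst.ae h
    filter_upwards [this] with p hp
    simp only [Pi.add_apply, norm_mul]
    rw [mul_comm ‖f p.2‖ (Real.posLog _), ← add_mul]
    refine mul_le_mul_of_nonneg_right ?_ (norm_nonneg _)
    refine (abs_ker_le p.1 p.2).trans ?_
    gcongr
    have : ‖p.1‖ ≤ ‖x‖ + ‖p.1 - x‖ := by simpa using norm_add_le x (p.1 - x)
    rw [Metric.mem_ball, dist_eq_norm] at hp
    linarith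

lemma integrableOn_W (f : ℂ → ℝ) (hf : Integrable f) (x : ℂ) (R : ℝ) :
    IntegrableOn (fun z => ∫ y, ker z y * f y) (Metric.ball x R) :=
  (integrable_ker_prod f hf x R).integral_prod_left

lemma ball_W (f : ℂ → ℝ) (hf : Integrable f) (x : ℂ)
    (hlog : Integrable (fun y => Real.posLog (‖x - y‖⁻¹) * f y)) (R : ℝ) (hR : 0 < R) :
    IntegrableOn (fun s => 2 * Real.pi * s * ∫ y, Real.posLog (s * ‖x - y‖⁻¹) * f y) (Ioo 0 R) ∧
    ∫ z in Metric.ball x R, ∫ y, ker z y * f y = Real.pi * R ^ 2 * (∫ y, ker x y * f y) +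
      ∫ s in Ioo 0 R, 2 * Real.pi * s * ∫ y, Real.posLog (s * ‖x - y‖⁻¹) * f y := by
  have hI : Integrable (fun p : ℝ × ℂ =>
      2 * Real.pi * p.1 * (Real.posLog (p.1 * ‖x - p.2‖⁻¹) * f p.2))
      (((volume : Measure ℝ).restrict (Ioo 0 R)).prod volume) := by
    have h1 : Integrable (fun p : ℝ × ℂ => (fun _ : ℝ => 2 * Real.pi * R) p.1 *
        (Real.posLog R * ‖f p.2‖ + ‖Real.posLog (‖x - p.2‖⁻¹) * f p.2‖))
      (((volume : Measure ℝ).restrict (Ioo 0 R)).prod volume) := by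
      have h0 : Integrable (fun _ : ℝ => 2 * Real.pi * R) (volume.restrict (Ioo 0 R)) :=
        integrable_const _
      exact Integrable.mul_prod h0 ((hf.norm.const_mul (Real.posLog R)).add hlog.norm)
    refine Integrable.mono' h1 ?_ ?_
    · refine AEStronglyMeasurable.mul ?_ (AEStronglyMeasurable.mul ?_ hf.1.comp_snd)
      · exact (by fun_prop : Measurable fun p : ℝ × ℂ => 2 * Real.pi * p.1).aestronglyMeasurable
      · exact (by fun_prop : Measurable fun p : ℝ × ℂ =>
          Real.posLog (p.1 * ‖x - p.2‖⁻¹)).aestronglyMeasurable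
    · have : ∀ᵐ p ∂(((volume : Measure ℝ).restrict (Ioo 0 R)).prod (volume : Measure ℂ)),
          p.1 ∈ Ioo 0 R := by
        have h := ae_restrict_mem (μ := (volume : Measure ℝ)) (measurableSet_Ioo (a := 0) (b := R))
        exact Measure.quasiMeasurePreserving_fst.ae h
      filter_upwards [this] with p hp
      simp only [norm_mul]
      rw [Real.norm_of_nonneg (r := Real.posLog _) Real.posLog_nonneg,
        Real.norm_of_nonneg (r := Real.posLog _) Real.posLog_nonneg, ← add_mul,
        Real.norm_of_nonneg (r := p.1) hp.1.le, Real.norm_of_nonneg (r := Real.pi) Real.pi_pos.le]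
      simp only [Real.norm_ofNat]
      have hh : Real.posLog (p.1 * ‖x - p.2‖⁻¹) ≤ Real.posLog R + Real.posLog (‖x - p.2‖⁻¹) :=
        Real.posLog_mul.trans (by
          refine add_le_add ?_ le_rfl
          exact Real.posLog_le_posLog hp.1.le hp.2.le)
      have := @Real.posLog_nonneg (p.1 * ‖x - p.2‖⁻¹)
      have := hp.1.le
      have := hp.2.le
      gcongr
  constructor
  · have := hI.integral_prod_left
    simp only [integral_const_mul] at this
    exact this
  · rw [integral_integral_swap (integrable_ker_prod f hf x R)]
    have hsw := integral_integral_swap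
      (f := fun (s : ℝ) (y : ℂ) => 2 * Real.pi * s * (Real.posLog (s * ‖x - y‖⁻¹) * f y)) hI
    simp only [integral_const_mul] at hsw
    rw [hsw]
    have hI2 := hI.integral_prod_right
    rw [← integral_const_mul, ← integral_add]
    · apply integral_congr_ae
      have : ∀ᵐ y : ℂ, y ≠ x := by simp [ae_iff]
      filter_upwards [this] with y hy
      rw [integral_mul_const, ball_ker x y (Ne.symm hy) R hR]
      simp_rw [← mul_assoc]
      rw [integral_mul_const]
      ring
    · exact (integrable_ker_mul f hf x hlog).const_mul _
    · exact hI2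

/-- Mean value identity over balls for `2π U + W`, up to a point mass at the origin. -/
lemma ball_mean (U f : ℂ → ℝ) (D1 : ℂ → ℂ →L[ℝ] ℝ) (D2 : ℂ → ℂ →L[ℝ] ℂ →L[ℝ] ℝ)
    (hU : Continuous U)
    (hD1 : ∀ z, z ≠ 0 → HasFDerivAt U (D1 z) z)
    (hD2 : ∀ z, z ≠ 0 → HasFDerivAt D1 (D2 z) z)
    (hD2c : ContinuousOn D2 {0}ᶜ)
    (hlap : ∀ z, z ≠ 0 → D2 z 1 1 + D2 z Complex.I Complex.I = - f z)
    (hf : Integrable f) (x : ℂ)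
    (hlog : Integrable (fun y => Real.posLog (‖x - y‖⁻¹) * f y)) :
    ∃ c, ∀ R, 0 < R → IntegrableOn (fun z => 2 * Real.pi * U z + ∫ y, ker z y * f y)
        (Metric.ball x R) ∧
      ∫ z in Metric.ball x R, (2 * Real.pi * U z + ∫ y, ker z y * f y) =
      Real.pi * R ^ 2 * (2 * Real.pi * U x + ∫ y, ker x y * f y) +
      c * ∫ s in Ioo 0 R, s * Real.posLog (s * ‖x‖⁻¹) := by
  obtain ⟨c, hc⟩ := mean_U U f D1 D2 hU hD1 hD2 hD2c hlap hf x hlog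
  refine ⟨2 * Real.pi * c, fun R hR => ?_⟩
  have hUi : IntegrableOn U (Metric.ball x R) :=
    (hU.continuousOn.integrableOn_compact (isCompact_closedBall x R)).mono_set
      Metric.ball_subset_closedBall
  have hWi := integrableOn_W f hf x R
  have hp := polar_ball U x R hUi
  have hw := ball_W f hf x hlog R hR
  refine ⟨(hUi.const_mul _).add hWi, ?_⟩
  rw [integral_add (hUi.const_mul _) hWi, integral_const_mul, hp.2, hw.2, ← integral_const_mul]
  have hsum : (∫ s in Ioo 0 R, 2 * Real.pi *
      (s * ∫ t in (0 : ℝ)..(2 * Real.pi), U (circleMap x s t))) +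
      (∫ s in Ioo 0 R, 2 * Real.pi * s * ∫ y, Real.posLog (s * ‖x - y‖⁻¹) * f y) =
      ∫ s in Ioo 0 R, (2 * Real.pi * (2 * Real.pi * U x) * s + 2 * Real.pi * c *
        (s * Real.posLog (s * ‖x‖⁻¹))) := by
    rw [← integral_add (hp.1.const_mul _) hw.1]
    apply setIntegral_congr_fun measurableSet_Ioo
    intro s hs
    have := hc s hs.1
    simp only
    linear_combination (2 * Real.pi * s) * this
  rw [integral_add] at hsum
  · rw [integral_const_mul (2 * Real.pi * (2 * Real.pi * U x)) (fun s : ℝ => s),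
      integral_const_mul _ (fun s => s * Real.posLog (s * ‖x‖⁻¹)),
      ← integral_Ioc_eq_integral_Ioo (f := fun s : ℝ => s),
      ← intervalIntegral.integral_of_le hR.le, integral_id] at hsum
    linear_combination hsum
  · exact (Continuous.integrableOn_Icc (by fun_prop)).mono_set Ioo_subset_Icc_self
  · exact (Continuous.integrableOn_Icc (by fun_prop)).mono_set Ioo_subset_Icc_self

end LiouvilleRep


namespace LiouvilleRep

lemma annulus_bound (H F : ℂ → ℝ) (C M : ℝ) (hC : 0 ≤ C) (hF0 : ∀ z, 0 ≤ F z)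
    (hF : Integrable F) (hH : ∀ z, 1 ≤ ‖z‖ → H z ≤ F z + C * Real.log (1 + ‖z‖))
    (a b : ℂ) (r R : ℝ) (hr : 0 < r) (hR : 0 < R)
    (hsub : Metric.ball a r ⊆ Metric.ball b R)
    (hHint0 : IntegrableOn H (Metric.ball b R))
    (hM : ∀ z ∈ Metric.ball b R \ Metric.ball a r, 1 ≤ ‖z‖ ∧ ‖z‖ ≤ M) :
    ∫ z in Metric.ball b R, H z ≤ (∫ z in Metric.ball a r, H z) + (∫ z, F z) +
      C * Real.log (1 + M) * (Real.pi * (R ^ 2 - r ^ 2)) := by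
  have hd := setIntegral_sdiff (μ := volume) (measurableSet_ball (x := a) (ε := r)) hHint0 hsub
  have hvol : (volume : Measure ℂ).real (Metric.ball b R \ Metric.ball a r) =
      Real.pi * (R ^ 2 - r ^ 2) := by
    rw [measureReal_sdiff hsub measurableSet_ball]
    · simp only [measureReal_def, Complex.volume_ball]
      simp [hr.le, hR.le]
      ring
  have hfin : (volume : Measure ℂ) (Metric.ball b R \ Metric.ball a r) ≠ ⊤ :=
    (lt_of_le_of_lt (measure_mono sdiff_subset) measure_ball_lt_top).ne
  have hci : IntegrableOn (fun _ : ℂ => C * Real.log (1 + M))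
      (Metric.ball b R \ Metric.ball a r) := integrableOn_const hfin
  have h1 : ∫ z in Metric.ball b R \ Metric.ball a r, H z ≤
      ∫ z in Metric.ball b R \ Metric.ball a r, (F z + C * Real.log (1 + M)) := by
    apply setIntegral_mono_on (hHint0.mono_set sdiff_subset) (hF.integrableOn.add hci)
      (measurableSet_ball.diff measurableSet_ball)
    intro z hz
    obtain ⟨h1, h2⟩ := hM z hz
    refine (hH z h1).trans ?_
    have hl : Real.log (1 + ‖z‖) ≤ Real.log (1 + M) := Real.log_le_log (by positivity) (by linarith)
    exact add_le_add le_rfl (mul_le_mul_of_nonneg_left hl hC)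
  rw [integral_add hF.integrableOn hci, setIntegral_const, hvol, smul_eq_mul] at h1
  have h2 : ∫ z in Metric.ball b R \ Metric.ball a r, F z ≤ ∫ z, F z :=
    setIntegral_le_integral hF (Filter.Eventually.of_forall hF0)
  linarith

lemma Lam_lower (d R : ℝ) (hd : 0 < d) (hR : 0 < R) :
    R ^ 2 / 4 * Real.posLog (R / 2 * d⁻¹) ≤ ∫ s in Ioo 0 R, s * Real.posLog (s * d⁻¹) := by
  have hi : IntegrableOn (fun s => s * Real.posLog (s * d⁻¹)) (Ioo 0 R) :=
    (Continuous.integrableOn_Icc (by fun_prop)).mono_set Ioo_subset_Icc_self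
  have hsub : Ioo (R / 2) R ⊆ Ioo 0 R := Ioo_subset_Ioo_left (by positivity)
  calc R ^ 2 / 4 * Real.posLog (R / 2 * d⁻¹)
      = ∫ s in Ioo (R / 2) R, R / 2 * Real.posLog (R / 2 * d⁻¹) := by
        rw [setIntegral_const]
        simp only [measureReal_def, Real.volume_Ioo, smul_eq_mul]
        rw [ENNReal.toReal_ofReal (by linarith)]
        ring
    _ ≤ ∫ s in Ioo (R / 2) R, s * Real.posLog (s * d⁻¹) := by
        apply setIntegral_mono_on (integrable_const _) (hi.mono_set hsub) measurableSet_Ioo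
        intro s hs
        have : Real.posLog (R / 2 * d⁻¹) ≤ Real.posLog (s * d⁻¹) :=
          Real.posLog_le_posLog (by positivity)
            (mul_le_mul_of_nonneg_right hs.1.le (by positivity))
        have h0 : 0 ≤ Real.posLog (R / 2 * d⁻¹) := Real.posLog_nonneg
        have := hs.1.le
        gcongr
        exact (hs.1.trans' (by positivity)).le
    _ ≤ _ := by
        apply setIntegral_mono_set hi _ hsub.eventuallyLE
        filter_upwards [ae_restrict_mem measurableSet_Ioo] with s hs
        exact mul_nonneg hs.1.le Real.posLog_nonneg

lemma err_tendsto (K C d : ℝ) (hd : 0 < d) :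
    Filter.Tendsto (fun R : ℝ => (K + C * Real.log (1 + (R + 2 * d)) *
      (Real.pi * ((R + d) ^ 2 - R ^ 2))) / R ^ 2) Filter.atTop (nhds 0) := by
  have h1 : Filter.Tendsto (fun R : ℝ => R⁻¹) Filter.atTop (nhds 0) := tendsto_inv_atTop_zero
  have h2 : Filter.Tendsto (fun R : ℝ => Real.log (1 + (R + 2 * d)) / R) Filter.atTop (nhds 0) := by
    have h := (Real.isLittleO_log_id_atTop).tendsto_div_nhds_zero
    have hs : Filter.Tendsto (fun R : ℝ => R + (1 + 2 * d)) Filter.atTop Filter.atTop :=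
      Filter.tendsto_atTop_add_const_right _ _ Filter.tendsto_id
    have h3 := (h.comp hs).mul ((h1.const_mul (1 + 2 * d)).const_add 1)
    simp only [mul_zero, add_zero, zero_mul] at h3
    refine h3.congr' ?_
    filter_upwards [Filter.eventually_gt_atTop 0] with R hR
    simp only [Function.comp, id]
    have : R + (1 + 2 * d) ≠ 0 := by positivity
    rw [show 1 + (R + 2 * d) = R + (1 + 2 * d) by ring]
    field_simp
  have h := ((h1.mul h1).const_mul K).add
    ((h2.const_mul (C * Real.pi)).mul ((h1.const_mul (d ^ 2)).const_add (2 * d)))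
  simp only [mul_zero, add_zero, zero_mul] at h
  refine h.congr' ?_
  filter_upwards [Filter.eventually_gt_atTop 0] with R hR
  field_simp
  ring

/-- Abstract Liouville-type argument. -/
lemma liouville_abs (H F : ℂ → ℝ) (C : ℝ) (hC : 0 ≤ C) (hF0 : ∀ z, 0 ≤ F z)
    (hF : Integrable F) (hH : ∀ z, 1 ≤ ‖z‖ → H z ≤ F z + C * Real.log (1 + ‖z‖))
    (hmean : ∀ x, ∃ c, ∀ R, 0 < R → IntegrableOn H (Metric.ball x R) ∧
      ∫ z in Metric.ball x R, H z = Real.pi * R ^ 2 * H x +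
      c * ∫ s in Ioo 0 R, s * Real.posLog (s * ‖x‖⁻¹)) (x : ℂ) : H x = H 0 := by
  by_cases hx : x = 0
  · rw [hx]
  have hd : 0 < ‖x‖ := norm_pos_iff.2 hx
  obtain ⟨c, hc⟩ := hmean x
  obtain ⟨c0, hc0⟩ := hmean 0
  simp only [norm_zero, inv_zero, mul_zero, Real.posLog_zero, integral_zero, add_zero] at hc0
  set d := ‖x‖ with hd_def
  set K := ∫ z, F z with hK
  set L : ℝ → ℝ := fun R => ∫ s in Ioo 0 R, s * Real.posLog (s * d⁻¹) with hL
  have hpi := Real.pi_pos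
  set E : ℝ → ℝ := fun R => (K + C * Real.log (1 + (R + 2 * d)) *
      (Real.pi * ((R + d) ^ 2 - R ^ 2))) / R ^ 2 with hE
  have hE0 : Filter.Tendsto E Filter.atTop (nhds 0) := err_tendsto K C d hd
  set q : ℝ → ℝ := fun R => (1 + d * R⁻¹) ^ 2 with hq
  have hq1 : Filter.Tendsto q Filter.atTop (nhds 1) := by
    have := ((tendsto_inv_atTop_zero (𝕜 := ℝ)).const_mul d).const_add 1 |>.pow 2
    simpa using this
  set g : ℝ → ℝ := fun R => Real.posLog (R / 2 * d⁻¹) / 4 with hg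
  have hgt : Filter.Tendsto g Filter.atTop Filter.atTop := by
    apply Filter.Tendsto.atTop_div_const (by norm_num)
    have h1 : Filter.Tendsto (fun R : ℝ => R / 2 * d⁻¹) Filter.atTop Filter.atTop :=
      (Filter.tendsto_id.atTop_div_const (by norm_num)).atTop_mul_const (by positivity)
    refine Filter.tendsto_atTop_mono (fun R => ?_) (Real.tendsto_log_atTop.comp h1)
    simp [Real.posLog]
  have hLg : ∀ R, 0 < R → g R * R ^ 2 ≤ L R := by
    intro R hR
    have := Lam_lower d R hd hR
    simp only [hg, hL]
    linarith
  have hLm : ∀ R, 0 < R → L R ≤ L (R + d) := by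
    intro R hR
    apply setIntegral_mono_set
    · exact (Continuous.integrableOn_Icc (by fun_prop)).mono_set Ioo_subset_Icc_self
    · filter_upwards [ae_restrict_mem measurableSet_Ioo] with s hs
      exact mul_nonneg hs.1.le Real.posLog_nonneg
    · exact (Ioo_subset_Ioo_right (by linarith)).eventuallyLE
  have key1 : ∀ R, d + 1 < R → Real.pi * q R * H 0 ≤ Real.pi * H x + c * (L R / R ^ 2) + E R := by
    intro R hR
    have hR0 : 0 < R := by linarith
    have h := annulus_bound H F C (R + 2 * d) hC hF0 hF hH x 0 R (R + d) hR0 (by linarith)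
      (Metric.ball_subset_ball' (by rw [dist_zero_right])) (hc0 _ (by linarith)).1 (by
        rintro z ⟨h1, h2⟩
        simp only [Metric.mem_ball, dist_eq_norm, sub_zero, not_lt] at h1 h2
        have := norm_sub_le z x
        constructor <;> linarith)
    rw [(hc0 _ (by linarith)).2, (hc R hR0).2] at h
    have e1 : q R = (R + d) ^ 2 / R ^ 2 := by simp only [hq]; field_simp
    have e2 : Real.pi * q R * H 0 = (Real.pi * (R + d) ^ 2 * H 0) / R ^ 2 := by rw [e1]; ring
    have e3 : Real.pi * H x + c * (L R / R ^ 2) + E R = (Real.pi * R ^ 2 * H x + c * L R + K +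
        C * Real.log (1 + (R + 2 * d)) * (Real.pi * ((R + d) ^ 2 - R ^ 2))) / R ^ 2 := by
      simp only [hE]; field_simp; ring
    rw [e2, e3]
    exact div_le_div_of_nonneg_right h (by positivity)
  have key2 : ∀ R, d + 1 < R →
      Real.pi * q R * H x + c * (L (R + d) / R ^ 2) ≤ Real.pi * H 0 + E R := by
    intro R hR
    have hR0 : 0 < R := by linarith
    have h := annulus_bound H F C (R + 2 * d) hC hF0 hF hH 0 x R (R + d) hR0 (by linarith)
      (Metric.ball_subset_ball' (by rw [dist_zero_left])) (hc _ (by linarith)).1 (by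
        rintro z ⟨h1, h2⟩
        simp only [Metric.mem_ball, dist_eq_norm, sub_zero, not_lt] at h1 h2
        have : ‖z‖ ≤ ‖z - x‖ + ‖x‖ := by simpa using norm_add_le (z - x) x
        constructor <;> linarith)
    rw [(hc _ (by linarith)).2, (hc0 R hR0).2] at h
    have e1 : q R = (R + d) ^ 2 / R ^ 2 := by simp only [hq]; field_simp
    have e2 : Real.pi * q R * H x + c * (L (R + d) / R ^ 2) =
      (Real.pi * (R + d) ^ 2 * H x + c * L (R + d)) / R ^ 2 := by rw [e1]; ring
    have e3 : Real.pi * H 0 + E R = (Real.pi * R ^ 2 * H 0 + K +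
        C * Real.log (1 + (R + 2 * d)) * (Real.pi * ((R + d) ^ 2 - R ^ 2))) / R ^ 2 := by
      simp only [hE]; field_simp; ring
    rw [e2, e3]
    exact div_le_div_of_nonneg_right h (by positivity)
  have hA1 : Filter.Tendsto (fun R => Real.pi * q R * H 0 - E R - Real.pi * H x) Filter.atTop
      (nhds (Real.pi * 1 * H 0 - 0 - Real.pi * H x)) :=
    (((hq1.const_mul _).mul_const _).sub hE0).sub_const _
  have hA2 : Filter.Tendsto (fun R => Real.pi * q R * H x - E R - Real.pi * H 0) Filter.atTop
      (nhds (Real.pi * 1 * H x - 0 - Real.pi * H 0)) :=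
    (((hq1.const_mul _).mul_const _).sub hE0).sub_const _
  have hev := Filter.eventually_gt_atTop (d + 1)
  have hcz : c = 0 := by
    rcases lt_trichotomy c 0 with h | h | h
    · exfalso
      have h1 : Filter.Tendsto (fun R => c * g R) Filter.atTop Filter.atBot :=
        hgt.const_mul_atTop_of_neg h
      refine not_tendsto_nhds_of_tendsto_atBot (Filter.tendsto_atBot_mono' _ ?_ h1) _ hA1
      filter_upwards [hev] with R hR
      have hR0 : 0 < R := by linarith
      have k := key1 R hR
      have h3 : g R ≤ L R / R ^ 2 := by
        rw [le_div_iff₀ (by positivity)]; exact hLg R hR0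
      nlinarith
    · exact h
    · exfalso
      have h1 : Filter.Tendsto (fun R => -c * g R) Filter.atTop Filter.atBot :=
        hgt.const_mul_atTop_of_neg (by linarith)
      refine not_tendsto_nhds_of_tendsto_atBot (Filter.tendsto_atBot_mono' _ ?_ h1) _ hA2
      filter_upwards [hev] with R hR
      have hR0 : 0 < R := by linarith
      have k := key2 R hR
      have h3 : g R ≤ L (R + d) / R ^ 2 := by
        rw [le_div_iff₀ (by positivity)]; exact (hLg R hR0).trans (hLm R hR0)
      nlinarith
  have b1 : Real.pi * 1 * H 0 - 0 - Real.pi * H x ≤ 0 := by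
    refine le_of_tendsto hA1 ?_
    filter_upwards [hev] with R hR
    have k := key1 R hR
    rw [hcz] at k
    linarith
  have b2 : Real.pi * 1 * H x - 0 - Real.pi * H 0 ≤ 0 := by
    refine le_of_tendsto hA2 ?_
    filter_upwards [hev] with R hR
    have k := key2 R hR
    rw [hcz] at k
    linarith
  have : Real.pi * H x = Real.pi * H 0 := by linarith
  exact mul_left_cancel₀ hpi.ne' this

lemma repr_ker (U f F : ℂ → ℝ) (D1 : ℂ → ℂ →L[ℝ] ℝ) (D2 : ℂ → ℂ →L[ℝ] ℂ →L[ℝ] ℝ)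
    (hU : Continuous U)
    (hD1 : ∀ z, z ≠ 0 → HasFDerivAt U (D1 z) z)
    (hD2 : ∀ z, z ≠ 0 → HasFDerivAt D1 (D2 z) z)
    (hD2c : ContinuousOn D2 {0}ᶜ)
    (hlap : ∀ z, z ≠ 0 → D2 z 1 1 + D2 z Complex.I Complex.I = - f z)
    (hf : Integrable f) (hf0 : ∀ z, 0 ≤ f z)
    (hlog : ∀ x, Integrable (fun y => Real.posLog (‖x - y‖⁻¹) * f y))
    (hF : Integrable F) (hF0 : ∀ z, 0 ≤ F z) (C : ℝ) (hC : 0 ≤ C)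
    (hUF : ∀ z, 1 ≤ ‖z‖ → U z ≤ F z + C * Real.log (1 + ‖z‖)) :
    ∃ c, ∀ x, U x = c - 1 / (2 * Real.pi) * ∫ y, ker x y * f y := by
  have hpi := Real.pi_pos
  have hW : ∀ z, ∫ y, ker z y * f y ≤ (∫ y, f y) * Real.log (1 + ‖z‖) := by
    intro z
    rw [← integral_mul_const]
    apply integral_mono (integrable_ker_mul f hf z (hlog z)) (hf.mul_const _)
    intro y
    simp only
    rw [mul_comm (f y)]
    exact mul_le_mul_of_nonneg_right (ker_le z y) (hf0 y)
  have hfi : 0 ≤ ∫ y, f y := integral_nonneg hf0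
  have h := liouville_abs (fun z => 2 * Real.pi * U z + ∫ y, ker z y * f y)
    (fun z => 2 * Real.pi * F z) (2 * Real.pi * C + ∫ y, f y) (by positivity)
    (fun z => mul_nonneg (by positivity) (hF0 z)) (hF.const_mul _) (fun z hz => by
      have h1 := hUF z hz
      have h2 := hW z
      have h3 := mul_le_mul_of_nonneg_left h1 (by positivity : 0 ≤ 2 * Real.pi)
      linarith)
    (fun x => ball_mean U f D1 D2 hU hD1 hD2 hD2c hlap hf x (hlog x))
  refine ⟨(2 * Real.pi * U 0 + ∫ y, ker 0 y * f y) / (2 * Real.pi), fun x => ?_⟩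
  have := h x
  rw [← this]
  field_simp
  ring

end LiouvilleRep


namespace LiouvilleRep

lemma jensen_tail (h w : ℂ → ℝ) (ε : ℝ) (hε : 0 < ε) (hw0 : ∀ y, 0 ≤ w y) (hw : Integrable w)
    (hhw : Integrable (fun y => h y * w y))
    (hew : Integrable (fun y => Real.exp (ε * h y) * w y)) (hν : ∫ y, w y ≤ ε) :
    Real.exp (∫ y, h y * w y) ≤ 1 + ε⁻¹ * ∫ y, Real.exp (ε * h y) * w y := by
  set G := ∫ y, h y * w y with hG
  set ν := ∫ y, w y with hν'
  have tan : ∀ t, Real.exp G * (1 + t - G) ≤ Real.exp t := by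
    intro t
    have h1 := Real.add_one_le_exp (t - G)
    have h2 : Real.exp t = Real.exp G * Real.exp (t - G) := by rw [← Real.exp_add]; ring_nf
    rw [h2]
    exact mul_le_mul_of_nonneg_left (by linarith) (Real.exp_pos _).le
  have h0 := tan 0
  rw [Real.exp_zero] at h0
  have h1 : ∫ y, (Real.exp G * ((1 - G) * w y + ε * (h y * w y))) ≤
      ∫ y, Real.exp (ε * h y) * w y := by
    apply integral_mono (((hw.const_mul _).add (hhw.const_mul _)).const_mul _) hew
    intro y
    have := mul_le_mul_of_nonneg_right (tan (ε * h y)) (hw0 y)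
    simp only [Pi.add_apply]
    linarith
  rw [integral_const_mul, integral_add (hw.const_mul _) (hhw.const_mul _), integral_const_mul,
    integral_const_mul] at h1
  have h2 : (ε - ν) * (Real.exp G * (1 + 0 - G)) ≤ (ε - ν) * 1 :=
    mul_le_mul_of_nonneg_left h0 (by linarith)
  have hν0 : 0 ≤ ν := integral_nonneg hw0
  have h3 : ε * Real.exp G ≤ ε + ∫ y, Real.exp (ε * h y) * w y := by
    simp only [← hG, ← hν'] at h1
    nlinarith
  have h4 : ε * (1 + ε⁻¹ * ∫ y, Real.exp (ε * h y) * w y) =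
      ε + ∫ y, Real.exp (ε * h y) * w y := by field_simp
  rw [← h4] at h3
  exact le_of_mul_le_mul_left h3 hε

noncomputable def pw (q : ℝ) (z : ℂ) : ℝ := (Ioi (1 : ℝ)).indicator (fun r => r ^ q) ‖z‖

lemma integrable_pw (q : ℝ) : Integrable (pw q) ↔ q < -2 := by
  unfold pw
  rw [integrable_fun_norm_addHaar (E := ℂ) (volume : Measure ℂ)
    (f := (Ioi (1 : ℝ)).indicator (fun r => r ^ q))]
  simp only [Complex.finrank_real_complex, Nat.add_one_sub_one, pow_one, smul_eq_mul]
  have h1 : (fun r : ℝ => r * (Ioi (1 : ℝ)).indicator (fun r => r ^ q) r) =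
      (Ioi (1 : ℝ)).indicator (fun r => r * r ^ q) := by
    ext r
    by_cases h : r ∈ Ioi (1 : ℝ) <;> simp [h]
  rw [h1, IntegrableOn, integrable_indicator_iff measurableSet_Ioi, IntegrableOn,
    Measure.restrict_restrict measurableSet_Ioi, ← IntegrableOn,
    inter_eq_left.2 (Ioi_subset_Ioi zero_le_one)]
  have h2 : IntegrableOn (fun r : ℝ => r * r ^ q) (Ioi 1) ↔
      IntegrableOn (fun r : ℝ => r ^ (q + 1)) (Ioi 1) := by
    apply integrableOn_congr_fun _ measurableSet_Ioi
    intro r hr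
    have : (0 : ℝ) < r := zero_lt_one.trans hr
    simp only
    rw [Real.rpow_add_one this.ne', mul_comm]
  rw [h2, integrableOn_Ioi_rpow_iff one_pos]
  constructor <;> intro h <;> linarith

noncomputable def kap (z : ℂ) : ℝ := (Iio (1 : ℝ)).indicator (fun r => r⁻¹) ‖z‖

lemma kap_nonneg (z : ℂ) : 0 ≤ kap z := by
  unfold kap
  by_cases h : ‖z‖ ∈ Iio (1 : ℝ) <;> simp [h]

lemma measurable_kap : Measurable kap := by
  unfold kap
  exact (Measurable.indicator measurable_inv measurableSet_Iio).comp measurable_norm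

lemma integrable_kap : Integrable kap := by
  unfold kap
  rw [integrable_fun_norm_addHaar (E := ℂ) (volume : Measure ℂ)
    (f := (Iio (1 : ℝ)).indicator (fun r => r⁻¹))]
  simp only [Complex.finrank_real_complex, Nat.add_one_sub_one, pow_one, smul_eq_mul]
  have h1 : EqOn ((Iio (1 : ℝ)).indicator (fun _ => (1 : ℝ)))
      (fun r : ℝ => r * (Iio (1 : ℝ)).indicator (fun r => r⁻¹) r) (Ioi 0) := by
    intro r hr
    have : r ≠ 0 := (mem_Ioi.1 hr).ne'
    by_cases h : r ∈ Iio (1 : ℝ) <;> simp [h, this]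
  refine IntegrableOn.congr_fun ?_ h1 measurableSet_Ioi
  rw [IntegrableOn, integrable_indicator_iff measurableSet_Iio, IntegrableOn,
    Measure.restrict_restrict measurableSet_Iio]
  rw [show Iio (1 : ℝ) ∩ Ioi 0 = Ioo 0 1 by ext; simp [and_comm]]
  exact integrable_const _

lemma exp_ker_le (ε : ℝ) (hε : 0 < ε) (hε1 : ε ≤ 1) (z y : ℂ) :
    Real.exp (ε * (-ker z y)) ≤ Real.exp (ε * Real.log (2 + ‖z‖)) * (1 + kap (z - y)) := by
  have hz := norm_nonneg z
  have hyn := norm_nonneg y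
  have hyz : ‖y‖ ≤ ‖z‖ + ‖z - y‖ := by
    have := norm_sub_le z (z - y); simpa using this
  have hk := kap_nonneg (z - y)
  rcases eq_or_lt_of_le (norm_nonneg (z - y)) with h | h
  · have h1 : -ker z y ≤ Real.log (2 + ‖z‖) := by
      unfold ker
      rw [← h, Real.log_zero]
      have := Real.log_le_log (by linarith : 0 < 1 + ‖y‖) (by linarith : 1 + ‖y‖ ≤ 2 + ‖z‖)
      linarith
    calc _ ≤ Real.exp (ε * Real.log (2 + ‖z‖)) * 1 := by rw [mul_one]; gcongr
      _ ≤ _ := by gcongr; linarith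
  · rcases le_or_gt 1 ‖z - y‖ with h1 | h1
    · have h2 : -ker z y ≤ Real.log (2 + ‖z‖) := by
        unfold ker
        have := Real.log_le_log (by linarith : 0 < 1 + ‖y‖)
          (by nlinarith : 1 + ‖y‖ ≤ (2 + ‖z‖) * ‖z - y‖)
        rw [Real.log_mul (by linarith) h.ne'] at this
        linarith
      calc _ ≤ Real.exp (ε * Real.log (2 + ‖z‖)) * 1 := by rw [mul_one]; gcongr
        _ ≤ _ := by gcongr; linarith
    · have h2 : Real.log (1 + ‖y‖) ≤ Real.log (2 + ‖z‖) :=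
        Real.log_le_log (by linarith) (by linarith)
      have h3 : Real.log ‖z - y‖ ≤ 0 := Real.log_nonpos h.le h1.le
      have h4 : kap (z - y) = ‖z - y‖⁻¹ := by simp [kap, h1]
      have h5 : ‖z - y‖⁻¹ = Real.exp (-Real.log ‖z - y‖) := by
        rw [Real.exp_neg, Real.exp_log h]
      calc _ ≤ Real.exp (ε * Real.log (2 + ‖z‖) + -Real.log ‖z - y‖) := by
            apply Real.exp_le_exp.2
            unfold ker
            nlinarith
        _ = Real.exp (ε * Real.log (2 + ‖z‖)) * kap (z - y) := by
            rw [Real.exp_add, h4, h5]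
        _ ≤ _ := by gcongr; linarith

lemma tail_small (f : ℂ → ℝ) (hf : Integrable f) (ε : ℝ) (hε : 0 < ε) :
    ∃ R0 : ℝ, 1 ≤ R0 ∧ ∫ y in {y : ℂ | R0 < ‖y‖}, f y < ε := by
  have h := tendsto_setIntegral_of_antitone (μ := (volume : Measure ℂ)) (f := f)
    (s := fun n : ℕ => {y : ℂ | (n : ℝ) < ‖y‖})
    (fun n => measurableSet_lt measurable_const measurable_norm)
    (by
      intro a b hab y hy
      simp only [mem_ofPred_eq] at hy ⊢
      exact lt_of_le_of_lt (by exact_mod_cast hab) hy) ⟨0, hf.integrableOn⟩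
  have he : (⋂ n : ℕ, {y : ℂ | (n : ℝ) < ‖y‖}) = ∅ := by
    ext y
    simp only [mem_iInter, mem_ofPred_eq, mem_empty_iff_false, iff_false, not_forall, not_lt]
    exact exists_nat_ge ‖y‖
  rw [he, Measure.restrict_empty, integral_zero_measure] at h
  obtain ⟨n, hn1, hn2⟩ := ((h.eventually (gt_mem_nhds hε)).and
    (Filter.eventually_ge_atTop 1)).exists
  exact ⟨n, by exact_mod_cast hn2, hn1⟩

end LiouvilleRep


namespace LiouvilleRep

lemma W_le (f : ℂ → ℝ) (hf : Integrable f) (hf0 : ∀ z, 0 ≤ f z) (z : ℂ)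
    (hlog : Integrable (fun y => Real.posLog (‖z - y‖⁻¹) * f y)) :
    ∫ y, ker z y * f y ≤ (∫ y, f y) * Real.log (1 + ‖z‖) := by
  rw [← integral_mul_const]
  apply integral_mono (integrable_ker_mul f hf z hlog) (hf.mul_const _)
  intro y
  simp only
  rw [mul_comm (f y)]
  exact mul_le_mul_of_nonneg_right (ker_le z y) (hf0 y)

lemma mass_gt (U f : ℂ → ℝ) (β c : ℝ) (hf : Integrable f) (hf0 : ∀ z, 0 ≤ f z)
    (hlog : ∀ x, Integrable (fun y => Real.posLog (‖x - y‖⁻¹) * f y))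
    (hF : Integrable (fun z => ‖z‖ ^ β * Real.exp (U z)))
    (hrep : ∀ x, U x = c - 1 / (2 * Real.pi) * ∫ y, ker x y * f y) :
    β + 2 < 1 / (2 * Real.pi) * ∫ y, f y := by
  set m := 1 / (2 * Real.pi) * ∫ y, f y with hm
  have hpi := Real.pi_pos
  have hm0 : 0 ≤ m := mul_nonneg (by positivity) (integral_nonneg hf0)
  suffices h : Integrable (pw (β - m)) by
    have := (integrable_pw _).1 h
    linarith
  refine Integrable.mono' (hF.const_mul (Real.exp (-c + m * Real.log 2))) ?_ ?_
  · unfold pw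
    exact ((Measurable.indicator (by fun_prop) measurableSet_Ioi).comp
      measurable_norm).aestronglyMeasurable
  · refine Filter.Eventually.of_forall (fun z => ?_)
    unfold pw
    by_cases hz : ‖z‖ ∈ Ioi (1 : ℝ)
    · rw [indicator_of_mem hz]
      have hz1 : 1 < ‖z‖ := hz
      have hz0 : 0 < ‖z‖ := by linarith
      have h1 := W_le f hf hf0 z (hlog z)
      have h2 : c - m * (Real.log 2 + Real.log ‖z‖) ≤ U z := by
        rw [hrep z]
        have h3 : Real.log (1 + ‖z‖) ≤ Real.log 2 + Real.log ‖z‖ := by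
          rw [← Real.log_mul (by norm_num) hz0.ne']
          exact Real.log_le_log (by linarith) (by linarith)
        have h4 := mul_le_mul_of_nonneg_left h1 (by positivity : 0 ≤ 1 / (2 * Real.pi))
        rw [← mul_assoc, ← hm] at h4
        have h5 := mul_le_mul_of_nonneg_left h3 hm0
        linarith
      rw [Real.norm_of_nonneg (by positivity), Real.rpow_def_of_pos hz0, Real.rpow_def_of_pos hz0,
        ← Real.exp_add, ← Real.exp_add]
      apply Real.exp_le_exp.2
      linarith
    · rw [indicator_of_notMem hz, norm_zero]
      positivity

/-- pointwise bound at points where the convolution with `kap` converges. -/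
lemma exp_U_le (f : ℂ → ℝ) (hf : Integrable f) (hf0 : ∀ z, 0 ≤ f z) (R0 ε : ℝ)
    (hR0 : 1 ≤ R0) (hε : 0 < ε) (hε1 : ε ≤ 1)
    (htail : ∫ y in {y : ℂ | R0 < ‖y‖}, f y < 2 * Real.pi * ε) (z : ℂ) (hz : 2 * R0 ≤ ‖z‖)
    (hlog : Integrable (fun y => Real.posLog (‖z - y‖⁻¹) * f y))
    (hkap : Integrable (fun y => f y * kap (z - y))) :
    Real.exp (- (1 / (2 * Real.pi) * ∫ y, ker z y * f y)) ≤
      Real.exp ((1 / (2 * Real.pi) * ∫ y, f y) * Real.log (2 * (1 + R0)) + ε * Real.log 2 +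
        (2 * ε - 1 / (2 * Real.pi) * ∫ y, f y) * Real.log ‖z‖) *
      (1 + ε⁻¹ * (∫ y, f y) + ε⁻¹ * ∫ y, f y * kap (z - y)) := by
  have hpi := Real.pi_pos
  have hpi3 := Real.pi_gt_three
  set a := 1 / (2 * Real.pi) with ha
  have ha0 : 0 < a := by positivity
  have ha1 : a ≤ 1 := by rw [ha, div_le_one (by positivity)]; linarith
  set S := {y : ℂ | R0 < ‖y‖} with hS
  have hSm : MeasurableSet S := measurableSet_lt measurable_const measurable_norm
  set w : ℂ → ℝ := S.indicator (fun y => a * f y) with hw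
  have hz0 : 0 < ‖z‖ := by linarith
  have hwf : ∀ y, w y ≤ f y := by
    intro y
    by_cases h : y ∈ S
    · rw [hw, indicator_of_mem h]; exact mul_le_of_le_one_left (hf0 y) ha1
    · rw [hw, indicator_of_notMem h]; exact hf0 y
  have hw0 : ∀ y, 0 ≤ w y := fun y => indicator_nonneg (fun y _ => mul_nonneg ha0.le (hf0 y)) y
  have hwi : Integrable w := (hf.const_mul a).indicator hSm
  have hki := integrable_ker_mul f hf z hlog
  have hkm : Measurable (fun y => ker z y) :=
    measurable_ker.comp (measurable_const.prodMk measurable_id)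
  have hhw : Integrable (fun y => -ker z y * w y) := by
    have := (hki.const_mul (-a)).indicator hSm
    refine this.congr (Filter.Eventually.of_forall fun y => ?_)
    by_cases h : y ∈ S
    · simp only [hw, indicator_of_mem h]; ring
    · simp only [hw, indicator_of_notMem h]; ring
  set P := Real.exp (ε * Real.log (2 + ‖z‖)) with hP
  have hdomi : Integrable (fun y => P * (f y + f y * kap (z - y))) := (hf.add hkap).const_mul _
  have hdom : ∀ y, Real.exp (ε * -ker z y) * w y ≤ P * (f y + f y * kap (z - y)) := by
    intro y
    have h1 := exp_ker_le ε hε hε1 z y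
    have hk := kap_nonneg (z - y)
    calc _ ≤ (P * (1 + kap (z - y))) * f y :=
          mul_le_mul h1 (hwf y) (hw0 y) (by positivity)
      _ = _ := by ring
  have hew : Integrable (fun y => Real.exp (ε * -ker z y) * w y) := by
    refine Integrable.mono' hdomi ?_ ?_
    · exact (Measurable.aestronglyMeasurable (by fun_prop)).mul hwi.1
    · refine Filter.Eventually.of_forall fun y => ?_
      rw [Real.norm_of_nonneg (mul_nonneg (Real.exp_pos _).le (hw0 y))]
      exact hdom y
  have hwint : ∫ y, w y = a * ∫ y in S, f y := by
    rw [hw, integral_indicator hSm, integral_const_mul]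
  have hν : ∫ y, w y ≤ ε := by
    rw [hwint]
    calc a * ∫ y in S, f y ≤ a * (2 * Real.pi * ε) := by gcongr
      _ = ε := by rw [ha]; field_simp
  have hJ := jensen_tail (fun y => -ker z y) w ε hε hw0 hwi hhw hew hν
  have hJ2 : ∫ y, Real.exp (ε * -ker z y) * w y ≤
      P * ((∫ y, f y) + ∫ y, f y * kap (z - y)) := by
    rw [← integral_add hf hkap, ← integral_const_mul]
    exact integral_mono hew hdomi hdom
  have hin : -(a * ∫ y in Sᶜ, ker z y * f y) ≤
      (a * ∫ y in Sᶜ, f y) * (Real.log (2 * (1 + R0)) - Real.log ‖z‖) := by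
    have : ∫ y in Sᶜ, -(ker z y * f y) ≤
        ∫ y in Sᶜ, f y * (Real.log (2 * (1 + R0)) - Real.log ‖z‖) := by
      apply setIntegral_mono_on hki.neg.integrableOn (hf.mul_const _).integrableOn hSm.compl
      intro y hy
      have hy1 : ‖y‖ ≤ R0 := by simpa [hS] using hy
      have h1 : ‖z‖ / 2 ≤ ‖z - y‖ := by
        have := norm_sub_norm_le z y
        linarith
      have h2 : -ker z y ≤ Real.log (2 * (1 + R0)) - Real.log ‖z‖ := by
        unfold ker
        have e1 := Real.log_le_log (by positivity) h1
        have e2 := Real.log_le_log (by positivity : 0 < 1 + ‖y‖) (by linarith : 1 + ‖y‖ ≤ 1 + R0)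
        rw [Real.log_div hz0.ne' (by norm_num)] at e1
        rw [Real.log_mul (by norm_num) (by positivity)]
        linarith
      have := mul_le_mul_of_nonneg_left h2 (hf0 y)
      have e : (-fun y => ker z y * f y) y = f y * -ker z y := by simp [mul_comm]
      rw [e]; exact this
    rw [integral_neg, integral_mul_const] at this
    have := mul_le_mul_of_nonneg_left this ha0.le
    linarith
  have hsplit := integral_add_compl hSm hki
  have hsplit2 := integral_add_compl hSm hf
  have hG : ∫ y, -ker z y * w y = -(a * ∫ y in S, ker z y * f y) := by
    rw [← integral_const_mul, ← integral_neg, ← integral_indicator hSm]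
    congr 1
    ext y
    by_cases h : y ∈ S
    · simp only [hw, indicator_of_mem h]; ring
    · simp only [hw, indicator_of_notMem h]; ring
  rw [hG] at hJ
  have hL2 : 0 ≤ Real.log ‖z‖ := Real.log_nonneg (by linarith)
  have hLR : 0 ≤ Real.log (2 * (1 + R0)) := Real.log_nonneg (by linarith)
  have hPle : P ≤ Real.exp (ε * Real.log 2 + ε * Real.log ‖z‖) := by
    apply Real.exp_le_exp.2
    rw [← mul_add, ← Real.log_mul (by norm_num) hz0.ne']
    have : 2 + ‖z‖ ≤ 2 * ‖z‖ := by linarith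
    gcongr
  have hI0 : 0 ≤ ∫ y, f y := integral_nonneg hf0
  have hIk : 0 ≤ ∫ y, f y * kap (z - y) :=
    integral_nonneg fun y => mul_nonneg (hf0 y) (kap_nonneg _)
  have hIS : 0 ≤ ∫ y in S, f y := integral_nonneg hf0
  have hIν : a * ∫ y in S, f y ≤ ε := hwint ▸ hν
  have hP1 : 1 ≤ P := Real.one_le_exp (mul_nonneg hε.le (Real.log_nonneg (by linarith)))
  have hout : Real.exp (-(a * ∫ y in S, ker z y * f y)) ≤
      P * (1 + ε⁻¹ * (∫ y, f y) + ε⁻¹ * ∫ y, f y * kap (z - y)) := by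
    refine hJ.trans ?_
    have := mul_le_mul_of_nonneg_left hJ2 (inv_pos.2 hε).le
    nlinarith
  rw [← hsplit, mul_add, neg_add, Real.exp_add, mul_comm]
  have hexp : Real.exp (-(a * ∫ y in Sᶜ, ker z y * f y)) * P ≤
      Real.exp ((a * ∫ y, f y) * Real.log (2 * (1 + R0)) + ε * Real.log 2 +
        (2 * ε - a * ∫ y, f y) * Real.log ‖z‖) := by
    calc _ ≤ Real.exp ((a * ∫ y in Sᶜ, f y) * (Real.log (2 * (1 + R0)) - Real.log ‖z‖)) *
          Real.exp (ε * Real.log 2 + ε * Real.log ‖z‖) := by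
          gcongr
      _ ≤ _ := by
          rw [← Real.exp_add]
          apply Real.exp_le_exp.2
          rw [← hsplit2]
          have k1 : 0 ≤ (a * ∫ y in S, f y) * Real.log (2 * (1 + R0)) := by positivity
          have k2 : (a * ∫ y in S, f y) * Real.log ‖z‖ ≤ ε * Real.log ‖z‖ := by gcongr
          nlinarith
  calc _ ≤ Real.exp (-(a * ∫ y in Sᶜ, ker z y * f y)) *
        (P * (1 + ε⁻¹ * (∫ y, f y) + ε⁻¹ * ∫ y, f y * kap (z - y))) := by gcongr
    _ = (Real.exp (-(a * ∫ y in Sᶜ, ker z y * f y)) * P) *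
        (1 + ε⁻¹ * (∫ y, f y) + ε⁻¹ * ∫ y, f y * kap (z - y)) := by ring
    _ ≤ _ := by gcongr

lemma log_integrable (U f : ℂ → ℝ) (β c : ℝ) (hf : Integrable f) (hf0 : ∀ z, 0 ≤ f z)
    (hlog : ∀ x, Integrable (fun y => Real.posLog (‖x - y‖⁻¹) * f y))
    (hF : Integrable (fun z => ‖z‖ ^ β * Real.exp (U z)))
    (hrep : ∀ x, U x = c - 1 / (2 * Real.pi) * ∫ y, ker x y * f y) :
    Integrable (fun z => Real.log (1 + ‖z‖) * (‖z‖ ^ β * Real.exp (U z))) := by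
  have hmass := mass_gt U f β c hf hf0 hlog hF hrep
  have hpi := Real.pi_pos
  set m := 1 / (2 * Real.pi) * ∫ y, f y with hm
  set δ := m - β - 2 with hδ
  have hδ0 : 0 < δ := by rw [hδ]; linarith
  set ε := min 1 (δ / 4) with hε_def
  have hε : 0 < ε := lt_min one_pos (by positivity)
  have hε1 : ε ≤ 1 := min_le_left _ _
  have hε2 : ε ≤ δ / 4 := min_le_right _ _
  obtain ⟨R0, hR0, htail⟩ := tail_small f hf (2 * Real.pi * ε) (by positivity)
  have hconvp : Integrable (fun p : ℂ × ℂ => f p.2 * kap (p.1 - p.2))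
      ((volume : Measure ℂ).prod volume) :=
    Integrable.convolution_integrand (ContinuousLinearMap.mul ℝ ℝ) hf integrable_kap
  have hae : ∀ᵐ z : ℂ, Integrable (fun y => f y * kap (z - y)) := hconvp.prod_right_ae
  have hconv : Integrable (fun z : ℂ => ∫ y, f y * kap (z - y)) := hconvp.integral_prod_left
  set K1 := 1 + ε⁻¹ * ∫ y, f y with hK1
  have hI0 : 0 ≤ ∫ y, f y := integral_nonneg hf0
  have hK1p : 0 < K1 := by positivity
  set K2 := (1 + 4 / δ) * Real.exp (c + m * Real.log (2 * (1 + R0)) + ε * Real.log 2) with hK2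
  have hK2p : 0 < K2 := by positivity
  have hpwi : Integrable (pw (-2 - δ / 4)) := (integrable_pw _).2 (by linarith)
  have hD : Integrable (fun z => Real.log (1 + 2 * R0) * (‖z‖ ^ β * Real.exp (U z)) +
      K2 * (K1 * pw (-2 - δ / 4) z + ε⁻¹ * ∫ y, f y * kap (z - y))) :=
    (hF.const_mul _).add (((hpwi.const_mul _).add (hconv.const_mul _)).const_mul _)
  refine Integrable.mono' hD ?_ ?_
  · exact (Measurable.aestronglyMeasurable (by fun_prop)).mul hF.1
  · filter_upwards [hae] with z hz
    have hzn := norm_nonneg z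
    have hl0 : 0 ≤ Real.log (1 + ‖z‖) := Real.log_nonneg (by linarith)
    have hF0 : 0 ≤ ‖z‖ ^ β * Real.exp (U z) := by positivity
    have hlR : 0 ≤ Real.log (1 + 2 * R0) := Real.log_nonneg (by linarith)
    have hIk : 0 ≤ ∫ y, f y * kap (z - y) :=
      integral_nonneg fun y => mul_nonneg (hf0 y) (kap_nonneg _)
    have hpw0 : 0 ≤ pw (-2 - δ / 4) z := by
      unfold pw
      exact indicator_nonneg (fun r hr => Real.rpow_nonneg (zero_le_one.trans (mem_Ioi.1 hr).le) _) _
    rw [Real.norm_of_nonneg (mul_nonneg hl0 hF0)]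
    rcases le_or_gt (2 * R0) ‖z‖ with h | h
    · have hz0 : 0 < ‖z‖ := by linarith
      have hE := exp_U_le f hf hf0 R0 ε hR0 hε hε1 htail z h (hlog z) hz
      rw [← hm, ← hK1] at hE
      set t := Real.log ‖z‖ with ht
      have ht0 : 0 ≤ t := Real.log_nonneg (by linarith)
      set Q := K1 + ε⁻¹ * ∫ y, f y * kap (z - y) with hQ
      have hQ0 : 0 ≤ Q := by positivity
      have hU : Real.exp (U z) = Real.exp c * Real.exp (-(1 / (2 * Real.pi) * ∫ y, ker z y * f y)) := by
        rw [← Real.exp_add, hrep z]; ring_nf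
      have hpow : ‖z‖ ^ β = Real.exp (β * t) := by
        rw [Real.rpow_def_of_pos hz0, mul_comm]
      have hlogb : Real.log (1 + ‖z‖) ≤ (1 + 4 / δ) * Real.exp (δ / 4 * t) := by
        have h1 : Real.log (1 + ‖z‖) ≤ Real.log 2 + t := by
          rw [ht, ← Real.log_mul (by norm_num) hz0.ne']
          exact Real.log_le_log (by linarith) (by linarith)
        have h2 : Real.log 2 ≤ 1 := by
          have := Real.log_two_lt_d9; linarith
        have h3 := Real.add_one_le_exp (δ / 4 * t)
        have h4 : 1 ≤ Real.exp (δ / 4 * t) := Real.one_le_exp (by positivity)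
        have h5 : t ≤ 4 / δ * Real.exp (δ / 4 * t) := by
          calc t = 4 / δ * (δ / 4 * t) := by field_simp
            _ ≤ _ := by gcongr; linarith
        linarith
      have hpwz : pw (-2 - δ / 4) z = Real.exp ((-2 - δ / 4) * t) := by
        unfold pw
        rw [indicator_of_mem (show ‖z‖ ∈ Ioi (1 : ℝ) from by simp only [mem_Ioi]; linarith),
          Real.rpow_def_of_pos hz0, mul_comm]
      have hpw1 : pw (-2 - δ / 4) z ≤ 1 := by
        rw [hpwz]
        apply Real.exp_le_one_iff.2
        nlinarith
      have hmain : Real.log (1 + ‖z‖) * (‖z‖ ^ β * Real.exp (U z)) ≤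
          K2 * pw (-2 - δ / 4) z * Q := by
        calc _ ≤ ((1 + 4 / δ) * Real.exp (δ / 4 * t)) * (Real.exp (β * t) *
              (Real.exp c * (Real.exp (m * Real.log (2 * (1 + R0)) + ε * Real.log 2 +
                (2 * ε - m) * t) * Q))) := by
              rw [hpow, hU]
              gcongr
          _ = (1 + 4 / δ) * Real.exp ((c + m * Real.log (2 * (1 + R0)) + ε * Real.log 2) +
              (δ / 4 + β + 2 * ε - m) * t) * Q := by
              have : Real.exp ((c + m * Real.log (2 * (1 + R0)) + ε * Real.log 2) +
                (δ / 4 + β + 2 * ε - m) * t) = Real.exp (δ / 4 * t) * Real.exp (β * t) *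
                Real.exp c * Real.exp (m * Real.log (2 * (1 + R0)) + ε * Real.log 2 +
                (2 * ε - m) * t) := by
                rw [← Real.exp_add, ← Real.exp_add, ← Real.exp_add]
                ring_nf
              rw [this]; ring
          _ ≤ (1 + 4 / δ) * Real.exp ((c + m * Real.log (2 * (1 + R0)) + ε * Real.log 2) +
              (-2 - δ / 4) * t) * Q := by
              have : δ / 4 + β + 2 * ε - m ≤ -2 - δ / 4 := by linarith
              gcongr
          _ = _ := by rw [hpwz, hK2, Real.exp_add]; ring
      have h6 : pw (-2 - δ / 4) z * Q ≤
          K1 * pw (-2 - δ / 4) z + ε⁻¹ * ∫ y, f y * kap (z - y) := by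
        have : 0 ≤ ε⁻¹ * ∫ y, f y * kap (z - y) := by positivity
        rw [hQ]
        nlinarith
      have h7 := mul_le_mul_of_nonneg_left h6 hK2p.le
      have h8 := mul_nonneg hlR hF0
      linarith
    · have h1 : Real.log (1 + ‖z‖) ≤ Real.log (1 + 2 * R0) :=
        Real.log_le_log (by linarith) (by linarith)
      have h2 := mul_le_mul_of_nonneg_right h1 hF0
      have h3 : 0 ≤ K2 * (K1 * pw (-2 - δ / 4) z + ε⁻¹ * ∫ y, f y * kap (z - y)) := by positivity
      linarith

end LiouvilleRep


namespace LiouvilleRep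

lemma second_deriv_along (U : ℂ → ℝ) (D1 : ℂ → ℂ →L[ℝ] ℝ) (D2 : ℂ → ℂ →L[ℝ] ℂ →L[ℝ] ℝ)
    (hD1 : ∀ z, z ≠ 0 → HasFDerivAt U (D1 z) z)
    (hD2 : ∀ z, z ≠ 0 → HasFDerivAt D1 (D2 z) z)
    (γ : ℝ → ℂ) (v : ℂ) (hγ : ∀ s, HasDerivAt γ v s) (s0 : ℝ) (h0 : γ s0 ≠ 0) :
    deriv (deriv (fun s => U (γ s))) s0 = D2 (γ s0) v v := by
  have hc : ContinuousAt γ s0 := (hγ s0).continuousAt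
  have hev : ∀ᶠ s in nhds s0, γ s ≠ 0 := hc.eventually_ne h0
  have h1 : deriv (fun s => U (γ s)) =ᶠ[nhds s0] fun s => D1 (γ s) v := by
    filter_upwards [hev] with s hs
    exact ((hD1 _ hs).comp_hasDerivAt s (hγ s)).deriv
  rw [h1.deriv_eq]
  have h2 : HasDerivAt (fun s => D1 (γ s)) (D2 (γ s0) v) s0 :=
    (hD2 _ h0).comp_hasDerivAt s0 (hγ s0)
  have h3 := h2.clm_apply (hasDerivAt_const s0 v)
  simpa using h3.deriv

lemma deriv_data (U : ℂ → ℝ) (hU : ∀ z, z ≠ 0 → ContDiffAt ℝ 2 U z) :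
    (∀ z, z ≠ 0 → HasFDerivAt U (fderiv ℝ U z) z) ∧
    (∀ z, z ≠ 0 → HasFDerivAt (fderiv ℝ U) (fderiv ℝ (fderiv ℝ U) z) z) ∧
    ContinuousOn (fderiv ℝ (fderiv ℝ U)) {0}ᶜ := by
  have h1 : ∀ z, z ≠ 0 → ContDiffAt ℝ 1 (fderiv ℝ U) z := fun z hz =>
    (hU z hz).fderiv_right (m := 1) (by norm_num)
  refine ⟨fun z hz => ((hU z hz).differentiableAt (by norm_num)).hasFDerivAt,
    fun z hz => ((h1 z hz).differentiableAt (by norm_num)).hasFDerivAt, fun z hz => ?_⟩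
  exact (((h1 z hz).fderiv_right (m := 0) (by norm_num)).continuousAt).continuousWithinAt

lemma F_log (U : ℂ → ℝ) (hU : Continuous U) (β : ℝ) (hβ : -2 < β)
    (hF : Integrable (fun z => ‖z‖ ^ β * Real.exp (U z))) (x : ℂ) :
    Integrable (fun y => Real.posLog (‖x - y‖⁻¹) * (‖y‖ ^ β * Real.exp (U y))) := by
  have hmeas : AEStronglyMeasurable
      (fun y => Real.posLog (‖x - y‖⁻¹) * (‖y‖ ^ β * Real.exp (U y))) volume :=
    (Measurable.aestronglyMeasurable (by fun_prop)).mul hF.1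
  by_cases hx : x = 0
  · subst hx
    obtain ⟨M, hM⟩ := (isCompact_closedBall (0 : ℂ) 1).exists_bound_of_continuousOn
      (f := fun y => Real.exp (U y)) (by fun_prop)
    refine Integrable.mono' ((integrable_rpow_posLog β hβ).const_mul M) hmeas ?_
    refine Filter.Eventually.of_forall fun y => ?_
    rw [Real.norm_of_nonneg (mul_nonneg Real.posLog_nonneg (by positivity))]
    rw [zero_sub, norm_neg]
    have hp : 0 ≤ Real.posLog (‖y‖⁻¹) := Real.posLog_nonneg
    rcases le_or_gt ‖y‖ 1 with h | h
    · have h1 := hM y (by simpa using h)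
      rw [Real.norm_of_nonneg (Real.exp_pos _).le] at h1
      calc _ = Real.exp (U y) * (‖y‖ ^ β * Real.posLog (‖y‖⁻¹)) := by ring
        _ ≤ _ := by gcongr
    · have : Real.posLog (‖y‖⁻¹) = 0 := by
        rw [Real.posLog_eq_zero_iff, abs_of_nonneg (by positivity)]
        exact inv_le_one_of_one_le₀ h.le
      simp [this]
  · have hd : 0 < ‖x‖ := norm_pos_iff.2 hx
    obtain ⟨M, hM⟩ := (isCompact_closedBall x (‖x‖ / 2)).exists_bound_of_continuousOn
      (f := fun y => ‖y‖ ^ β * Real.exp (U y)) (by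
        refine ContinuousOn.mul ?_ (by fun_prop)
        refine ContinuousOn.rpow_const (by fun_prop) ?_
        intro y hy
        left
        rw [Metric.mem_closedBall, dist_eq_norm] at hy
        intro h0
        rw [norm_eq_zero] at h0
        subst h0
        rw [zero_sub, norm_neg] at hy
        linarith)
    refine Integrable.mono' (((integrable_posLog_sub x).const_mul |M|).add
      (hF.const_mul (Real.posLog (2 / ‖x‖)))) hmeas ?_
    refine Filter.Eventually.of_forall fun y => ?_
    rw [Real.norm_of_nonneg (mul_nonneg Real.posLog_nonneg (by positivity))]
    simp only [Pi.add_apply]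
    have hp : 0 ≤ Real.posLog (‖x - y‖⁻¹) := Real.posLog_nonneg
    have hp2 : 0 ≤ Real.posLog (2 / ‖x‖) := Real.posLog_nonneg
    have hF0 : 0 ≤ ‖y‖ ^ β * Real.exp (U y) := by positivity
    rw [norm_sub_rev y x]
    rcases le_or_gt ‖x - y‖ (‖x‖ / 2) with h | h
    · have h1 := hM y (by rw [Metric.mem_closedBall, dist_eq_norm, norm_sub_rev]; exact h)
      rw [Real.norm_of_nonneg hF0] at h1
      have h2 := mul_le_mul_of_nonneg_left (h1.trans (le_abs_self M)) hp
      have h3 := mul_nonneg hp2 hF0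
      linarith
    · have h1 : Real.posLog (‖x - y‖⁻¹) ≤ Real.posLog (2 / ‖x‖) := by
        apply Real.posLog_le_posLog (by positivity)
        rw [← inv_div]
        exact inv_anti₀ (by positivity) h.le
      have h2 := mul_le_mul_of_nonneg_right h1 hF0
      have h3 := mul_nonneg (abs_nonneg M) hp
      linarith

lemma nrm_eq (z : ℂ) : nrm (z.re, z.im) = ‖z‖ := by
  rw [nrm, Complex.norm_eq_sqrt_sq_add_sq]

lemma complex_main {n : ℕ} (A : Matrix (Fin n) (Fin n) ℝ) (β : Fin n → ℝ)
    (hA : ∀ i j, 0 ≤ A i j) (hβ : ∀ i, -2 < β i) (U : Fin n → ℂ → ℝ)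
    (hU : ∀ i, Continuous (U i)) (hU2 : ∀ i z, z ≠ 0 → ContDiffAt ℝ 2 (U i) z)
    (hlap : ∀ i z, z ≠ 0 → fderiv ℝ (fderiv ℝ (U i)) z 1 1 +
      fderiv ℝ (fderiv ℝ (U i)) z Complex.I Complex.I =
      -∑ j, A i j * (‖z‖ ^ β j * Real.exp (U j z)))
    (hF : ∀ i, Integrable (fun z : ℂ => ‖z‖ ^ β i * Real.exp (U i z))) (i : Fin n) :
    ∃ c, ∀ x, U i x = -(1 / (2 * Real.pi)) *
      (∫ y : ℂ, Real.log ‖x - y‖ * ∑ j, A i j * (‖y‖ ^ β j * Real.exp (U j y))) + c := by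
  have hf : ∀ i, Integrable (fun z : ℂ => ∑ j, A i j * (‖z‖ ^ β j * Real.exp (U j z))) :=
    fun i => integrable_finsetSum _ fun j _ => (hF j).const_mul _
  have hf0 : ∀ i (z : ℂ), 0 ≤ ∑ j, A i j * (‖z‖ ^ β j * Real.exp (U j z)) := fun i z =>
    Finset.sum_nonneg fun j _ => mul_nonneg (hA i j) (by positivity)
  have hlog : ∀ i (x : ℂ), Integrable (fun y => Real.posLog (‖x - y‖⁻¹) *
      ∑ j, A i j * (‖y‖ ^ β j * Real.exp (U j y))) := by
    intro i x
    have : Integrable (fun y => ∑ j, A i j * (Real.posLog (‖x - y‖⁻¹) *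
      (‖y‖ ^ β j * Real.exp (U j y)))) :=
      integrable_finsetSum _ fun j _ => (F_log (U j) (hU j) (β j) (hβ j) (hF j) x).const_mul _
    refine this.congr (Filter.Eventually.of_forall fun y => ?_)
    simp only [Finset.mul_sum]
    exact Finset.sum_congr rfl fun j _ => by ring
  have hrep : ∀ i, ∃ c, ∀ x, U i x = c - 1 / (2 * Real.pi) *
      ∫ y, ker x y * ∑ j, A i j * (‖y‖ ^ β j * Real.exp (U j y)) := by
    intro i
    obtain ⟨d1, d2, d3⟩ := deriv_data (U i) (hU2 i)
    refine repr_ker (U i) _ (fun z => ‖z‖ ^ β i * Real.exp (U i z)) _ _ (hU i) d1 d2 d3 (hlap i)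
      (hf i) (hf0 i) (hlog i) (hF i) (fun z => by positivity) |β i| (abs_nonneg _) ?_
    intro z hz
    have hz0 : 0 < ‖z‖ := by linarith
    have e1 : ‖z‖ ^ β i * Real.exp (U i z) = Real.exp (Real.log ‖z‖ * β i + U i z) := by
      rw [Real.rpow_def_of_pos hz0, Real.exp_add]
    rw [e1]
    have h1 := Real.add_one_le_exp (Real.log ‖z‖ * β i + U i z)
    have h2 : 0 ≤ Real.log ‖z‖ := Real.log_nonneg hz
    have h3 : Real.log ‖z‖ ≤ Real.log (1 + ‖z‖) := Real.log_le_log hz0 (by linarith)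
    have h4 : -(Real.log ‖z‖ * β i) ≤ |β i| * Real.log (1 + ‖z‖) := by
      calc -(Real.log ‖z‖ * β i) = -β i * Real.log ‖z‖ := by ring
        _ ≤ |β i| * Real.log ‖z‖ := by gcongr; exact neg_le_abs _
        _ ≤ _ := by gcongr
    linarith
  have hlogF : ∀ j, Integrable (fun z => Real.log (1 + ‖z‖) * (‖z‖ ^ β j * Real.exp (U j z))) := by
    intro j
    obtain ⟨c, hc⟩ := hrep j
    exact log_integrable (U j) _ (β j) c (hf j) (hf0 j) (hlog j) (hF j) hc
  have hlogf : Integrable (fun y : ℂ => Real.log (1 + ‖y‖) *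
      ∑ j, A i j * (‖y‖ ^ β j * Real.exp (U j y))) := by
    have : Integrable (fun y : ℂ => ∑ j, A i j * (Real.log (1 + ‖y‖) *
      (‖y‖ ^ β j * Real.exp (U j y)))) :=
      integrable_finsetSum _ fun j _ => (hlogF j).const_mul _
    refine this.congr (Filter.Eventually.of_forall fun y => ?_)
    simp only [Finset.mul_sum]
    exact Finset.sum_congr rfl fun j _ => by ring
  obtain ⟨c, hc⟩ := hrep i
  refine ⟨c + 1 / (2 * Real.pi) * ∫ y : ℂ, Real.log (1 + ‖y‖) *
      ∑ j, A i j * (‖y‖ ^ β j * Real.exp (U j y)), fun x => ?_⟩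
  rw [hc x]
  have : ∫ y : ℂ, Real.log ‖x - y‖ * ∑ j, A i j * (‖y‖ ^ β j * Real.exp (U j y)) =
      (∫ y, ker x y * ∑ j, A i j * (‖y‖ ^ β j * Real.exp (U j y))) +
      ∫ y : ℂ, Real.log (1 + ‖y‖) * ∑ j, A i j * (‖y‖ ^ β j * Real.exp (U j y)) := by
    rw [← integral_add (integrable_ker_mul _ (hf i) x (hlog i x)) hlogf]
    congr 1
    ext y
    unfold ker
    ring
  rw [this]
  ring

end LiouvilleRep

theorem integral_representation_of_solutions {n : ℕ} (hn : 0 < n)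
    (A : Matrix (Fin n) (Fin n) ℝ) (β : Fin n → ℝ)
    (hA : H1 A) (hβ : ∀ i, -2 < β i)
    (u : Fin n → ℝ × ℝ → ℝ) (hu : PDESolution A β u) :
    ∃ c : Fin n → ℝ, ∀ i, ∀ x : ℝ × ℝ,
      u i x = -(1 / (2 * Real.pi)) *
          (∫ y : ℝ × ℝ, Real.log (nrm (x - y)) * ∑ j, A i j * nrm y ^ β j * Real.exp (u j y))
        + c i := by
  obtain ⟨hc, hd, hp, hi⟩ := hu
  set U : Fin n → ℂ → ℝ := fun i z => u i (z.re, z.im) with hUdef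
  have hne : ∀ z : ℂ, z ≠ 0 → ((z.re, z.im) : ℝ × ℝ) ≠ 0 := by
    intro z hz h
    apply hz
    rw [Prod.mk_eq_zero] at h
    exact Complex.ext h.1 h.2
  have hU : ∀ i, Continuous (U i) := fun i =>
    (hc i).comp (Complex.continuous_re.prodMk Complex.continuous_im)
  have hU2 : ∀ i z, z ≠ 0 → ContDiffAt ℝ 2 (U i) z := by
    intro i z hz
    have h1 : ContDiffAt ℝ 2 (fun z : ℂ => ((z.re, z.im) : ℝ × ℝ)) z :=
      (Complex.reCLM.contDiff.contDiffAt).prodMk (Complex.imCLM.contDiff.contDiffAt)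
    exact ContDiffAt.comp z (hd i _ (hne z hz)) h1
  have hlap : ∀ i z, z ≠ 0 → fderiv ℝ (fderiv ℝ (U i)) z 1 1 +
      fderiv ℝ (fderiv ℝ (U i)) z Complex.I Complex.I =
      -∑ j, A i j * (‖z‖ ^ β j * Real.exp (U j z)) := by
    intro i z hz
    obtain ⟨d1, d2, d3⟩ := LiouvilleRep.deriv_data (U i) (hU2 i)
    have h := hp i _ (hne z hz)
    have hγ1 : ∀ s : ℝ, HasDerivAt (fun s : ℝ => (s : ℂ) + z.im * Complex.I) 1 s := fun s =>
      (Complex.ofRealCLM.hasDerivAt (x := s)).add_const _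
    have hγ2 : ∀ s : ℝ, HasDerivAt (fun s : ℝ => (z.re : ℂ) + s * Complex.I) Complex.I s := by
      intro s
      simpa using ((Complex.ofRealCLM.hasDerivAt (x := s)).mul_const Complex.I).const_add (z.re : ℂ)
    have k1 := LiouvilleRep.second_deriv_along (U i) _ _ d1 d2 _ _ hγ1 z.re
      (by rw [Complex.re_add_im]; exact hz)
    have k2 := LiouvilleRep.second_deriv_along (U i) _ _ d1 d2 _ _ hγ2 z.im
      (by rw [Complex.re_add_im]; exact hz)
    simp only [Complex.re_add_im] at k1 k2
    rw [← k1, ← k2]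
    simp only [lap, LiouvilleRep.nrm_eq] at h
    simp only [hUdef, Complex.add_re, Complex.add_im, Complex.ofReal_re, Complex.ofReal_im,
      Complex.mul_re, Complex.mul_im, Complex.I_re, Complex.I_im, mul_zero, mul_one, zero_mul,
      sub_zero, add_zero, zero_add, sub_self]
    simp only [mul_assoc] at h
    linarith
  have mp := Complex.volume_preserving_equiv_real_prod
  have hF : ∀ i, Integrable (fun z : ℂ => ‖z‖ ^ β i * Real.exp (U i z)) := by
    intro i
    have := (mp.integrable_comp_emb
      Complex.measurableEquivRealProd.measurableEmbedding).2 (hi i)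
    refine this.congr (Filter.Eventually.of_forall fun z => ?_)
    simp only [Function.comp, Complex.measurableEquivRealProd_apply, LiouvilleRep.nrm_eq, hUdef]
  have hm := fun i => LiouvilleRep.complex_main A β hA.2.1 hβ U hU hU2 hlap hF i
  choose c hcc using hm
  refine ⟨c, fun i x => ?_⟩
  have h := hcc i ⟨x.1, x.2⟩
  have hHint0 := mp.integral_comp Complex.measurableEquivRealProd.measurableEmbedding
    (fun y : ℝ × ℝ => Real.log (nrm (x - y)) * ∑ j, A i j * nrm y ^ β j * Real.exp (u j y))
  rw [← hHint0]
  have e : U i ⟨x.1, x.2⟩ = u i x := rfl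
  rw [e] at h
  rw [h]
  congr 2
  apply integral_congr_ae
  refine Filter.Eventually.of_forall fun y => ?_
  simp only [Complex.measurableEquivRealProd_apply, LiouvilleRep.nrm_eq, hUdef, mul_assoc]
  rw [← LiouvilleRep.nrm_eq]
  rfl
end

section
/- Let A satisfy (H1), β_1,...,β_n > -2, and let u be a finite-energy radial solution of the singular Liouville system. If φ = (φ_1,...,φ_n) satisfies the linearized system (r φ_i'(r))' + Σ_{j=1}^n a_{ij} r^{β_j+1} e^{u_j(r)} φ_j(r) = 0 for r > 0 and all i ∈ I, then φ_i(r) = O(log r) as r → ∞, for every i ∈ I. -/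
open Set MeasureTheory

/-- Radial solution of the singular Liouville system, with the finite-energy condition. -/
def RadialSolution {n : ℕ} (A : Matrix (Fin n) (Fin n) ℝ) (β : Fin n → ℝ)
    (u : Fin n → ℝ → ℝ) : Prop :=
  (∀ i, ∀ r > (0:ℝ), ContDiffAt ℝ 2 (u i) r) ∧
  (∀ i, ∀ r > (0:ℝ),
    deriv (deriv (u i)) r + (1 / r) * deriv (u i) r
      + ∑ j, A i j * r ^ β j * Real.exp (u j r) = 0) ∧
  (∀ i, IntegrableOn (fun r : ℝ => r ^ (β i + 1) * Real.exp (u i r)) (Set.Ioi 0))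

/-- Solution of the linearized system (rφ_i')' + Σ_j a_{ij} r^{β_j+1} e^{u_j} φ_j = 0. -/
def LinearizedSolution {n : ℕ} (A : Matrix (Fin n) (Fin n) ℝ) (β : Fin n → ℝ)
    (u φ : Fin n → ℝ → ℝ) : Prop :=
  (∀ i, ∀ r > (0:ℝ), ContDiffAt ℝ 2 (φ i) r) ∧
  (∀ i, ∀ r > (0:ℝ),
    deriv (fun s => s * deriv (φ i) s) r
      + ∑ j, A i j * r ^ (β j + 1) * Real.exp (u j r) * φ j r = 0)


open Filter Topology

/-- Decay of the weights `r^(β_j+1) e^{u_j}`. -/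
lemma weight_decay {n : ℕ} (A : Matrix (Fin n) (Fin n) ℝ) (β : Fin n → ℝ)
    (hA : ∀ i j, 0 ≤ A i j)
    (u : Fin n → ℝ → ℝ) (hu : RadialSolution A β u) (j : Fin n) :
    ∃ q > (0:ℝ), ∃ K > (0:ℝ), ∃ R ≥ (1:ℝ), ∀ r ≥ R,
      r ^ (β j + 1) * Real.exp (u j r) ≤ K * r ^ (-q) / r := by
  obtain ⟨h1, h2, h3⟩ := hu
  have hd1 : ∀ r > (0:ℝ), HasDerivAt (u j) (deriv (u j) r) r := fun r hr =>
    ((h1 j r hr).differentiableAt (by norm_num)).hasDerivAt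
  have hd2 : ∀ r > (0:ℝ), HasDerivAt (deriv (u j)) (deriv (deriv (u j)) r) r := fun r hr => by
    have h : ContDiffAt ℝ 1 (deriv (u j)) r := by
      have := (h1 j r hr).derivWithin (m := 1) (by norm_num)
      simpa using this
    exact (h.differentiableAt (by norm_num)).hasDerivAt
  set v : ℝ → ℝ := fun r => (β j + 2) * Real.log r + u j r with hv
  set Q : ℝ → ℝ := fun r => β j + 2 + r * deriv (u j) r with hQ
  have hvd : ∀ r > (0:ℝ), HasDerivAt v (Q r / r) r := fun r hr => by
    have := ((Real.hasDerivAt_log hr.ne').const_mul (β j + 2)).add (hd1 r hr)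
    refine this.congr_deriv ?_
    simp only [hQ]; field_simp
  have hQd : ∀ r > (0:ℝ), HasDerivAt Q (deriv (u j) r + r * deriv (deriv (u j)) r) r :=
    fun r hr => by
    have := ((hasDerivAt_id r).mul (hd2 r hr)).const_add (β j + 2)
    refine this.congr_deriv ?_
    simp
  have hQanti : AntitoneOn Q (Ici 1) := by
    apply antitoneOn_of_deriv_nonpos (convex_Ici 1)
    · intro x hx; exact (hQd x (by simp at hx; linarith)).continuousAt.continuousWithinAt
    · intro x hx
      simp at hx
      exact (hQd x (by linarith)).differentiableAt.differentiableWithinAt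
    · intro x hx
      simp at hx
      have hx0 : 0 < x := by linarith
      rw [(hQd x hx0).deriv]
      have e := h2 j x hx0
      have hs : 0 ≤ ∑ k, A j k * x ^ β k * Real.exp (u k x) :=
        Finset.sum_nonneg fun k _ => by have := hA j k; positivity
      have : deriv (u j) x + x * deriv (deriv (u j)) x
          = - (x * ∑ k, A j k * x ^ β k * Real.exp (u k x)) := by
        have : x * (deriv (deriv (u j)) x + (1 / x) * deriv (u j) x
          + ∑ k, A j k * x ^ β k * Real.exp (u k x)) = 0 := by rw [e, mul_zero]
        have e2 : x * ((1 / x) * deriv (u j) x) = deriv (u j) x := by field_simp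
        linarith
      rw [this]
      have := mul_nonneg hx0.le hs
      linarith
  have hw : ∀ r > (0:ℝ), r ^ (β j + 1) * Real.exp (u j r) = Real.exp (v r) / r := by
    intro r hr
    rw [hv]
    simp only
    rw [Real.exp_add, Real.rpow_def_of_pos hr, eq_div_iff hr.ne']
    have e : Real.exp ((β j + 2) * Real.log r) = Real.exp (Real.log r * (β j + 1)) * r := by
      conv_rhs => rw [← Real.exp_log hr, Real.log_exp, ← Real.exp_add]
      congr 1; ring
    rw [e]; ring
  have hneg : ∃ r1 ≥ (1:ℝ), Q r1 < 0 := by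
    by_contra! hcon
    have hmono : MonotoneOn v (Ici 1) := by
      apply monotoneOn_of_deriv_nonneg (convex_Ici 1)
      · intro x hx; exact (hvd x (by simp at hx; linarith)).continuousAt.continuousWithinAt
      · intro x hx
        simp at hx
        exact (hvd x (by linarith)).differentiableAt.differentiableWithinAt
      · intro x hx
        simp at hx
        rw [(hvd x (by linarith)).deriv]
        exact div_nonneg (hcon x hx.le) (by linarith)
    have hi : IntegrableOn (fun r : ℝ => Real.exp (v 1) * r⁻¹) (Ioi 1) := by
      refine Integrable.mono' ((h3 j).mono_set (Ioi_subset_Ioi zero_le_one)) ?_ ?_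
      · exact (measurable_inv.const_mul _).aestronglyMeasurable
      · filter_upwards [ae_restrict_mem measurableSet_Ioi] with r hr
        simp only [mem_Ioi] at hr
        have hr0 : 0 < r := by linarith
        rw [hw r hr0, Real.norm_of_nonneg (by positivity), div_eq_mul_inv]
        have := hmono (by simp : (1:ℝ) ∈ Ici 1) (by simpa using hr.le : r ∈ Ici (1:ℝ)) hr.le
        gcongr
    have hi2 : IntegrableOn (fun r : ℝ => r⁻¹) (Ioi 1) := by
      have := hi.const_mul (Real.exp (v 1))⁻¹
      refine this.congr (ae_of_all _ fun r => ?_)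
      simp only
      have := Real.exp_pos (v 1)
      field_simp
    exact not_integrableOn_Ioi_inv hi2
  obtain ⟨r1, hr1, hq⟩ := hneg
  set q := - Q r1 with hqd
  have hq0 : 0 < q := by linarith
  have hanti : AntitoneOn (fun r => v r + q * Real.log r) (Ici r1) := by
    have hd : ∀ r ≥ r1, HasDerivAt (fun r => v r + q * Real.log r) (Q r / r + q * r⁻¹) r :=
      fun r hr => (hvd r (by linarith)).add
        ((Real.hasDerivAt_log (by linarith : (0:ℝ) < r).ne').const_mul q)
    apply antitoneOn_of_deriv_nonpos (convex_Ici r1)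
    · intro x hx; exact (hd x hx).continuousAt.continuousWithinAt
    · intro x hx
      simp at hx
      exact (hd x hx.le).differentiableAt.differentiableWithinAt
    · intro x hx
      simp at hx
      rw [(hd x hx.le).deriv]
      have := hQanti (by simpa using hr1 : r1 ∈ Ici (1:ℝ))
        (by simp; linarith : x ∈ Ici (1:ℝ)) hx.le
      have e : Q x / x + q * x⁻¹ = (Q x - Q r1) / x := by rw [hqd]; ring
      rw [e]
      exact div_nonpos_of_nonpos_of_nonneg (by linarith) (by linarith)
  refine ⟨q, hq0, Real.exp (v r1 + q * Real.log r1), Real.exp_pos _, r1, hr1, fun r hr => ?_⟩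
  have hr0 : 0 < r := by linarith
  rw [hw r hr0, Real.rpow_def_of_pos hr0, ← Real.exp_add]
  have := hanti (by simp : r1 ∈ Ici r1) (by simpa using hr : r ∈ Ici r1) hr
  simp only at this
  gcongr
  linarith

theorem linearized_solutions_log_growth {n : ℕ} (hn : 0 < n)
    (A : Matrix (Fin n) (Fin n) ℝ) (β : Fin n → ℝ)
    (hA : H1 A) (hβ : ∀ i, -2 < β i)
    (u : Fin n → ℝ → ℝ) (hu : RadialSolution A β u)
    (φ : Fin n → ℝ → ℝ) (hφ : LinearizedSolution A β u φ) :
    ∃ C > (0:ℝ), ∃ R > (1:ℝ), ∀ i, ∀ r ≥ R, |φ i r| ≤ C * Real.log r := by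
  have hA0 := hA.2.1
  -- uniform decay
  have hdec : ∀ᶠ d in 𝓝[>] (0:ℝ), ∀ᶠ K in atTop, ∀ᶠ r in atTop, ∀ j,
      r ^ (β j + 1) * Real.exp (u j r) ≤ K * (r ^ (-d)) ^ 2 / r := by
    have : ∀ᶠ d in 𝓝[>] (0:ℝ), ∀ j, ∀ᶠ K in atTop, ∀ᶠ r in atTop,
      r ^ (β j + 1) * Real.exp (u j r) ≤ K * (r ^ (-d)) ^ 2 / r := by
      rw [eventually_all]
      intro j
      obtain ⟨q, hq, K, hK, R, hR, h⟩ := weight_decay A β hA0 u hu j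
      filter_upwards [Ioo_mem_nhdsGT (half_pos hq)] with d hd
      filter_upwards [eventually_ge_atTop K] with K' hK'
      filter_upwards [eventually_ge_atTop R] with r hr
      have hr0 : 0 < r := by linarith
      refine (h r hr).trans ?_
      have : r ^ (-q) ≤ (r ^ (-d)) ^ 2 := by
        rw [← Real.rpow_natCast, ← Real.rpow_mul hr0.le]
        apply Real.rpow_le_rpow_of_exponent_le (by linarith)
        push_cast; linarith [hd.2]
      have hK'0 : 0 ≤ K' := by linarith
      gcongr
    filter_upwards [this] with d hd
    rw [← eventually_all] at hd
    filter_upwards [hd] with K hK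
    rwa [eventually_all]
  obtain ⟨d, hd, hd0⟩ := (hdec.and self_mem_nhdsWithin).exists
  replace hd0 : 0 < d := hd0
  obtain ⟨K, hK, hK0⟩ := (hd.and (eventually_ge_atTop 0)).exists
  obtain ⟨R, hR⟩ := eventually_atTop.1 (hK.and (eventually_ge_atTop 1))
  have hR1 : 1 ≤ R := (hR R le_rfl).2
  obtain ⟨hφ1, hφ2⟩ := hφ
  set P : Fin n → ℝ → ℝ := fun i s => s * deriv (φ i) s with hP
  have hφd : ∀ i, ∀ r > (0:ℝ), HasDerivAt (φ i) (P i r / r) r := fun i r hr => by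
    refine (((hφ1 i r hr).differentiableAt (by norm_num)).hasDerivAt).congr_deriv ?_
    simp only [hP]; field_simp
  have hPd : ∀ i, ∀ r > (0:ℝ), HasDerivAt (P i) (deriv (P i) r) r := fun i r hr => by
    have h : ContDiffAt ℝ 1 (deriv (φ i)) r := by
      have := (hφ1 i r hr).derivWithin (m := 1) (by norm_num)
      simpa using this
    exact (differentiableAt_id.mul (h.differentiableAt (by norm_num))).hasDerivAt
  set s : ℝ → ℝ := fun r => r ^ (-d) with hs
  have hs0 : ∀ r > (0:ℝ), 0 < s r := fun r hr => Real.rpow_pos_of_pos hr _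
  have hsd : ∀ r > (0:ℝ), HasDerivAt s (-d * s r / r) r := fun r hr => by
    refine (Real.hasDerivAt_rpow_const (Or.inl hr.ne')).congr_deriv ?_
    simp only [hs]
    rw [Real.rpow_sub hr, Real.rpow_one]; ring
  set F : ℝ → ℝ := fun r => ∑ i, ((P i r) ^ 2 + (s r * φ i r) ^ 2) with hF
  set F' : ℝ → ℝ := fun r => ∑ i, (2 * P i r * deriv (P i) r
      + 2 * (s r * φ i r) * (-d * s r / r * φ i r + s r * (P i r / r))) with hF'
  have hFd : ∀ r > (0:ℝ), HasDerivAt F (F' r) r := fun r hr => by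
    apply HasDerivAt.fun_sum
    intro i _
    refine (((hPd i r hr).pow 2).add (((hsd r hr).mul (hφd i r hr)).pow 2)).congr_deriv ?_
    simp
  have hFP : ∀ r i, (P i r) ^ 2 ≤ F r := fun r i => by
    have := Finset.single_le_sum (f := fun i => (P i r) ^ 2 + (s r * φ i r) ^ 2)
      (fun i _ => by positivity) (Finset.mem_univ i)
    change _ ≤ F r at this
    nlinarith [sq_nonneg (s r * φ i r)]
  have hFφ : ∀ r i, (s r * φ i r) ^ 2 ≤ F r := fun r i => by
    have := Finset.single_le_sum (f := fun i => (P i r) ^ 2 + (s r * φ i r) ^ 2)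
      (fun i _ => by positivity) (Finset.mem_univ i)
    change _ ≤ F r at this
    nlinarith [sq_nonneg (P i r)]
  have hcross : ∀ r > (0:ℝ), ∀ i j, |P i r| * (s r * |φ j r|) ≤ F r := fun r hr i j => by
    have a := hFP r i
    have b := hFφ r j
    rw [← sq_abs] at a b
    rw [abs_mul, abs_of_pos (hs0 r hr)] at b
    nlinarith [sq_nonneg (|P i r| - s r * |φ j r|)]
  set L : ℝ := ∑ i : Fin n, (2 * ∑ j, A i j * K + 2) with hL
  have hF'le : ∀ r ≥ R, F' r ≤ L * (s r / r) * F r := by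
    intro r hr
    have hr0 : 0 < r := by linarith
    have hsr := hs0 r hr0
    simp only [hF', hL]
    rw [Finset.sum_mul, Finset.sum_mul]
    apply Finset.sum_le_sum
    intro i _
    have e1 : deriv (P i) r = - ∑ j, A i j * r ^ (β j + 1) * Real.exp (u j r) * φ j r := by
      have := hφ2 i r hr0
      linarith
    have b1 : P i r * deriv (P i) r ≤ (∑ j, A i j * K) * (s r / r) * F r := by
      rw [e1, mul_neg, Finset.mul_sum, ← Finset.sum_neg_distrib, Finset.sum_mul, Finset.sum_mul]
      apply Finset.sum_le_sum
      intro j _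
      have hw := (hR r hr).1 j
      have hc := hcross r hr0 i j
      have ha := hA0 i j
      calc -(P i r * (A i j * r ^ (β j + 1) * Real.exp (u j r) * φ j r))
          ≤ |P i r * (A i j * r ^ (β j + 1) * Real.exp (u j r) * φ j r)| := neg_le_abs _
        _ = A i j * (r ^ (β j + 1) * Real.exp (u j r)) * (|P i r| * |φ j r|) := by
            rw [abs_mul (P i r), abs_mul _ (φ j r), abs_of_nonneg (by positivity :
              0 ≤ A i j * r ^ (β j + 1) * Real.exp (u j r))]
            ring
        _ ≤ A i j * (K * (s r) ^ 2 / r) * (|P i r| * |φ j r|) := by gcongr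
        _ = A i j * K * (s r / r) * (|P i r| * (s r * |φ j r|)) := by ring
        _ ≤ A i j * K * (s r / r) * F r := by gcongr
    have b2 : (s r * φ i r) * (s r * (P i r / r)) ≤ (s r / r) * F r := by
      have hc := hcross r hr0 i i
      calc (s r * φ i r) * (s r * (P i r / r)) = (s r / r) * (s r * (P i r * φ i r)) := by ring
        _ ≤ (s r / r) * (s r * |P i r * φ i r|) := by gcongr; exact le_abs_self _
        _ = (s r / r) * (|P i r| * (s r * |φ i r|)) := by rw [abs_mul (P i r)]; ring
        _ ≤ _ := by gcongr
    have b3 : (s r * φ i r) * (-d * s r / r * φ i r) ≤ 0 := by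
      have : (s r * φ i r) * (-d * s r / r * φ i r) = -(d * (s r * φ i r) ^ 2 / r) := by ring
      rw [this]
      have : 0 ≤ d * (s r * φ i r) ^ 2 / r := by positivity
      linarith
    linarith
  have hL0 : 0 ≤ L := Finset.sum_nonneg fun i _ => by
    have : 0 ≤ ∑ j, A i j * K := Finset.sum_nonneg fun j _ => mul_nonneg (hA0 i j) hK0
    linarith
  set G : ℝ → ℝ := fun r => F r * Real.exp (L / d * s r) with hG
  have hGanti : AntitoneOn G (Ici R) := by
    have hGd : ∀ r ≥ R, HasDerivAt G
        ((F' r - L * (s r / r) * F r) * Real.exp (L / d * s r)) r := fun r hr => by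
      have hr0 : 0 < r := by linarith
      refine ((hFd r hr0).mul ((hsd r hr0).const_mul (L / d)).exp).congr_deriv ?_
      field_simp
      ring
    apply antitoneOn_of_deriv_nonpos (convex_Ici R)
    · intro x hx; exact (hGd x hx).continuousAt.continuousWithinAt
    · intro x hx
      simp at hx
      exact (hGd x hx.le).differentiableAt.differentiableWithinAt
    · intro x hx
      simp at hx
      rw [(hGd x hx.le).deriv]
      exact mul_nonpos_of_nonpos_of_nonneg (by linarith [hF'le x hx.le]) (Real.exp_pos _).le
  set M := Real.sqrt (G R) with hM
  have hPM : ∀ r ≥ R, ∀ i, |P i r| ≤ M := fun r hr i => by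
    have hr0 : 0 < r := by linarith
    apply Real.abs_le_sqrt
    have h1 := hGanti (by simp : R ∈ Ici R) (by simpa using hr : r ∈ Ici R) hr
    have h2 := hFP r i
    have h3 : 1 ≤ Real.exp (L / d * s r) := Real.one_le_exp (by
      have := (hs0 r hr0); positivity)
    have h4 : F r ≤ G r := by
      simp only [hG]
      exact le_mul_of_one_le_right ((sq_nonneg _).trans h2) h3
    linarith
  have hgrow : ∀ (f f' : ℝ → ℝ), (∀ r ≥ R, HasDerivAt f (f' r / r) r) → (∀ r ≥ R, f' r ≤ M) →
      ∀ r ≥ R, f r ≤ f R + M * Real.log r := by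
    intro f f' hf hf' r hr
    have hd : ∀ x ≥ R, HasDerivAt (fun r => f r - M * Real.log r) (f' x / x - M * x⁻¹) x :=
      fun x hx => (hf x hx).sub ((Real.hasDerivAt_log (by linarith : (0:ℝ) < x).ne').const_mul M)
    have hanti : AntitoneOn (fun r => f r - M * Real.log r) (Ici R) := by
      apply antitoneOn_of_deriv_nonpos (convex_Ici R)
      · intro x hx; exact (hd x hx).continuousAt.continuousWithinAt
      · intro x hx
        simp at hx
        exact (hd x hx.le).differentiableAt.differentiableWithinAt
      · intro x hx
        simp at hx
        rw [(hd x hx.le).deriv]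
        have e : f' x / x - M * x⁻¹ = (f' x - M) / x := by ring
        rw [e]
        exact div_nonpos_of_nonpos_of_nonneg (by linarith [hf' x hx.le]) (by linarith)
    have := hanti (by simp : R ∈ Ici R) (by simpa using hr : r ∈ Ici R) hr
    simp only at this
    have := mul_nonneg (Real.sqrt_nonneg (G R)) (Real.log_nonneg hR1)
    linarith
  refine ⟨∑ i, |φ i R| + M + 1, ?_, max R (Real.exp 1), ?_, ?_⟩
  · have : 0 ≤ ∑ i, |φ i R| := Finset.sum_nonneg fun i _ => abs_nonneg _
    have := Real.sqrt_nonneg (G R)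
    linarith
  · exact lt_max_of_lt_right (Real.one_lt_exp_iff.2 one_pos)
  · intro i r hr
    have hrR : R ≤ r := (le_max_left _ _).trans hr
    have hre : Real.exp 1 ≤ r := (le_max_right _ _).trans hr
    have hlog : 1 ≤ Real.log r := (Real.le_log_iff_exp_le (by linarith)).2 hre
    have u1 := hgrow (φ i) (P i) (fun x hx => hφd i x (by linarith))
      (fun x hx => (le_abs_self _).trans (hPM x hx i)) r hrR
    have u2 := hgrow (fun x => - φ i x) (fun x => - P i x)
      (fun x hx => ((hφd i x (by linarith)).neg).congr_deriv (by ring))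
      (fun x hx => (neg_le_abs _).trans (hPM x hx i)) r hrR
    have hsum := Finset.single_le_sum (f := fun i => |φ i R|)
      (fun i _ => abs_nonneg _) (Finset.mem_univ i)
    change _ ≤ ∑ i, |φ i R| at hsum
    have : |φ i r| ≤ |φ i R| + M * Real.log r :=
      abs_le'.2 ⟨by linarith [le_abs_self (φ i R)], by linarith [neg_le_abs (φ i R)]⟩
    have h0 : 0 ≤ ∑ i, |φ i R| := Finset.sum_nonneg fun i _ => abs_nonneg _
    nlinarith
end

section
/- Let A satisfy (H1) and β_i > -2 for all i ∈ I. For any constants c_1,...,c_n ∈ ℝ there is a unique solution u = (u_1,...,u_n), continuous at r = 0 and defined for all r > 0, of the radial system u_i''(r) + (1/r) u_i'(r) + Σ_{j=1}^n a_{ij} r^{β_j} e^{u_j(r)} = 0 for i ∈ I with initial values u_i(0) = c_i for all i ∈ I. (The solution need not have finite energy.) -/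
open Set MeasureTheory

/-- `u` solves the radial system on (0,∞), is continuous at r = 0 (from the right)
and takes the initial values `c` there. -/
def IsIVPSolution {n : ℕ} (A : Matrix (Fin n) (Fin n) ℝ) (β : Fin n → ℝ)
    (c : Fin n → ℝ) (u : Fin n → ℝ → ℝ) : Prop :=
  (∀ i, ContinuousWithinAt (u i) (Set.Ici 0) 0) ∧
  (∀ i, u i 0 = c i) ∧
  (∀ i, ∀ r > (0:ℝ), ContDiffAt ℝ 2 (u i) r) ∧
  (∀ i, ∀ r > (0:ℝ),
    deriv (deriv (u i)) r + (1 / r) * deriv (u i) r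
      + ∑ j, A i j * r ^ β j * Real.exp (u j r) = 0)


open Filter Topology

/-- The primitive vanishing at `-∞`. -/
noncomputable def primI (h : ℝ → ℝ) (t : ℝ) : ℝ := ∫ s in Iic t, h s

lemma integrableOn_Iic_deriv_nonneg {g g' : ℝ → ℝ} {l : ℝ}
    (hd : ∀ x, HasDerivAt g (g' x) x) (hp : ∀ x, 0 ≤ g' x) (hl : Tendsto g atBot (𝓝 l)) (t : ℝ) :
    IntegrableOn g' (Iic t) := by
  have hc : Continuous g := continuous_iff_continuousAt.2 fun x => (hd x).continuousAt
  have hi : ∀ a b, a ≤ b → IntegrableOn g' (Ioc a b) := fun a b _ =>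
    intervalIntegral.integrableOn_deriv_of_nonneg hc.continuousOn
      (fun y _ => hd y) fun y _ => hp y
  have hii : ∀ a b, IntegrableOn g' (Ioc a b) := by
    intro a b
    rcases le_total a b with h | h
    · exact hi a b h
    · simp [Ioc_eq_empty (not_lt.2 h)]
  refine integrableOn_Iic_of_intervalIntegral_norm_tendsto (g t - l) t (fun x => hii x t)
    tendsto_id ?_
  apply Tendsto.congr' _ (hl.const_sub _)
  filter_upwards [Iic_mem_atBot t] with x hx
  have : ∀ y, ‖g' y‖ = g' y := fun y => by rw [Real.norm_eq_abs, abs_of_nonneg (hp y)]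
  simp only [this]
  symm
  apply intervalIntegral.integral_eq_sub_of_hasDerivAt (fun y _ => hd y)
  exact (intervalIntegrable_iff_integrableOn_Ioc_of_le hx).2 (hii x t)

/-- Domination lemma. -/
lemma primI_dom {h g g' : ℝ → ℝ} {l : ℝ} (hc : Continuous h)
    (hd : ∀ x, HasDerivAt g (g' x) x) (hl : Tendsto g atBot (𝓝 l))
    (hb : ∀ x, |h x| ≤ g' x) :
    (∀ t, IntegrableOn h (Iic t)) ∧ (∀ t, HasDerivAt (primI h) (h t) t) ∧
      ∀ t, |primI h t| ≤ g t - l := by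
  have hp : ∀ x, 0 ≤ g' x := fun x => (abs_nonneg _).trans (hb x)
  have hgi := integrableOn_Iic_deriv_nonneg hd hp hl
  have hi : ∀ t, IntegrableOn h (Iic t) := fun t =>
    (hgi t).mono' hc.aestronglyMeasurable (Eventually.of_forall fun x => hb x)
  refine ⟨hi, fun t => ?_, fun t => ?_⟩
  · have e : primI h = fun x => primI h t + ∫ s in t..x, h s := by
      funext x
      have := intervalIntegral.integral_Iic_sub_Iic (hi t) (hi x)
      unfold primI
      rw [← this]; ring
    rw [e]
    exact (intervalIntegral.integral_hasDerivAt_right (hc.intervalIntegrable _ _)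
      hc.aestronglyMeasurable.stronglyMeasurableAtFilter hc.continuousAt).const_add _
  · rw [← integral_Iic_of_hasDerivAt_of_tendsto' (fun x _ => hd x) (hgi t) hl, ← Real.norm_eq_abs]
    exact norm_integral_le_of_norm_le (hgi t) (Eventually.of_forall fun x => hb x)

/-- Weight functions. -/
structure Wt (q φ φ1 φ2 : ℝ → ℝ) : Prop where
  d1 : ∀ t, HasDerivAt φ (φ1 t) t
  d2 : ∀ t, HasDerivAt φ1 (φ2 t) t
  l1 : Tendsto φ atBot (𝓝 1)
  l2 : Tendsto φ1 atBot (𝓝 0)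
  one : ∀ t, 1 ≤ φ t
  bd : ∀ t, 2 * q t * φ t ≤ φ2 t

lemma exists_Wt {n : ℕ} (γ k : Fin n → ℝ) (hγ : ∀ j, 0 < γ j) (hk : ∀ j, 0 ≤ k j) :
    ∃ φ φ1 φ2, Wt (fun t => ∑ j, k j * Real.exp (γ j * t)) φ φ1 φ2 := by
  set g : ℝ → ℝ := fun t => ∑ j, (2 * k j / γ j ^ 2) * Real.exp (γ j * t) with hg
  set g1 : ℝ → ℝ := fun t => ∑ j, (2 * k j / γ j) * Real.exp (γ j * t) with hg1
  set g2 : ℝ → ℝ := fun t => ∑ j, (2 * k j) * Real.exp (γ j * t) with hg2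
  have key : ∀ (a : Fin n → ℝ) (t : ℝ), HasDerivAt (fun t => ∑ j, a j * Real.exp (γ j * t))
      (∑ j, (a j * γ j) * Real.exp (γ j * t)) t := by
    intro a t
    apply HasDerivAt.fun_sum
    intro j _
    have := (((hasDerivAt_id t).const_mul (γ j)).exp).const_mul (a j)
    refine this.congr_deriv ?_
    simp; ring
  have lim : ∀ (a : Fin n → ℝ), Tendsto (fun t => ∑ j, a j * Real.exp (γ j * t)) atBot (𝓝 0) := by
    intro a
    have : Tendsto (fun t => ∑ j, a j * Real.exp (γ j * t)) atBot (𝓝 (∑ j : Fin n, a j * 0)) := by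
      apply tendsto_finsetSum
      intro j _
      exact (Real.tendsto_exp_atBot.comp (tendsto_id.const_mul_atBot (hγ j))).const_mul _
    simpa using this
  have dg : ∀ t, HasDerivAt g (g1 t) t := fun t => by
    refine (key _ t).congr_deriv (Finset.sum_congr rfl fun j _ => ?_)
    have := (hγ j).ne'
    field_simp
  have dg1 : ∀ t, HasDerivAt g1 (g2 t) t := fun t => by
    refine (key _ t).congr_deriv (Finset.sum_congr rfl fun j _ => ?_)
    have := (hγ j).ne'
    field_simp
  have gpos : ∀ t, 0 ≤ g t := fun t => Finset.sum_nonneg fun j _ => by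
    have := hγ j; have := hk j; positivity
  have le : Tendsto (fun t => Real.exp (g t)) atBot (𝓝 1) := by
    have := (Real.continuous_exp.tendsto 0).comp (lim fun j => 2 * k j / γ j ^ 2)
    rw [Real.exp_zero] at this
    exact this
  refine ⟨fun t => Real.exp (g t), fun t => g1 t * Real.exp (g t),
    fun t => (g2 t + g1 t ^ 2) * Real.exp (g t), ⟨?_, ?_, le, ?_, ?_, ?_⟩⟩
  · intro t
    exact (dg t).exp.congr_deriv (by ring)
  · intro t
    exact ((dg1 t).mul (dg t).exp).congr_deriv (by ring)
  · simpa using (lim fun j => 2 * k j / γ j).mul le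
  · intro t
    exact Real.one_le_exp (gpos t)
  · intro t
    apply mul_le_mul_of_nonneg_right _ (Real.exp_pos _).le
    have : 2 * ∑ j, k j * Real.exp (γ j * t) = g2 t := by
      simp only [hg2, Finset.mul_sum, mul_assoc]
    simp only [this]
    nlinarith [sq_nonneg (g1 t)]

/-- Double primitive. -/
lemma dbl {q φ φ1 φ2 : ℝ → ℝ} (W : Wt q φ φ1 φ2) {h : ℝ → ℝ} (hc : Continuous h) {C : ℝ}
    (hC : 0 ≤ C) (hb : ∀ x, |h x| ≤ C * φ2 x) :
    (∀ t, IntegrableOn h (Iic t)) ∧ (∀ t, IntegrableOn (primI h) (Iic t)) ∧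
    (∀ t, HasDerivAt (primI h) (h t) t) ∧
    (∀ t, HasDerivAt (primI (primI h)) (primI h t) t) ∧
    (∀ t, |primI (primI h) t| ≤ C * φ t) ∧ Tendsto (primI (primI h)) atBot (𝓝 0) := by
  obtain ⟨a, b, c⟩ := primI_dom hc (fun x => (W.d2 x).const_mul C) (W.l2.const_mul C) hb
  have hc' : Continuous (primI h) := continuous_iff_continuousAt.2 fun x => (b x).continuousAt
  obtain ⟨a', b', c'⟩ := primI_dom hc' (fun x => (W.d1 x).const_mul C) (W.l1.const_mul C)
    (fun x => by simpa using c x)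
  refine ⟨a, a', b, b', fun t => (c' t).trans (by linarith), ?_⟩
  apply squeeze_zero_norm c'
  simpa using (W.l1.const_mul C).sub_const (C * 1)

/-- Solutions of the transformed system in the variable `t = log r`. -/
def IsW {n : ℕ} (A : Matrix (Fin n) (Fin n) ℝ) (γ c : Fin n → ℝ) (w : Fin n → ℝ → ℝ) : Prop :=
  ∀ i, ∃ p : ℝ → ℝ, (∀ t, HasDerivAt (w i) (p t) t) ∧
    (∀ t, HasDerivAt p (-∑ j, A i j * Real.exp (γ j * t) * Real.exp (w j t)) t) ∧
    Tendsto (w i) atBot (𝓝 (c i))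

/-- A concave function with a limit at `-∞`. -/
lemma concave_lim {w p h : ℝ → ℝ} {c : ℝ} (d1 : ∀ t, HasDerivAt w (p t) t)
    (d2 : ∀ t, HasDerivAt p (-h t) t) (hh : ∀ t, 0 ≤ h t) (hl : Tendsto w atBot (𝓝 c)) :
    (∀ t, p t ≤ 0) ∧ (∀ t, w t ≤ c) ∧ Tendsto p atBot (𝓝 0) := by
  have pa : Antitone p := antitone_of_hasDerivAt_nonpos d2 (fun t => by simpa using hh t)
  have slope : ∀ s t, s < t → ∃ x, s < x ∧ x < t ∧ w t - w s = p x * (t - s) := by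
    intro s t hst
    obtain ⟨x, hx, e⟩ := exists_hasDerivAt_eq_slope w p hst
      (continuous_iff_continuousAt.2 fun x => (d1 x).continuousAt).continuousOn (fun x _ => d1 x)
    refine ⟨x, hx.1, hx.2, ?_⟩
    rw [e, div_mul_cancel₀]
    exact (sub_pos.2 hst).ne'
  have pn : ∀ t, p t ≤ 0 := by
    intro t
    by_contra! hp
    have : Tendsto w atBot atBot := by
      refine tendsto_atBot_mono' atBot (f₁ := fun s => w t - p t * (t - s)) ?_ ?_
      · filter_upwards [Iio_mem_atBot t] with s hs
        obtain ⟨x, _, hx, e⟩ := slope s t hs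
        have := mul_le_mul_of_nonneg_right (pa hx.le) (sub_pos.2 hs).le
        linarith
      · have h1 : Tendsto (fun s => p t * s) atBot atBot := tendsto_id.const_mul_atBot hp
        exact (tendsto_atBot_add_const_left _ (w t - p t * t) h1).congr fun s => by ring
    exact not_tendsto_nhds_of_tendsto_atBot this c hl
  have wa : Antitone w := antitone_of_hasDerivAt_nonpos d1 pn
  refine ⟨pn, fun t => ge_of_tendsto hl ?_, ?_⟩
  · filter_upwards [Iic_mem_atBot t] with s hs using wa hs
  · rw [Metric.tendsto_nhds]
    intro ε hε
    have : ∃ t, -ε < p t := by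
      by_contra! hp
      have : Tendsto w atBot atTop := by
        apply tendsto_atTop_mono' atBot (f₁ := fun s => w 0 + ε * (0 - s))
        · filter_upwards [Iio_mem_atBot (0:ℝ)] with s hs
          obtain ⟨x, _, hx, e⟩ := slope s 0 hs
          have := mul_le_mul_of_nonneg_right (hp x) (sub_pos.2 hs).le
          linarith
        · have h1 : Tendsto (fun s => (-ε) * s) atBot atTop :=
            tendsto_id.const_mul_atBot_of_neg (by linarith)
          exact (tendsto_atTop_add_const_left _ (w 0) h1).congr fun s => by ring
      exact not_tendsto_nhds_of_tendsto_atTop this c hl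
    obtain ⟨t, ht⟩ := this
    filter_upwards [Iic_mem_atBot t] with s hs
    rw [Real.dist_eq, sub_zero, abs_of_nonpos (pn s)]
    linarith [pa hs]

lemma exp_min_lip (x y c : ℝ) :
    |Real.exp (min x c) - Real.exp (min y c)| ≤ Real.exp c * |x - y| := by
  have key : ∀ a b : ℝ, a ≤ b → b ≤ c → Real.exp b - Real.exp a ≤ Real.exp c * (b - a) := by
    intro a b hab hbc
    have h1 : Real.exp a = Real.exp b * Real.exp (a - b) := by rw [← Real.exp_add]; ring_nf
    have h2 := Real.add_one_le_exp (a - b)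
    have h3 := Real.exp_le_exp.2 hbc
    have h4 := Real.exp_pos b
    have h5 : Real.exp b * (a - b + 1) ≤ Real.exp a := by rw [h1]; gcongr
    have h6 : Real.exp b * (b - a) ≤ Real.exp c * (b - a) :=
      mul_le_mul_of_nonneg_right h3 (by linarith)
    linarith
  have hm : |min x c - min y c| ≤ |x - y| := by
    simpa using abs_min_sub_min_le_max x c y c
  refine le_trans ?_ (mul_le_mul_of_nonneg_left hm (Real.exp_pos c).le)
  rcases le_total (min x c) (min y c) with h | h
  · rw [abs_sub_comm, abs_sub_comm (min x c), abs_of_nonneg (sub_nonneg.2 (Real.exp_le_exp.2 h)),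
      abs_of_nonneg (sub_nonneg.2 h)]
    exact key _ _ h (min_le_right _ _)
  · rw [abs_of_nonneg (sub_nonneg.2 (Real.exp_le_exp.2 h)), abs_of_nonneg (sub_nonneg.2 h)]
    exact key _ _ h (min_le_right _ _)

/-- Truncated nonlinearity. -/
noncomputable def HH {n : ℕ} (A : Matrix (Fin n) (Fin n) ℝ) (γ c : Fin n → ℝ)
    (w : Fin n → ℝ → ℝ) (i : Fin n) (t : ℝ) : ℝ :=
  ∑ j, A i j * Real.exp (γ j * t) * Real.exp (min (w j t) (c j))

lemma core {n : ℕ} (A : Matrix (Fin n) (Fin n) ℝ) (hA : ∀ i j, 0 ≤ A i j)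
    (γ c : Fin n → ℝ) (hγ : ∀ j, 0 < γ j) :
    ∃ w, IsW A γ c w ∧ ∀ v, IsW A γ c v → v = w := by
  obtain ⟨φ, φ1, φ2, W⟩ := exists_Wt γ (fun j => Real.exp (c j) * ∑ i, A i j) hγ
    (fun j => mul_nonneg (Real.exp_pos _).le (Finset.sum_nonneg fun i _ => hA i j))
  set q : ℝ → ℝ := fun t => ∑ j, (Real.exp (c j) * ∑ i, A i j) * Real.exp (γ j * t) with hq
  have φpos : ∀ t, 0 < φ t := fun t => lt_of_lt_of_le one_pos (W.one t)
  have φc : Continuous φ := continuous_iff_continuousAt.2 fun x => (W.d1 x).continuousAt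
  have hqi : ∀ i t, ∑ j, A i j * Real.exp (γ j * t) * Real.exp (c j) ≤ q t := by
    intro i t
    apply Finset.sum_le_sum
    intro j _
    have h1 : A i j ≤ ∑ i, A i j := Finset.single_le_sum (fun i _ => hA i j) (Finset.mem_univ i)
    calc _ = A i j * (Real.exp (c j) * Real.exp (γ j * t)) := by ring
      _ ≤ (∑ i, A i j) * (Real.exp (c j) * Real.exp (γ j * t)) := by gcongr
      _ = _ := by ring
  have qpos : ∀ t, 0 ≤ q t := fun t => Finset.sum_nonneg fun j _ => by
    have : 0 ≤ ∑ i, A i j := Finset.sum_nonneg fun i _ => hA i j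
    positivity
  have Hpos : ∀ w i t, 0 ≤ HH A γ c w i t := fun w i t => Finset.sum_nonneg fun j _ => by
    have := hA i j
    positivity
  have Hbd : ∀ w i t, |HH A γ c w i t| ≤ (1/2) * φ2 t := by
    intro w i t
    rw [abs_of_nonneg (Hpos w i t)]
    have h1 : HH A γ c w i t ≤ q t := by
      refine le_trans (Finset.sum_le_sum fun j _ => ?_) (hqi i t)
      have := hA i j
      gcongr
      exact min_le_right _ _
    have h2 := W.bd t
    have h3 := W.one t
    have h4 := qpos t
    nlinarith
  have Hcont : ∀ w, (∀ j, Continuous (w j)) → ∀ i, Continuous (HH A γ c w i) := by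
    intro w hw i
    unfold HH
    have := hw
    fun_prop
  have Hlip : ∀ w v D, (∀ j t, |w j t - v j t| ≤ φ t * D) → ∀ i t,
      |HH A γ c w i t - HH A γ c v i t| ≤ (D / 2) * φ2 t := by
    intro w v D hD i t
    have D0 : 0 ≤ D := by
      have h1 := (abs_nonneg _).trans (hD i t)
      exact nonneg_of_mul_nonneg_right h1 (φpos t)
    unfold HH
    rw [← Finset.sum_sub_distrib]
    refine (Finset.abs_sum_le_sum_abs _ _).trans ?_
    have h1 : ∑ j, |A i j * Real.exp (γ j * t) * Real.exp (min (w j t) (c j)) -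
        A i j * Real.exp (γ j * t) * Real.exp (min (v j t) (c j))|
        ≤ ∑ j, (A i j * Real.exp (γ j * t) * Real.exp (c j)) * (φ t * D) := by
      apply Finset.sum_le_sum
      intro j _
      have h0 := hA i j
      rw [← mul_sub, abs_mul, abs_of_nonneg (by positivity)]
      rw [mul_assoc _ (Real.exp (c j))]
      gcongr
      refine (exp_min_lip _ _ _).trans ?_
      gcongr
      exact hD j t
    rw [← Finset.sum_mul] at h1
    have h2 := mul_le_mul_of_nonneg_right (hqi i t) (mul_nonneg (φpos t).le D0)
    have h3 := mul_le_mul_of_nonneg_right (W.bd t) D0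
    linarith
  -- the map
  let X := BoundedContinuousFunction ℝ (Fin n → ℝ)
  let w : X → Fin n → ℝ → ℝ := fun z j t => c j + φ t * z t j
  have wc : ∀ z j, Continuous (w z j) := by
    intro z j
    have h1 : Continuous fun t => z t j := (continuous_apply j).comp z.continuous
    exact continuous_const.add (φc.mul h1)
  have db := fun z i => dbl W (Hcont (w z) (wc z) i) (by norm_num) (Hbd (w z) i)
  let T : X → X := fun z => BoundedContinuousFunction.ofNormedAddCommGroup
    (fun t i => -(primI (primI (HH A γ c (w z) i)) t) / φ t)
    (by
      apply continuous_pi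
      intro i
      have h1 : Continuous (primI (primI (HH A γ c (w z) i))) :=
        continuous_iff_continuousAt.2 fun x => ((db z i).2.2.2.1 x).continuousAt
      exact h1.neg.div φc fun t => (φpos t).ne') 1
    (by
      intro t
      rw [pi_norm_le_iff_of_nonneg (by norm_num)]
      intro i
      rw [norm_div, norm_neg, Real.norm_eq_abs, Real.norm_eq_abs, abs_of_pos (φpos t),
        div_le_one (φpos t)]
      have := (db z i).2.2.2.2.1 t
      linarith [φpos t])
  have Tapp : ∀ z t i, T z t i = -(primI (primI (HH A γ c (w z) i)) t) / φ t := fun z t i => rfl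
  have hT : ContractingWith (1/2) T := by
    refine ⟨by rw [← NNReal.coe_lt_coe]; norm_num, LipschitzWith.of_dist_le_mul fun z z' => ?_⟩
    have D0 : 0 ≤ dist z z' := dist_nonneg
    rw [BoundedContinuousFunction.dist_le (by positivity)]
    intro t
    rw [dist_pi_le_iff (by positivity)]
    intro i
    rw [Real.dist_eq, Tapp, Tapp, ← sub_div, abs_div, abs_of_pos (φpos t), div_le_iff₀ (φpos t)]
    have hl := Hlip (w z) (w z') (dist z z') (by
      intro j t
      have h1 : w z j t - w z' j t = φ t * (z t j - z' t j) := by simp only [w]; ring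
      rw [h1, abs_mul, abs_of_pos (φpos t)]
      gcongr
      · exact (φpos t).le
      rw [← Real.dist_eq]
      exact (dist_le_pi_dist _ _ j).trans (BoundedContinuousFunction.dist_coe_le_dist t)) i
    have dd := dbl W ((Hcont (w z) (wc z) i).sub (Hcont (w z') (wc z') i)) (by positivity) hl
    have e1 : primI (fun x => HH A γ c (w z) i x - HH A γ c (w z') i x) =
        fun x => primI (HH A γ c (w z) i) x - primI (HH A γ c (w z') i) x := by
      funext x
      exact integral_sub ((db z i).1 x) ((db z' i).1 x)
    have e2 : primI (primI (fun x => HH A γ c (w z) i x - HH A γ c (w z') i x)) t =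
        primI (primI (HH A γ c (w z) i)) t - primI (primI (HH A γ c (w z') i)) t := by
      rw [e1]
      exact integral_sub ((db z i).2.1 t) ((db z' i).2.1 t)
    have e3 := dd.2.2.2.2.1 t
    rw [show (-primI (primI (HH A γ c (w z) i)) t - -primI (primI (HH A γ c (w z') i)) t) =
      -(primI (primI (HH A γ c (w z) i)) t - primI (primI (HH A γ c (w z') i)) t) by ring, abs_neg,
      ← e2]
    refine e3.trans (le_of_eq ?_)
    push_cast
    ring
  have : Nonempty X := ⟨0⟩
  let z := hT.fixedPoint T
  have hz : T z = z := hT.fixedPoint_isFixedPt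
  have wz : ∀ i, w z i = fun t => c i - primI (primI (HH A γ c (w z) i)) t := by
    intro i
    funext t
    have h1 : z t i = T z t i := by rw [hz]
    have h2 := (φpos t).ne'
    show c i + φ t * z t i = _
    rw [h1, Tapp]
    field_simp
    ring
  refine ⟨w z, fun i => ?_, ?_⟩
  · obtain ⟨_, _, b1, b2, _, b3⟩ := db z i
    refine ⟨fun t => -primI (HH A γ c (w z) i) t, fun t => ?_, fun t => ?_, ?_⟩
    · rw [wz i]
      exact ((b2 t).const_sub (c i))
    · refine (b1 t).neg.congr_deriv ?_
      unfold HH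
      congr 1
      refine Finset.sum_congr rfl fun j _ => ?_
      rw [min_eq_left]
      rw [wz j]
      have : 0 ≤ primI (primI (HH A γ c (w z) j)) t :=
        integral_nonneg fun s => integral_nonneg fun s' => Hpos _ _ _
      show c j - _ ≤ c j
      linarith
    · rw [wz i]
      simpa using b3.const_sub (c i)
  · intro v hv
    choose p d1 d2 hl using hv
    have cl := fun i => concave_lim (d1 i) (d2 i) (fun t => Finset.sum_nonneg fun j _ => by
      have := hA i j; positivity) (hl i)
    have vc : ∀ j, Continuous (v j) := fun j =>
      continuous_iff_continuousAt.2 fun x => (d1 j x).continuousAt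
    have e0 : ∀ i t, ∑ j, A i j * Real.exp (γ j * t) * Real.exp (v j t) = HH A γ c v i t := by
      intro i t
      unfold HH
      refine Finset.sum_congr rfl fun j _ => ?_
      rw [min_eq_left ((cl j).2.1 t)]
    have dv := fun i => dbl W (Hcont v vc i) (by norm_num) (Hbd v i)
    have e1 : ∀ i, p i = fun t => -primI (HH A γ c v i) t := by
      intro i
      funext t
      have h1 := integral_Iic_of_hasDerivAt_of_tendsto' (a := t)
        (fun x _ => (d2 i x).congr_deriv (by rw [e0]; rfl)) ((dv i).1 t).neg (cl i).2.2
      have h2 : ∫ x in Iic t, (-HH A γ c v i) x = - primI (HH A γ c v i) t := integral_neg _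
      linarith
    have e2 : ∀ i t, v i t = c i - primI (primI (HH A γ c v i)) t := by
      intro i t
      have h1 := integral_Iic_of_hasDerivAt_of_tendsto' (a := t)
        (fun x _ => (d1 i x).congr_deriv (by rw [e1]; rfl)) ((dv i).2.1 t).neg (hl i)
      have h2 : ∫ x in Iic t, (-primI (HH A γ c v i)) x = - primI (primI (HH A γ c v i)) t :=
        integral_neg _
      linarith
    let y : X := BoundedContinuousFunction.ofNormedAddCommGroup
      (fun t i => (v i t - c i) / φ t)
      (by
        apply continuous_pi
        intro i
        exact ((vc i).sub continuous_const).div φc fun t => (φpos t).ne') 1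
      (by
        intro t
        rw [pi_norm_le_iff_of_nonneg (by norm_num)]
        intro i
        rw [norm_div, Real.norm_eq_abs, Real.norm_eq_abs, abs_of_pos (φpos t),
          div_le_one (φpos t), e2 i t]
        have := (dv i).2.2.2.2.1 t
        rw [show ∀ a b : ℝ, a - b - a = -b by intros; ring, abs_neg]
        linarith [φpos t])
    have yapp : ∀ t i, y t i = (v i t - c i) / φ t := fun t i => rfl
    have wy : w y = v := by
      funext i t
      show c i + φ t * y t i = _
      rw [yapp]
      have h2 := (φpos t).ne'
      field_simp
      ring
    have hy : T y = y := by
      ext t i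
      rw [Tapp, yapp, wy, e2 i t]
      ring
    rw [← wy, hT.fixedPoint_unique hy]

lemma IsIVP_to_IsW {n : ℕ} {A : Matrix (Fin n) (Fin n) ℝ} {β c : Fin n → ℝ} {v : Fin n → ℝ → ℝ}
    (hv : IsIVPSolution A β c v) :
    IsW A (fun j => β j + 2) c (fun i t => v i (Real.exp t)) := by
  obtain ⟨h0, hc, h2, he⟩ := hv
  intro i
  have d1 : ∀ r > 0, HasDerivAt (v i) (deriv (v i) r) r := fun r hr =>
    ((h2 i r hr).differentiableAt (by norm_num)).hasDerivAt
  have d2 : ∀ r > 0, HasDerivAt (deriv (v i)) (deriv (deriv (v i)) r) r := by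
    intro r hr
    have h3 : ContDiffAt ℝ 1 (fderiv ℝ (v i)) r := (h2 i r hr).fderiv_right (by norm_num)
    have h4 : DifferentiableAt ℝ (fun x => fderiv ℝ (v i) x 1) r :=
      (h3.differentiableAt (by norm_num)).clm_apply (differentiableAt_const _)
    exact h4.hasDerivAt
  refine ⟨fun t => deriv (v i) (Real.exp t) * Real.exp t, fun t => ?_, fun t => ?_, ?_⟩
  · exact (d1 _ (Real.exp_pos t)).comp t (Real.hasDerivAt_exp t)
  · have h3 := ((d2 _ (Real.exp_pos t)).comp t (Real.hasDerivAt_exp t)).mul (Real.hasDerivAt_exp t)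
    refine h3.congr_deriv ?_
    have h4 := he i _ (Real.exp_pos t)
    have h5 : ∑ j, A i j * Real.exp ((β j + 2) * t) * Real.exp (v j (Real.exp t)) =
        Real.exp t ^ 2 * ∑ j, A i j * Real.exp t ^ β j * Real.exp (v j (Real.exp t)) := by
      rw [Finset.mul_sum]
      refine Finset.sum_congr rfl fun j _ => ?_
      have : Real.exp ((β j + 2) * t) = Real.exp t ^ 2 * Real.exp t ^ β j := by
        rw [← Real.exp_mul, ← Real.exp_nat_mul, ← Real.exp_add]
        congr 1
        push_cast
        ring
      rw [this]; ring
    rw [h5]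
    have h6 := (Real.exp_pos t).ne'
    have h7 : ∑ j, A i j * Real.exp t ^ β j * Real.exp (v j (Real.exp t)) =
      - (deriv (deriv (v i)) (Real.exp t) + (1 / Real.exp t) * deriv (v i) (Real.exp t)) := by
      linarith
    rw [h7]
    simp only [Function.comp]
    field_simp
  · have h3 : Tendsto (v i) (𝓝[Ici 0] 0) (𝓝 (c i)) := by
      have := h0 i
      unfold ContinuousWithinAt at this
      rwa [hc i] at this
    refine h3.comp (tendsto_nhdsWithin_iff.2 ⟨Real.tendsto_exp_atBot, ?_⟩)
    exact Eventually.of_forall fun t => (Real.exp_pos t).le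

lemma IsW_to_IsIVP {n : ℕ} {A : Matrix (Fin n) (Fin n) ℝ} {β c : Fin n → ℝ} {w : Fin n → ℝ → ℝ}
    (hw : IsW A (fun j => β j + 2) c w) :
    IsIVPSolution A β c (fun i r => if r = 0 then c i else w i (Real.log r)) := by
  choose p d1 d2 hl using hw
  have wc : ∀ i, Continuous (w i) := fun i =>
    continuous_iff_continuousAt.2 fun x => (d1 i x).continuousAt
  have ev : ∀ i, ∀ r > (0:ℝ), (fun r => if r = 0 then c i else w i (Real.log r)) =ᶠ[𝓝 r]
      fun r => w i (Real.log r) := by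
    intro i r hr
    filter_upwards [lt_mem_nhds hr] with x hx
    rw [if_neg hx.ne']
  have D1 : ∀ i, ∀ r > (0:ℝ), deriv (fun r => if r = 0 then c i else w i (Real.log r)) r =
      p i (Real.log r) * r⁻¹ := by
    intro i r hr
    rw [(ev i r hr).deriv_eq]
    exact ((d1 i _).comp r (Real.hasDerivAt_log hr.ne')).deriv
  refine ⟨fun i => ?_, fun i => by simp, fun i r hr => ?_, fun i r hr => ?_⟩
  · have h1 : Tendsto (fun r => w i (Real.log r)) (𝓝[≠] 0) (𝓝 (c i)) :=
      (hl i).comp Real.tendsto_log_nhdsNE_zero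
    have h2 : ContinuousAt (fun r => if r = 0 then c i else w i (Real.log r)) 0 := by
      rw [continuousAt_iff_punctured_nhds]
      simp only [if_true]
      refine h1.congr' ?_
      filter_upwards [self_mem_nhdsWithin] with x hx
      rw [if_neg (show x ≠ 0 from hx)]
    exact h2.continuousWithinAt
  · have e1 : deriv (w i) = p i := funext fun t => (d1 i t).deriv
    have e2 : deriv (p i) = fun t => -∑ j, A i j * Real.exp ((β j + 2) * t) * Real.exp (w j t) :=
      funext fun t => (d2 i t).deriv
    have c1 : ContDiff ℝ 1 (p i) := by
      rw [contDiff_one_iff_deriv, e2]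
      refine ⟨fun t => (d2 i t).differentiableAt, ?_⟩
      fun_prop
    have c2 : ContDiff ℝ (1 + 1) (w i) := by
      rw [contDiff_succ_iff_deriv, e1]
      refine ⟨fun t => (d1 i t).differentiableAt, by simp, c1⟩
    have c3 : ContDiff ℝ 2 (w i) := by
      convert c2 using 1
      norm_num
    exact (c3.contDiffAt.comp r (Real.contDiffAt_log.2 hr.ne')).congr_of_eventuallyEq (ev i r hr)
  · have h1 : deriv (fun r => if r = 0 then c i else w i (Real.log r)) =ᶠ[𝓝 r]
        fun r => p i (Real.log r) * r⁻¹ := by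
      filter_upwards [lt_mem_nhds hr] with x hx using D1 i x hx
    have h2 := ((d2 i _).comp r (Real.hasDerivAt_log hr.ne')).mul (hasDerivAt_inv hr.ne')
    rw [D1 i r hr, h1.deriv_eq]
    have h3 : deriv (fun r => p i (Real.log r) * r⁻¹) r = _ := h2.deriv
    rw [h3]
    simp only [if_neg hr.ne', Function.comp]
    have h5 : ∑ j, A i j * Real.exp ((β j + 2) * Real.log r) * Real.exp (w j (Real.log r)) =
        r ^ 2 * ∑ j, A i j * r ^ β j * Real.exp (w j (Real.log r)) := by
      rw [Finset.mul_sum]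
      refine Finset.sum_congr rfl fun j _ => ?_
      have : Real.exp ((β j + 2) * Real.log r) = r ^ 2 * r ^ β j := by
        rw [mul_comm, ← Real.rpow_def_of_pos hr, Real.rpow_add hr, mul_comm, Real.rpow_two]
      rw [this]; ring
    rw [h5]
    have := hr.ne'
    field_simp
    ring

theorem existence_uniqueness_radial_IVP {n : ℕ} (hn : 0 < n)
    (A : Matrix (Fin n) (Fin n) ℝ) (β : Fin n → ℝ)
    (hA : H1 A) (hβ : ∀ i, -2 < β i) (c : Fin n → ℝ) :
    ∃ u : Fin n → ℝ → ℝ, IsIVPSolution A β c u ∧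
      ∀ v : Fin n → ℝ → ℝ, IsIVPSolution A β c v →
        ∀ i, ∀ r ≥ (0:ℝ), v i r = u i r := by
  obtain ⟨w, hw, huniq⟩ := core A hA.2.1 (fun j => β j + 2) c (fun j => by linarith [hβ j])
  refine ⟨fun i r => if r = 0 then c i else w i (Real.log r), IsW_to_IsIVP hw, ?_⟩
  intro v hv i r hr
  rcases hr.eq_or_lt with h | h
  · simp only [← h, if_true]
    exact hv.2.1 i
  · have h1 := congrFun (congrFun (huniq _ (IsIVP_to_IsW hv)) i) (Real.log r)
    simp only [Real.exp_log h] at h1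
    simp only [if_neg h.ne', h1]
end

section
/- Let A satisfy (H1) with a_{ii} > 0 for all i ∈ I, and let β_i > -2 for all i ∈ I. Then for any constants c_1,...,c_n ∈ ℝ there exists a solution u = (u_1,...,u_n) on (0,∞) of u_i''(r) + (1/r) u_i'(r) + Σ_{j∈I} a_{ij} r^{β_j} e^{u_j(r)} = 0, continuous at 0 with u_i(0) = c_i for all i ∈ I, which moreover has finite energy: ∫_0^∞ e^{u_i(r)} r^{β_i+1} dr < ∞ for all i ∈ I. -/
open Set MeasureTheory

open Filter Topology

/-- Primitive from minus infinity. -/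
noncomputable def primJ (F : ℝ → ℝ) (t : ℝ) : ℝ := ∫ x in Set.Iic t, F x

lemma primJ_integrableOn {G g F : ℝ → ℝ} {l B : ℝ} (hG : ∀ t, HasDerivAt G (g t) t)
    (hg : Continuous g) (hg0 : ∀ t, 0 ≤ g t) (hl : Tendsto G atBot (𝓝 l))
    (hF : Continuous F) (hFb : ∀ t, |F t| ≤ B * g t) (t : ℝ) :
    IntegrableOn g (Set.Iic t) ∧ IntegrableOn F (Set.Iic t) := by
  have hmono : Monotone G := monotone_of_deriv_nonneg
    (fun t => (hG t).differentiableAt) (fun t => by rw [(hG t).deriv]; exact hg0 t)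
  have hge : ∀ s, l ≤ G s := fun s => hmono.le_of_tendsto hl s
  have h1 : IntegrableOn g (Set.Iic t) := by
    refine integrableOn_Iic_of_intervalIntegral_norm_bounded (a := fun x : ℝ => x) (l := atBot)
      (G t - l) t (fun s => ?_) tendsto_id ?_
    · exact (hg.continuousOn.integrableOn_Icc (a := s) (b := t)).mono_set Set.Ioc_subset_Icc_self
    · filter_upwards [eventually_le_atBot t] with s hs
      have : ∫ x in s..t, ‖g x‖ = G t - G s := by
        have h2 : ∀ x, ‖g x‖ = g x := fun x => by rw [Real.norm_eq_abs, abs_of_nonneg (hg0 x)]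
        simp_rw [h2]
        exact intervalIntegral.integral_eq_sub_of_hasDerivAt (fun x _ => hG x)
          (hg.intervalIntegrable _ _)
      rw [this]
      linarith [hge s]
  refine ⟨h1, ?_⟩
  refine Integrable.mono' (h1.const_mul B) hF.aestronglyMeasurable ?_
  exact Filter.Eventually.of_forall fun x => hFb x

lemma primJ_bound {G g F : ℝ → ℝ} {l B : ℝ} (hG : ∀ t, HasDerivAt G (g t) t)
    (hg : Continuous g) (hg0 : ∀ t, 0 ≤ g t) (hl : Tendsto G atBot (𝓝 l))
    (hF : Continuous F) (hFb : ∀ t, |F t| ≤ B * g t) (t : ℝ) :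
    |primJ F t| ≤ B * (G t - l) := by
  obtain ⟨h1, h2⟩ := primJ_integrableOn hG hg hg0 hl hF hFb t
  have h3 : ∫ x in Set.Iic t, g x = G t - l :=
    integral_Iic_of_hasDerivAt_of_tendsto' (fun x _ => hG x) h1 hl
  rw [← h3, ← integral_const_mul]
  exact norm_integral_le_of_norm_le (f := F) (h1.const_mul B) (Filter.Eventually.of_forall fun x => hFb x)

lemma primJ_hasDerivAt {F : ℝ → ℝ} (hF : Continuous F) (hi : ∀ t, IntegrableOn F (Set.Iic t))
    (t : ℝ) : HasDerivAt (primJ F) (F t) t := by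
  have h : primJ F = fun s => primJ F 0 + ∫ x in (0:ℝ)..s, F x := by
    funext s
    rw [← intervalIntegral.integral_Iic_sub_Iic (hi 0) (hi s)]
    simp [primJ]
  rw [h]
  exact (intervalIntegral.integral_hasDerivAt_right (hF.intervalIntegrable _ _)
    (hF.stronglyMeasurableAtFilter _ _) hF.continuousAt).const_add _

lemma primJ_sub {F G : ℝ → ℝ} (hi : ∀ t, IntegrableOn F (Set.Iic t))
    (hj : ∀ t, IntegrableOn G (Set.Iic t)) :
    primJ (fun s => F s - G s) = fun t => primJ F t - primJ G t := by
  funext t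
  exact integral_sub (hi t) (hj t)

/-- Double primitive facts. -/
lemma primJJ {W W1 W2 F : ℝ → ℝ} {B : ℝ} (hW : ∀ t, HasDerivAt W (W1 t) t)
    (hW1 : ∀ t, HasDerivAt W1 (W2 t) t) (hc : Continuous W2) (h10 : ∀ t, 0 ≤ W1 t)
    (h20 : ∀ t, 0 ≤ W2 t) (hl : Tendsto W atBot (𝓝 1)) (hl1 : Tendsto W1 atBot (𝓝 0))
    (hF : Continuous F) (hFb : ∀ t, |F t| ≤ B * W2 t) :
    (∀ t, IntegrableOn F (Set.Iic t)) ∧ (∀ t, IntegrableOn (primJ F) (Set.Iic t)) ∧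
    (∀ t, HasDerivAt (primJ F) (F t) t) ∧ (∀ t, HasDerivAt (primJ (primJ F)) (primJ F t) t) ∧
    (∀ t, |primJ F t| ≤ B * W1 t) ∧ (∀ t, |primJ (primJ F) t| ≤ B * (W t - 1)) := by
  have a1 := fun t => (primJ_integrableOn hW1 hc h20 hl1 hF hFb t).2
  have a2 := fun t => primJ_bound hW1 hc h20 hl1 hF hFb t
  have a3 := primJ_hasDerivAt hF a1
  have c1 : Continuous W1 := continuous_iff_continuousAt.2 fun t => (hW1 t).continuousAt
  have cF : Continuous (primJ F) := continuous_iff_continuousAt.2 fun t => (a3 t).continuousAt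
  simp only [sub_zero] at a2
  have b1 := fun t => (primJ_integrableOn hW c1 h10 hl cF a2 t).2
  exact ⟨a1, b1, a3, primJ_hasDerivAt cF b1, a2, primJ_bound hW c1 h10 hl cF a2⟩

/-- The weight. -/
lemma exists_weight {n : ℕ} (γ k : Fin n → ℝ) (hγ : ∀ i, 0 < γ i) (hk : ∀ i, 0 ≤ k i) :
    ∃ W W1 W2 : ℝ → ℝ, (∀ t, HasDerivAt W (W1 t) t) ∧ (∀ t, HasDerivAt W1 (W2 t) t) ∧
      Continuous W2 ∧ (∀ t, 0 ≤ W1 t) ∧ (∀ t, 0 ≤ W2 t) ∧ Tendsto W atBot (𝓝 1) ∧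
      Tendsto W1 atBot (𝓝 0) ∧ (∀ t, 1 ≤ W t) ∧
      (∀ t, (∑ j, k j * Real.exp (γ j * t)) * W t ≤ W2 t) := by
  set h : ℝ → ℝ := fun t => ∑ j, (k j / (γ j)^2) * Real.exp (γ j * t) with hh
  set h1 : ℝ → ℝ := fun t => ∑ j, (k j / γ j) * Real.exp (γ j * t) with hh1
  set h2 : ℝ → ℝ := fun t => ∑ j, k j * Real.exp (γ j * t) with hh2
  have e : ∀ j t, HasDerivAt (fun t => Real.exp (γ j * t)) (Real.exp (γ j * t) * γ j) t := by
    intro j t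
    simpa using ((hasDerivAt_id t).const_mul (γ j)).exp
  have d1 : ∀ t, HasDerivAt h (h1 t) t := by
    intro t
    refine HasDerivAt.fun_sum fun j _ => ?_
    have h0 := (hγ j).ne'
    refine ((e j t).const_mul (k j / (γ j)^2)).congr_deriv ?_
    field_simp
  have d2 : ∀ t, HasDerivAt h1 (h2 t) t := by
    intro t
    refine HasDerivAt.fun_sum fun j _ => ?_
    have h0 := (hγ j).ne'
    refine ((e j t).const_mul (k j / (γ j))).congr_deriv ?_
    field_simp
  have ct : Continuous h2 := by fun_prop
  have ch : Continuous h := by fun_prop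
  have ch1 : Continuous h1 := by fun_prop
  have te : ∀ j, Tendsto (fun t => Real.exp (γ j * t)) atBot (𝓝 0) := fun j =>
    Real.tendsto_exp_atBot.comp (tendsto_id.const_mul_atBot (hγ j))
  have th : Tendsto h atBot (𝓝 0) := by
    have := tendsto_finsetSum (Finset.univ : Finset (Fin n))
      (fun j _ => (te j).const_mul (k j / (γ j)^2))
    simpa using this
  have th1 : Tendsto h1 atBot (𝓝 0) := by
    have := tendsto_finsetSum (Finset.univ : Finset (Fin n))
      (fun j _ => (te j).const_mul (k j / (γ j)))
    simpa using this
  have p0 : ∀ t, 0 ≤ h t := fun t => Finset.sum_nonneg fun j _ =>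
    mul_nonneg (div_nonneg (hk j) (sq_nonneg _)) (Real.exp_pos _).le
  have p1 : ∀ t, 0 ≤ h1 t := fun t => Finset.sum_nonneg fun j _ =>
    mul_nonneg (div_nonneg (hk j) (hγ j).le) (Real.exp_pos _).le
  have p2 : ∀ t, 0 ≤ h2 t := fun t => Finset.sum_nonneg fun j _ =>
    mul_nonneg (hk j) (Real.exp_pos _).le
  have tW : Tendsto (fun t => Real.exp (h t)) atBot (𝓝 1) := by
    have := (Real.continuous_exp.tendsto 0).comp th
    simpa [Function.comp_def] using this
  refine ⟨fun t => Real.exp (h t), fun t => Real.exp (h t) * h1 t,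
    fun t => Real.exp (h t) * h1 t * h1 t + Real.exp (h t) * h2 t, fun t => (d1 t).exp,
    fun t => (d1 t).exp.mul (d2 t), by fun_prop, fun t => mul_nonneg (Real.exp_pos _).le (p1 t),
    fun t => ?_, tW, ?_, fun t => Real.one_le_exp (p0 t), fun t => ?_⟩
  · have := p1 t
    have := p2 t
    positivity
  · simpa using tW.mul th1
  · have := mul_nonneg (mul_nonneg (Real.exp_pos (h t)).le (p1 t)) (p1 t)
    show h2 t * Real.exp (h t) ≤ _
    linarith

lemma exists_ode {n : ℕ} (A : Matrix (Fin n) (Fin n) ℝ) (γ c : Fin n → ℝ)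
    (hA : ∀ i j, 0 ≤ A i j) (hγ : ∀ i, 0 < γ i) :
    ∃ U V : Fin n → ℝ → ℝ, (∀ i t, HasDerivAt (U i) (V i t) t) ∧
      (∀ i t, HasDerivAt (V i) (-∑ j, A i j * Real.exp (γ j * t) * Real.exp (U j t)) t) ∧
      (∀ i, Tendsto (U i) atBot (𝓝 (c i))) ∧ (∀ i t, U i t ≤ c i) := by
  obtain ⟨W, W1, W2, hW, hW1, hc, h10, h20, hl, hl1, hWge, hk⟩ :=
    exists_weight γ (fun j => 2 * Real.exp (c j) * ∑ i, A i j) hγ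
      (fun j => mul_nonneg (by positivity) (Finset.sum_nonneg fun i _ => hA i j))
  have cW : Continuous W := continuous_iff_continuousAt.2 fun t => (hW t).continuousAt
  -- the majorant
  have hmaj : ∀ i t, (∑ j, A i j * Real.exp (γ j * t) * Real.exp (c j)) * W t
      ≤ (1/2) * W2 t := by
    intro i t
    have h1 : 2 * ∑ j, A i j * Real.exp (γ j * t) * Real.exp (c j) ≤
        ∑ j, 2 * Real.exp (c j) * (∑ i, A i j) * Real.exp (γ j * t) := by
      rw [Finset.mul_sum]
      refine Finset.sum_le_sum fun j _ => ?_
      have h2 : A i j ≤ ∑ i, A i j :=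
        Finset.single_le_sum (f := fun i => A i j) (fun i _ => hA i j) (Finset.mem_univ i)
      calc 2 * (A i j * Real.exp (γ j * t) * Real.exp (c j))
          = 2 * Real.exp (c j) * A i j * Real.exp (γ j * t) := by ring
        _ ≤ _ := by gcongr
    have h3 := hk t
    have h4 := mul_le_mul_of_nonneg_right h1 (by linarith [hWge t] : 0 ≤ W t)
    linarith
  let X := BoundedContinuousFunction ℝ (Fin n → ℝ)
  let F : X → Fin n → ℝ → ℝ := fun w i s =>
    ∑ j, A i j * Real.exp (γ j * s) * Real.exp (min (c j - W s * w s j) (c j))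
  have cF : ∀ w i, Continuous (F w i) := by
    intro w i
    have hw : ∀ j, Continuous fun s => w s j := fun j =>
      (continuous_apply j).comp w.continuous
    have := hw
    refine continuous_finsetSum _ fun j _ => ?_
    have := hw j
    fun_prop
  have F0 : ∀ w i s, 0 ≤ F w i s := fun w i s => Finset.sum_nonneg fun j _ =>
    mul_nonneg (mul_nonneg (hA i j) (Real.exp_pos _).le) (Real.exp_pos _).le
  have Fb : ∀ w i s, |F w i s| ≤ (1/2) * W2 s := by
    intro w i s
    rw [abs_of_nonneg (F0 w i s)]
    have h1 : F w i s ≤ ∑ j, A i j * Real.exp (γ j * s) * Real.exp (c j) := by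
      refine Finset.sum_le_sum fun j _ => ?_
      have := hA i j
      gcongr
      exact min_le_right _ _
    have h2 : 0 ≤ ∑ j, A i j * Real.exp (γ j * s) * Real.exp (c j) :=
      Finset.sum_nonneg fun j _ =>
        mul_nonneg (mul_nonneg (hA i j) (Real.exp_pos _).le) (Real.exp_pos _).le
    have h3 := hmaj i s
    nlinarith [hWge s]
  have Fl : ∀ (w w' : X) i s, |F w i s - F w' i s| ≤ (1/2 * dist w w') * W2 s := by
    intro w w' i s
    have h1 : |F w i s - F w' i s| ≤
        ∑ j, (A i j * Real.exp (γ j * s) * Real.exp (c j)) * (W s * dist w w') := by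
      show |(∑ j, _) - (∑ j, _)| ≤ _
      rw [← Finset.sum_sub_distrib]
      refine (Finset.abs_sum_le_sum_abs _ _).trans (Finset.sum_le_sum fun j _ => ?_)
      rw [← mul_sub, abs_mul, abs_of_nonneg (mul_nonneg (hA i j) (Real.exp_pos _).le), mul_assoc]
      rw [mul_assoc (A i j), mul_assoc (A i j), mul_assoc (Real.exp _)]
      refine mul_le_mul_of_nonneg_left (mul_le_mul_of_nonneg_left ?_ (Real.exp_pos _).le) (hA i j)
      refine (exp_min_lip _ _ _).trans (mul_le_mul_of_nonneg_left ?_ (Real.exp_pos _).le)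
      have h2 : c j - W s * w s j - (c j - W s * w' s j) = - (W s * (w s j - w' s j)) := by ring
      have h3 : (0:ℝ) ≤ W s := by linarith [hWge s]
      rw [h2, abs_neg, abs_mul, abs_of_nonneg h3]
      refine mul_le_mul_of_nonneg_left ?_ h3
      rw [← Real.dist_eq]
      exact (dist_le_pi_dist (w s) (w' s) j).trans (BoundedContinuousFunction.dist_coe_le_dist s)
    rw [← Finset.sum_mul, ← mul_assoc] at h1
    refine h1.trans ?_
    calc _ ≤ ((1/2) * W2 s) * dist w w' := mul_le_mul_of_nonneg_right (hmaj i s) dist_nonneg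
      _ = _ := by ring
  have FJ := fun w i => primJJ hW hW1 hc h10 h20 hl hl1 (cF w i) (Fb w i)
  let T0 : X → ℝ → Fin n → ℝ := fun w t i => primJ (primJ (F w i)) t / W t
  have cT : ∀ w, Continuous (T0 w) := by
    intro w
    refine continuous_pi fun i => ?_
    have : Continuous (primJ (primJ (F w i))) :=
      continuous_iff_continuousAt.2 fun t => ((FJ w i).2.2.2.1 t).continuousAt
    exact this.div cW fun t => by linarith [hWge t]
  have bT : ∀ w t, ‖T0 w t‖ ≤ 1/2 := by
    intro w t
    refine (pi_norm_le_iff_of_nonneg (by norm_num)).2 fun i => ?_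
    have h1 := (FJ w i).2.2.2.2.2 t
    have h2 := hWge t
    rw [Real.norm_eq_abs, abs_div, abs_of_pos (by linarith : 0 < W t), div_le_iff₀ (by linarith)]
    linarith
  let T : X → X := fun w => BoundedContinuousFunction.ofNormedAddCommGroup (T0 w) (cT w) (1/2) (bT w)
  have hT : ContractingWith (1/2 : NNReal) T := by
    refine ⟨by
      rw [← NNReal.coe_lt_coe]; norm_num, LipschitzWith.of_dist_le_mul fun w w' => ?_⟩
    have hcoe : ((1/2 : NNReal) : ℝ) = 1/2 := by norm_num
    rw [hcoe]
    have hd : 0 ≤ 1/2 * dist w w' := by positivity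
    refine (BoundedContinuousFunction.dist_le hd).2 fun t => ?_
    refine (dist_pi_le_iff hd).2 fun i => ?_
    show dist (primJ (primJ (F w i)) t / W t) (primJ (primJ (F w' i)) t / W t) ≤ _
    have h1 := (primJJ hW hW1 hc h10 h20 hl hl1 ((cF w i).sub (cF w' i)) (Fl w w' i)).2.2.2.2.2 t
    have e1 : primJ (fun s => F w i s - F w' i s) = fun t => primJ (F w i) t - primJ (F w' i) t :=
      primJ_sub (FJ w i).1 (FJ w' i).1
    have e2 := primJ_sub (FJ w i).2.1 (FJ w' i).2.1
    rw [show (F w i - F w' i : ℝ → ℝ) = fun s => F w i s - F w' i s from rfl, e1, e2] at h1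
    have h2 := hWge t
    rw [Real.dist_eq, ← sub_div, abs_div, abs_of_pos (by linarith : 0 < W t),
      div_le_iff₀ (by linarith)]
    refine h1.trans (mul_le_mul_of_nonneg_left (by linarith) hd)
  obtain ⟨w, hw⟩ : ∃ w, T w = w := ⟨_, hT.fixedPoint_isFixedPt⟩
  have hfix : ∀ t i, W t * w t i = primJ (primJ (F w i)) t := by
    intro t i
    have h1 : w t i = primJ (primJ (F w i)) t / W t := by
      conv_lhs => rw [← hw]
      rfl
    have h2 := hWge t
    rw [h1, mul_div_cancel₀]
    linarith
  have hle : ∀ i t, c i - primJ (primJ (F w i)) t ≤ c i := by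
    intro i t
    have : 0 ≤ primJ (primJ (F w i)) t :=
      integral_nonneg fun s => integral_nonneg fun x => F0 w i x
    linarith
  refine ⟨fun i t => c i - primJ (primJ (F w i)) t, fun i t => - primJ (F w i) t, ?_, ?_, ?_, hle⟩
  · intro i t
    exact ((FJ w i).2.2.2.1 t).const_sub (c i)
  · intro i t
    refine ((FJ w i).2.2.1 t).neg.congr_deriv ?_
    congr 1
    refine Finset.sum_congr rfl fun j _ => ?_
    rw [hfix, min_eq_left (hle j t)]
  · intro i
    have h1 : Tendsto (primJ (primJ (F w i))) atBot (𝓝 0) := by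
      refine squeeze_zero_norm (FJ w i).2.2.2.2.2 ?_
      simpa using (hl.sub_const 1).const_mul (1/2 : ℝ)
    simpa using h1.const_sub (c i)

/-- Eventual linear decay. -/
lemma decay {n : ℕ} (A : Matrix (Fin n) (Fin n) ℝ) (γ : Fin n → ℝ)
    (hA : ∀ i j, 0 ≤ A i j) (hdiag : ∀ i, 0 < A i i)
    (U V : Fin n → ℝ → ℝ) (hU : ∀ i t, HasDerivAt (U i) (V i t) t)
    (hV : ∀ i t, HasDerivAt (V i) (-∑ j, A i j * Real.exp (γ j * t) * Real.exp (U j t)) t)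
    (i : Fin n) : ∃ t0 ε C : ℝ, 0 < ε ∧ ∀ t, t0 ≤ t → U i t + γ i * t ≤ C - ε * t := by
  set p : ℝ → ℝ := fun t => U i t + γ i * t with hp
  set q : ℝ → ℝ := fun t => V i t + γ i with hq
  have dp : ∀ t, HasDerivAt p (q t) t := fun t => by
    simpa using (hU i t).fun_add ((hasDerivAt_id t).const_mul (γ i))
  have dq : ∀ t, HasDerivAt q (-∑ j, A i j * Real.exp (γ j * t) * Real.exp (U j t)) t := fun t =>
    (hV i t).add_const (γ i)
  have hsum : ∀ t, A i i * Real.exp (p t) ≤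
      ∑ j, A i j * Real.exp (γ j * t) * Real.exp (U j t) := by
    intro t
    have h := Finset.single_le_sum (f := fun j => A i j * Real.exp (γ j * t) * Real.exp (U j t))
      (fun j _ => mul_nonneg (mul_nonneg (hA i j) (Real.exp_pos _).le) (Real.exp_pos _).le)
      (Finset.mem_univ i)
    refine le_trans (le_of_eq ?_) h
    show A i i * Real.exp (U i t + γ i * t) = _
    rw [Real.exp_add]
    ring
  have hq_anti : Antitone q := antitone_of_deriv_nonpos (fun t => (dq t).differentiableAt)
    fun t => by
      rw [(dq t).deriv]
      have := hsum t
      have := mul_pos (hdiag i) (Real.exp_pos (p t))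
      linarith
  have hex : ∃ t0, q t0 < 0 := by
    by_contra! hcon
    have pm : Monotone p := monotone_of_deriv_nonneg (fun t => (dp t).differentiableAt)
      fun t => by rw [(dp t).deriv]; exact hcon t
    set δ := A i i * Real.exp (p 0) with hδ
    have hδ0 : 0 < δ := mul_pos (hdiag i) (Real.exp_pos _)
    have han : AntitoneOn (fun t => q t + δ * t) (Set.Ici 0) := by
      have hd : ∀ t, HasDerivAt (fun t => q t + δ * t)
          (-(∑ j, A i j * Real.exp (γ j * t) * Real.exp (U j t)) + δ) t := fun t => by
        simpa using (dq t).fun_add ((hasDerivAt_id t).const_mul δ)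
      refine antitoneOn_of_deriv_nonpos (convex_Ici 0)
        (fun t _ => (hd t).continuousAt.continuousWithinAt)
        (fun t _ => (hd t).differentiableAt.differentiableWithinAt) fun t ht => ?_
      rw [interior_Ici] at ht
      rw [(hd t).deriv]
      have h1 := hsum t
      have h2 : δ ≤ A i i * Real.exp (p t) :=
        mul_le_mul_of_nonneg_left (Real.exp_le_exp.2 (pm (le_of_lt ht))) (hdiag i).le
      linarith
    have ht : 0 ≤ (q 0 + 1) / δ := div_nonneg (by linarith [hcon 0]) hδ0.le
    have h3 := han (Set.mem_Ici.2 le_rfl) (Set.mem_Ici.2 ht) ht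
    simp only [mul_zero, add_zero] at h3
    rw [mul_div_cancel₀ _ hδ0.ne'] at h3
    linarith [hcon ((q 0 + 1) / δ)]
  obtain ⟨t0, ht0⟩ := hex
  refine ⟨t0, -q t0, p t0 - q t0 * t0, by linarith, fun t ht => ?_⟩
  have han : AntitoneOn (fun t => p t - q t0 * t) (Set.Ici t0) := by
    have hd : ∀ t, HasDerivAt (fun t => p t - q t0 * t) (q t - q t0) t := fun t => by
      simpa using (dp t).fun_sub ((hasDerivAt_id t).const_mul (q t0))
    refine antitoneOn_of_deriv_nonpos (convex_Ici t0)
      (fun t _ => (hd t).continuousAt.continuousWithinAt)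
      (fun t _ => (hd t).differentiableAt.differentiableWithinAt) fun t ht => ?_
    rw [interior_Ici] at ht
    rw [(hd t).deriv]
    linarith [hq_anti (le_of_lt ht)]
  have h3 := han (Set.mem_Ici.2 le_rfl) (Set.mem_Ici.2 ht) ht
  simp only at h3
  show p t ≤ _
  linarith

theorem existence_finite_energy_IVP_positive_diagonal {n : ℕ} (hn : 0 < n)
    (A : Matrix (Fin n) (Fin n) ℝ) (β : Fin n → ℝ)
    (hA : H1 A) (hdiag : ∀ i, 0 < A i i) (hβ : ∀ i, -2 < β i)
    (c : Fin n → ℝ) :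
    ∃ u : Fin n → ℝ → ℝ, IsIVPSolution A β c u ∧
      ∀ i, MeasureTheory.IntegrableOn
        (fun r : ℝ => Real.exp (u i r) * r ^ (β i + 1)) (Set.Ioi 0) := by
  have hA0 := hA.2.1
  obtain ⟨U, V, hU, hV, hlim, hle⟩ := exists_ode A (fun i => β i + 2) c hA0
    (fun i => by linarith [hβ i])
  have cU : ∀ i, Continuous (U i) := fun i =>
    continuous_iff_continuousAt.2 fun t => (hU i t).continuousAt
  have cV : ∀ i, Continuous (V i) := fun i =>
    continuous_iff_continuousAt.2 fun t => (hV i t).continuousAt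
  have dU : ∀ i, deriv (U i) = V i := fun i => funext fun t => (hU i t).deriv
  have dV : ∀ i, deriv (V i) = _ := fun i => funext fun t => (hV i t).deriv
  have UC2 : ∀ i, ContDiff ℝ 2 (U i) := by
    intro i
    have h1 : ContDiff ℝ 1 (V i) := by
      rw [contDiff_one_iff_deriv, dV]
      refine ⟨fun t => (hV i t).differentiableAt, ?_⟩
      refine (continuous_finsetSum _ fun j _ => ?_).neg
      have := cU j
      fun_prop
    have : (2 : WithTop ℕ∞) = 1 + 1 := by norm_num
    rw [this, contDiff_succ_iff_deriv, dU]
    exact ⟨fun t => (hU i t).differentiableAt, by simp, h1⟩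
  let u : Fin n → ℝ → ℝ := fun i r => if r ≤ 0 then c i else U i (Real.log r)
  have u0 : ∀ i, u i 0 = c i := fun i => by simp [u]
  have up : ∀ i r, 0 < r → u i r = U i (Real.log r) := fun i r hr => by
    simp [u, not_le.2 hr]
  have uev : ∀ i r, 0 < r → u i =ᶠ[𝓝 r] fun r => U i (Real.log r) := fun i r hr => by
    filter_upwards [lt_mem_nhds hr] with s hs using up i s hs
  have ud : ∀ i r, 0 < r → HasDerivAt (u i) (V i (Real.log r) * r⁻¹) r := fun i r hr =>
    ((hU i _).comp r (Real.hasDerivAt_log hr.ne')).congr_of_eventuallyEq (uev i r hr)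
  refine ⟨u, ⟨?_, u0, ?_, ?_⟩, ?_⟩
  · intro i
    rw [← Set.Ioi_insert, continuousWithinAt_insert_self, ContinuousWithinAt, u0]
    refine ((hlim i).comp Real.tendsto_log_nhdsGT_zero).congr' ?_
    filter_upwards [self_mem_nhdsWithin] with r hr using (up i r hr).symm
  · intro i r hr
    refine ContDiffAt.congr_of_eventuallyEq ?_ (uev i r hr)
    exact (UC2 i).contDiffAt.comp r (Real.contDiffAt_log.2 hr.ne')
  · intro i r hr
    have h1 : deriv (u i) =ᶠ[𝓝 r] fun r => V i (Real.log r) * r⁻¹ := by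
      filter_upwards [lt_mem_nhds hr] with s hs using (ud i s hs).deriv
    have h2 := ((hV i _).comp r (Real.hasDerivAt_log hr.ne')).mul (hasDerivAt_inv hr.ne')
    have h3 : deriv (deriv (u i)) r = _ := h1.deriv_eq.trans h2.deriv
    rw [h3, (ud i r hr).deriv]
    have h4 : ∑ j, A i j * r ^ β j * Real.exp (u j r) =
        (∑ j, A i j * Real.exp ((β j + 2) * Real.log r) * Real.exp (U j (Real.log r)))
          * (r⁻¹ * r⁻¹) := by
      rw [Finset.sum_mul]
      refine Finset.sum_congr rfl fun j _ => ?_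
      rw [up j r hr, mul_comm (β j + 2), ← Real.rpow_def_of_pos hr, Real.rpow_add hr,
        Real.rpow_two]
      have := hr.ne'
      field_simp
    rw [h4]
    simp only [Function.comp]
    generalize (∑ j, A i j * Real.exp ((β j + 2) * Real.log r) *
      Real.exp (U j (Real.log r))) = S
    have := hr.ne'
    field_simp
    ring
  · intro i
    obtain ⟨t0, ε, C, hε, hdec⟩ := decay A (fun i => β i + 2) hA0 hdiag U V hU hV i
    have hm : ContinuousOn (fun r : ℝ => Real.exp (u i r) * r ^ (β i + 1)) (Set.Ioi 0) := by
      intro r hr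
      refine ContinuousAt.continuousWithinAt ?_
      have h1 : ContinuousAt (u i) r := (ud i r hr).continuousAt
      have h2 : ContinuousAt (fun r : ℝ => r ^ (β i + 1)) r :=
        Real.continuousAt_rpow_const _ _ (Or.inl (ne_of_gt hr))
      exact (Real.continuous_exp.continuousAt.comp h1).mul h2
    have hR : 0 < Real.exp t0 := Real.exp_pos _
    have hsplit : Set.Ioi (0:ℝ) = Set.Ioc 0 (Real.exp t0) ∪ Set.Ioi (Real.exp t0) :=
      (Set.Ioc_union_Ioi_eq_Ioi hR.le).symm
    rw [hsplit]
    refine IntegrableOn.union ?_ ?_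
    · have h1 : IntegrableOn (fun r : ℝ => r ^ (β i + 1)) (Set.Ioc 0 (Real.exp t0)) :=
        (intervalIntegrable_iff_integrableOn_Ioc_of_le hR.le).1
          (intervalIntegral.intervalIntegrable_rpow' (by linarith [hβ i]))
      refine Integrable.mono' (h1.const_mul (Real.exp (c i)))
        ((hm.mono Set.Ioc_subset_Ioi_self).aestronglyMeasurable measurableSet_Ioc) ?_
      refine (ae_restrict_iff' measurableSet_Ioc).2 (Filter.Eventually.of_forall fun r hr => ?_)
      have h2 : 0 ≤ r ^ (β i + 1) := Real.rpow_nonneg hr.1.le _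
      rw [Real.norm_eq_abs, abs_of_nonneg (mul_nonneg (Real.exp_pos _).le h2), up i r hr.1]
      exact mul_le_mul_of_nonneg_right (Real.exp_le_exp.2 (hle i _)) h2
    · have h1 : IntegrableOn (fun r : ℝ => r ^ (-1 - ε)) (Set.Ioi (Real.exp t0)) :=
        integrableOn_Ioi_rpow_of_lt (by linarith) hR
      refine Integrable.mono' (h1.const_mul (Real.exp C))
        ((hm.mono (Set.Ioi_subset_Ioi hR.le)).aestronglyMeasurable measurableSet_Ioi) ?_
      refine (ae_restrict_iff' measurableSet_Ioi).2 (Filter.Eventually.of_forall fun r hr => ?_)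
      have hr0 : 0 < r := hR.trans hr
      have h2 : 0 ≤ r ^ (β i + 1) := Real.rpow_nonneg hr0.le _
      rw [Real.norm_eq_abs, abs_of_nonneg (mul_nonneg (Real.exp_pos _).le h2), up i r hr0,
        Real.rpow_def_of_pos hr0, Real.rpow_def_of_pos hr0, ← Real.exp_add, ← Real.exp_add]
      refine Real.exp_le_exp.2 ?_
      have h3 := hdec (Real.log r) ((Real.le_log_iff_exp_le hr0).2 (le_of_lt hr))
      linarith
end
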